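/- Let A be a cycle-finite basic indecomposable artin algebra. Then the following statements are equivalent: (i) the number of isomorphism classes of τ_A-rigid modules in ind A is finite; (ii) the number of isomorphism classes of rigid modules in ind A is finite; (iii) the number of isomorphism classes of directing modules in ind A is finite; (iv) A is of finite representation type. -/

import Mathlib

/-!
Common framework: finite length modules over a ring, the radical of the module
category, cycles of indecomposable modules, Auslander-Reiten quivers,
translation quivers notions, and classes of artin algebras.
Right `A`-modules are formalized as left `Aᵐᵒᵖ`-modules.
-/

universe u

/-- A bundled object of `mod R`: a finite length `R`-module. -/
structure ModA (R : Type u) [Ring R] : Type (u + 1) where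
  M : Type u
  [acg : AddCommGroup M]
  [mod : Module R M]
  finLen : IsFiniteLength R M

attribute [instance] ModA.acg ModA.mod

/-- A bundled (not necessarily finite length) `R`-module. -/
structure RawMod (R : Type u) [Ring R] : Type (u + 1) where
  M : Type u
  [acg : AddCommGroup M]
  [mod : Module R M]

attribute [instance] RawMod.acg RawMod.mod

/-- A module is indecomposable iff it is nonzero and its endomorphism ring has no
nontrivial idempotents. -/
def IsIndecMod (R : Type u) [Ring R] (M : Type u) [AddCommGroup M] [Module R M] : Prop :=
  Nontrivial M ∧ ∀ f : Module.End R M, f * f = f → f = 0 ∨ f = 1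

namespace ModA

variable {R : Type u} [Ring R]

/-- Indecomposability of an object of `mod R`. -/
def IsIndec (X : ModA R) : Prop := IsIndecMod R X.M

/-- Isomorphism of objects of `mod R`. -/
def Iso (X Y : ModA R) : Prop := Nonempty (X.M ≃ₗ[R] Y.M)

end ModA

/-- Membership in the radical `rad(X, Y)` of the category `mod R`: a map `f : X → Y`
belongs to the radical iff for every indecomposable `Z` and all `g : Z → X`, `h : Y → Z`
the composite `h ∘ f ∘ g` is not an isomorphism. -/
def InRad {R : Type u} [Ring R] {X Y : ModA R} (f : X.M →ₗ[R] Y.M) : Prop :=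
  ∀ Z : ModA R, Z.IsIndec → ∀ (g : Z.M →ₗ[R] X.M) (h : Y.M →ₗ[R] Z.M),
    ¬Function.Bijective (h.comp (f.comp g))

/-- The powers `rad^n` of the radical of `mod R`. -/
def radPow (R : Type u) [Ring R] : ℕ → ∀ X Y : ModA R, AddSubgroup (X.M →ₗ[R] Y.M)
  | 0, _, _ => ⊤
  | n + 1, X, Y => AddSubgroup.closure
      {f | ∃ (Z : ModA R) (g : X.M →ₗ[R] Z.M) (h : Z.M →ₗ[R] Y.M),
        InRad g ∧ h ∈ radPow R n Z Y ∧ f = h.comp g}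

/-- Membership in the infinite radical `rad^∞ = ⋂ₙ radⁿ` of `mod R`. -/
def InRadInf {R : Type u} [Ring R] {X Y : ModA R} (f : X.M →ₗ[R] Y.M) : Prop :=
  ∀ n : ℕ, f ∈ radPow R n X Y

/-- A cycle in `ind R`: a sequence of nonzero nonisomorphisms
`M₀ → M₁ → ⋯ → M_{r-1} → M_r = M₀` between indecomposable modules. -/
structure ModCycle (R : Type u) [Ring R] : Type (u + 1) where
  len : ℕ
  len_pos : 0 < len
  obj : Fin (len + 1) → ModA R
  obj_indec : ∀ i, (obj i).IsIndec
  closed : obj (Fin.last len) = obj 0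
  hom : ∀ i : Fin len, (obj i.castSucc).M →ₗ[R] (obj i.succ).M
  hom_ne_zero : ∀ i, hom i ≠ 0
  hom_not_iso : ∀ i, ¬Function.Bijective (hom i)

/-- A cycle is finite if none of its homomorphisms lies in the infinite radical. -/
def ModCycle.IsFiniteCycle {R : Type u} [Ring R] (c : ModCycle R) : Prop :=
  ∀ i, ¬InRadInf (c.hom i)

/-- The cycle passes through the module `M`. -/
def ModCycle.Passes {R : Type u} [Ring R] (c : ModCycle R) (M : ModA R) : Prop :=
  ∃ i, (c.obj i).Iso M

/-- A module is cycle-finite if it lies on a cycle and every cycle through it is finite. -/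
def IsCycleFiniteModule {R : Type u} [Ring R] (M : ModA R) : Prop :=
  (∃ c : ModCycle R, c.Passes M) ∧ ∀ c : ModCycle R, c.Passes M → c.IsFiniteCycle

/-- A module is directing if it lies on no cycle. -/
def IsDirectingModule {R : Type u} [Ring R] (M : ModA R) : Prop :=
  ¬∃ c : ModCycle R, c.Passes M

section Irreducible

variable {R : Type u} [Ring R]

/-- `f` is a split monomorphism (a section). -/
def SplitMonoMap {X Y : ModA R} (f : X.M →ₗ[R] Y.M) : Prop :=
  ∃ r : Y.M →ₗ[R] X.M, r.comp f = LinearMap.id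

/-- `f` is a split epimorphism (a retraction). -/
def SplitEpiMap {X Y : ModA R} (f : X.M →ₗ[R] Y.M) : Prop :=
  ∃ s : Y.M →ₗ[R] X.M, f.comp s = LinearMap.id

/-- `f` is an irreducible homomorphism. -/
def IsIrred {X Y : ModA R} (f : X.M →ₗ[R] Y.M) : Prop :=
  ¬SplitMonoMap f ∧ ¬SplitEpiMap f ∧
    ∀ (Z : ModA R) (g : X.M →ₗ[R] Z.M) (h : Z.M →ₗ[R] Y.M), h.comp g = f →
      SplitMonoMap g ∨ SplitEpiMap h

end Irreducible

/-- An almost split (Auslander-Reiten) sequence `0 → l → m → r → 0` in `mod R`. -/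
structure AlmostSplitSeq (R : Type u) [Ring R] : Type (u + 1) where
  l : ModA R
  m : ModA R
  r : ModA R
  f : l.M →ₗ[R] m.M
  g : m.M →ₗ[R] r.M
  inj : Function.Injective f
  surj : Function.Surjective g
  exact : LinearMap.range f = LinearMap.ker g
  not_split : ¬SplitEpiMap g
  l_indec : l.IsIndec
  r_indec : r.IsIndec
  right_almost : ∀ (Z : ModA R) (h : Z.M →ₗ[R] r.M), ¬SplitEpiMap h →
      ∃ h' : Z.M →ₗ[R] m.M, g.comp h' = h
  left_almost : ∀ (Z : ModA R) (h : l.M →ₗ[R] Z.M), ¬SplitMonoMap h →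
      ∃ h' : m.M →ₗ[R] Z.M, h'.comp f = h

/-- `N ≅ τ M` for the Auslander-Reiten translation `τ = DTr`. -/
def IsTauOf {R : Type u} [Ring R] (N M : ModA R) : Prop :=
  ∃ s : AlmostSplitSeq R, s.l.Iso N ∧ s.r.Iso M

/-- The indecomposable objects of `mod R`. -/
def IndecModA (R : Type u) [Ring R] := {X : ModA R // X.IsIndec}

/-- Isomorphism is an equivalence relation on indecomposable modules. -/
def isoSetoid (R : Type u) [Ring R] : Setoid (IndecModA R) where
  r X Y := X.1.Iso Y.1
  iseqv :=
    { refl := fun X => ⟨LinearEquiv.refl R X.1.M⟩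
      symm := fun h => h.elim fun e => ⟨e.symm⟩
      trans := fun h h' => h.elim fun e => h'.elim fun e' => ⟨e.trans e'⟩ }

/-- The vertices of the Auslander-Reiten quiver `Γ_R`: isomorphism classes of
indecomposable modules in `mod R`. -/
def ARVertex (R : Type u) [Ring R] := Quotient (isoSetoid R)

/-- The vertex of `Γ_R` given by an indecomposable module. -/
def ARVertex.mk {R : Type u} [Ring R] (X : IndecModA R) : ARVertex R :=
  Quotient.mk (isoSetoid R) X

section ARQuiver

variable {R : Type u} [Ring R]

/-- The arrows of the Auslander-Reiten quiver: `x → y` iff there is an irreducible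
homomorphism between representatives. -/
def ARArrow (x y : ARVertex R) : Prop :=
  ∃ (X Y : IndecModA R) (f : X.1.M →ₗ[R] Y.1.M),
    IsIrred f ∧ ARVertex.mk X = x ∧ ARVertex.mk Y = y

/-- `TauRel x y` iff `x = τ y` in the Auslander-Reiten quiver. -/
def TauRel (x y : ARVertex R) : Prop :=
  ∃ X Y : IndecModA R, ARVertex.mk X = x ∧ ARVertex.mk Y = y ∧ IsTauOf X.1 Y.1

/-- A vertex given by an (indecomposable) projective module. -/
def IsProjVertex (x : ARVertex R) : Prop :=
  ∃ X : IndecModA R, ARVertex.mk X = x ∧ Module.Projective R X.1.M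

/-- A vertex given by an (indecomposable) injective module. -/
def IsInjVertex (x : ARVertex R) : Prop :=
  ∃ X : IndecModA R, ARVertex.mk X = x ∧ Module.Injective R X.1.M

/-- The vertex lies on an oriented cycle of `Γ_R`. -/
def OnARCycle (x : ARVertex R) : Prop := Relation.TransGen ARArrow x x

/-- An edge (arrow in either direction) of the underlying graph of `Γ_R`. -/
def ARStep (x y : ARVertex R) : Prop := ARArrow x y ∨ ARArrow y x

/-- `D` is a connected component of the full subquiver of `Γ_R` on the vertex set `S`. -/
def IsComponentOf (S D : Set (ARVertex R)) : Prop :=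
  D ⊆ S ∧ D.Nonempty ∧
    (∀ x ∈ D, ∀ y ∈ S, ARStep x y → y ∈ D) ∧
    ∀ x ∈ D, ∀ y ∈ D, Relation.ReflTransGen (fun a b => a ∈ S ∧ b ∈ S ∧ ARStep a b) x y

/-- `C` is a connected component of `Γ_R`. -/
def IsARComponent (C : Set (ARVertex R)) : Prop := IsComponentOf Set.univ C

/-- The vertex lies on an oriented cycle all of whose vertices belong to `S`. -/
def OnCycleIn (S : Set (ARVertex R)) (x : ARVertex R) : Prop :=
  Relation.TransGen (fun a b => a ∈ S ∧ b ∈ S ∧ ARArrow a b) x x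

/-- `Γ` is a connected component of the cyclic quiver `_cΓ_R` (a cyclic component). -/
def IsCyclicComponent (Γ : Set (ARVertex R)) : Prop :=
  IsComponentOf {x | OnARCycle x} Γ

/-- A vertex represented by a cycle-finite module. -/
def IsCycleFiniteVertex (x : ARVertex R) : Prop :=
  ∃ X : IndecModA R, ARVertex.mk X = x ∧ IsCycleFiniteModule X.1

/-- A vertex represented by a directing module. -/
def IsDirectingVertex (x : ARVertex R) : Prop :=
  ∃ X : IndecModA R, ARVertex.mk X = x ∧ IsDirectingModule X.1

/-- A cycle-finite cyclic component: a cyclic component containing a cycle-finite module. -/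
def IsCycleFiniteCyclicComponent (Γ : Set (ARVertex R)) : Prop :=
  IsCyclicComponent Γ ∧ ∃ x ∈ Γ, IsCycleFiniteVertex x

/-- A full translation subquiver is cyclic if each of its vertices lies on an oriented
cycle inside it. -/
def IsCyclicSub (S : Set (ARVertex R)) : Prop := ∀ x ∈ S, OnCycleIn S x

/-- A full translation subquiver is coherent: every projective vertex is the start of an
infinite sectional path inside it, and every injective vertex is the end of an infinite
sectional path inside it. -/
def IsCoherentSub (S : Set (ARVertex R)) : Prop :=
  (∀ x ∈ S, IsProjVertex x → ∃ c : ℕ → ARVertex R, c 0 = x ∧ (∀ n, c n ∈ S) ∧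
      (∀ n, ARArrow (c n) (c (n + 1))) ∧ ∀ n, ¬TauRel (c n) (c (n + 2))) ∧
  (∀ x ∈ S, IsInjVertex x → ∃ c : ℕ → ARVertex R, c 0 = x ∧ (∀ n, c n ∈ S) ∧
      (∀ n, ARArrow (c (n + 1)) (c n)) ∧ ∀ n, ¬TauRel (c (n + 2)) (c n))

/-- `S` is a convex subquiver of (the full subquiver on) `C`: every path in `C` with
source and target in `S` has all its vertices in `S`. -/
def ConvexIn (C S : Set (ARVertex R)) : Prop :=
  ∀ (n : ℕ) (c : ℕ → ARVertex R), (∀ k ≤ n, c k ∈ C) →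
    (∀ k < n, ARArrow (c k) (c (k + 1))) → c 0 ∈ S → c n ∈ S → ∀ k ≤ n, c k ∈ S

/-- `S` is the core of the almost acyclic component `C`: the finite convex subquiver of
`C` containing all vertices lying on oriented cycles in `C`. -/
def IsCoreOf (C S : Set (ARVertex R)) : Prop :=
  S ⊆ C ∧ S.Finite ∧ ConvexIn C S ∧ ∀ x ∈ C, OnCycleIn C x → x ∈ S

/-- A component is almost acyclic if all but finitely many of its vertices do not lie on
oriented cycles. -/
def IsAlmostAcyclicComp (C : Set (ARVertex R)) : Prop := {x ∈ C | OnCycleIn C x}.Finite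

/-- A component is almost cyclic if its cyclic part is cofinite. -/
def IsAlmostCyclicComp (C : Set (ARVertex R)) : Prop := {x ∈ C | ¬OnCycleIn C x}.Finite

/-- Two vertices lie in the same `τ`-orbit. -/
def TauConn (x y : ARVertex R) : Prop :=
  Relation.ReflTransGen (fun a b => TauRel a b ∨ TauRel b a) x y

/-- The left stable part of `C`: remove the `τ`-orbits of projective vertices. -/
def leftStable (C : Set (ARVertex R)) : Set (ARVertex R) :=
  {x | x ∈ C ∧ ¬∃ y, TauConn x y ∧ IsProjVertex y}

/-- The right stable part of `C`: remove the `τ`-orbits of injective vertices. -/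
def rightStable (C : Set (ARVertex R)) : Set (ARVertex R) :=
  {x | x ∈ C ∧ ¬∃ y, TauConn x y ∧ IsInjVertex y}

/-- The stable part of `C`. -/
def stablePart (C : Set (ARVertex R)) : Set (ARVertex R) := leftStable C ∩ rightStable C

end ARQuiver

/-- The arrows of the translation quiver `ℤA∞/(τ^r)`, with vertices indexed by the
`τ`-orbit coordinate in `ZMod r` and the quasi-length (minus one) in `ℕ`. -/
def TubeArrow {r : ℕ} : ZMod r × ℕ → ZMod r × ℕ → Prop := fun u v =>
  (v.1 = u.1 ∧ v.2 = u.2 + 1) ∨ (v.1 = u.1 + 1 ∧ u.2 = v.2 + 1)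

section Tube

variable {R : Type u} [Ring R]

/-- `T` is a stable tube of rank `r`, parametrized by `φ : ℤA∞/(τ^r) → Γ_R`. -/
def IsStableTubeVia (T : Set (ARVertex R)) (r : ℕ) (φ : ZMod r × ℕ → ARVertex R) : Prop :=
  0 < r ∧ Function.Injective φ ∧ Set.range φ = T ∧
    (∀ u v, TubeArrow u v → ARArrow (φ u) (φ v)) ∧
    (∀ u v, ARArrow (φ u) (φ v) → TubeArrow u v) ∧
    ∀ (i : ZMod r) (n : ℕ), TauRel (φ (i - 1, n)) (φ (i, n))

/-- `T` is a stable tube. -/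
def IsStableTube (T : Set (ARVertex R)) : Prop := ∃ r φ, IsStableTubeVia T r φ

end Tube

section Separating

variable {R : Type u} [Ring R]

/-- A family of vertices is generalized standard if `rad^∞` vanishes between its modules. -/
def GeneralizedStandardSet (U : Set (ARVertex R)) : Prop :=
  ∀ X Y : IndecModA R, ARVertex.mk X ∈ U → ARVertex.mk Y ∈ U →
    ∀ f : X.1.M →ₗ[R] Y.1.M, InRadInf f → f = 0

/-- `S` is (isomorphic to) a composition factor (a subquotient) of `M`. -/
def IsCompFactorMod (R : Type u) [Ring R] (S : Type u) [AddCommGroup S] [Module R S]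
    (M : Type u) [AddCommGroup M] [Module R M] : Prop :=
  ∃ N' N : Submodule R M, N' ≤ N ∧
    Nonempty ((↥N ⧸ N'.comap N.subtype) ≃ₗ[R] S)

/-- A family of vertices is sincere if every simple module is a composition factor of one
of its modules. -/
def SincereSet (U : Set (ARVertex R)) : Prop :=
  ∀ (S : Type u) [AddCommGroup S] [Module R S], IsSimpleModule R S →
    ∃ x ∈ U, ∃ X : IndecModA R, ARVertex.mk X = x ∧ IsCompFactorMod R S X.1.M

/-- All homomorphisms from modules with vertex in `U` to modules with vertex in `V` vanish. -/
def HomVanish (U V : Set (ARVertex R)) : Prop :=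
  ∀ X Y : IndecModA R, ARVertex.mk X ∈ U → ARVertex.mk Y ∈ V →
    ∀ f : X.1.M →ₗ[R] Y.1.M, f = 0

/-- Every homomorphism from a module in `U` to a module in `V` factors through the
additive closure of the modules in `W`. -/
def FactorsThrough (U W V : Set (ARVertex R)) : Prop :=
  ∀ X Y : IndecModA R, ARVertex.mk X ∈ U → ARVertex.mk Y ∈ V →
    ∀ f : X.1.M →ₗ[R] Y.1.M, ∃ (k : ℕ) (Z : Fin k → IndecModA R)
      (g : ∀ i, X.1.M →ₗ[R] (Z i).1.M) (h : ∀ i, (Z i).1.M →ₗ[R] Y.1.M),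
      (∀ i, ARVertex.mk (Z i) ∈ W) ∧ f = ∑ i, (h i).comp (g i)

/-- `cs` is a separating family of components of `Γ_R`. -/
def IsSeparatingFamily (cs : Set (Set (ARVertex R))) : Prop :=
  ∃ ps qs : Set (Set (ARVertex R)),
    (∀ C ∈ ps, IsARComponent C) ∧ (∀ C ∈ cs, IsARComponent C) ∧ (∀ C ∈ qs, IsARComponent C) ∧
    (∀ C, IsARComponent C → C ∈ ps ∨ C ∈ cs ∨ C ∈ qs) ∧
    (∀ C ∈ ps, C ∉ cs ∧ C ∉ qs) ∧ (∀ C ∈ cs, C ∉ qs) ∧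
    SincereSet (⋃₀ cs) ∧ GeneralizedStandardSet (⋃₀ cs) ∧
    HomVanish (⋃₀ qs) (⋃₀ ps) ∧ HomVanish (⋃₀ qs) (⋃₀ cs) ∧ HomVanish (⋃₀ cs) (⋃₀ ps) ∧
    FactorsThrough (⋃₀ ps) (⋃₀ cs) (⋃₀ qs)

end Separating

/-! ### Classes of algebras via their Auslander-Reiten quivers.
For a ring `B`, the category `mod B` of finitely generated right `B`-modules is
realized as the category of finite length left `Bᵐᵒᵖ`-modules. -/

/-- An algebra is of finite representation type if it has only finitely many isomorphism
classes of indecomposable finitely generated (right) modules. -/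
def IsFiniteRepTypeAlg (B : Type u) [Ring B] : Prop :=
  (Set.univ : Set (ARVertex Bᵐᵒᵖ)).Finite

/-- An algebra is cycle-finite if all cycles in `ind B` are finite. -/
def IsCycleFiniteAlg (B : Type u) [Ring B] : Prop :=
  ∀ c : ModCycle Bᵐᵒᵖ, c.IsFiniteCycle

/-- A generalized multicoil algebra: an algebra whose Auslander-Reiten quiver admits a
separating family of almost cyclic coherent components. -/
def IsGeneralizedMulticoilAlgebra (B : Type u) [Ring B] : Prop :=
  ∃ cs : Set (Set (ARVertex Bᵐᵒᵖ)),
    (∀ C ∈ cs, IsARComponent C ∧ IsAlmostCyclicComp C ∧ IsCoherentSub C) ∧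
    IsSeparatingFamily cs

/-- A generalized double tilted algebra: an algebra whose Auslander-Reiten quiver admits
a separating almost acyclic component (a connecting component). -/
def IsGeneralizedDoubleTiltedAlgebra (B : Type u) [Ring B] : Prop :=
  ∃ C : Set (ARVertex Bᵐᵒᵖ),
    IsARComponent C ∧ IsAlmostAcyclicComp C ∧ IsSeparatingFamily {C}

/-- A concealed canonical algebra: an algebra whose Auslander-Reiten quiver admits a
separating family of stable tubes. -/
def IsConcealedCanonicalAlgebra (B : Type u) [Ring B] : Prop :=
  ∃ ts : Set (Set (ARVertex Bᵐᵒᵖ)), (∀ T ∈ ts, IsStableTube T) ∧ IsSeparatingFamily ts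

/-- A generic module: an indecomposable module of infinite length with finite endolength. -/
def IsGenericModule (R : Type u) [Ring R] (N : RawMod R) : Prop :=
  IsIndecMod R N.M ∧ ¬IsFiniteLength R N.M ∧ IsFiniteLength (Module.End R N.M) N.M

/-- The endolength of a module: its length over its endomorphism ring. -/
noncomputable def endolength (R : Type u) [Ring R] (N : RawMod R) : WithBot ℕ∞ :=
  Order.krullDim (Submodule (Module.End R N.M) N.M)

/-- Generic tameness in the sense of Crawley-Boevey: for each `d` there are only finitely
many isomorphism classes of generic (right) modules of endolength `d`. -/
def IsGenericallyTameAlg (B : Type u) [Ring B] : Prop :=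
  ∀ d : ℕ, ∃ (k : ℕ) (T : Fin k → RawMod Bᵐᵒᵖ),
    ∀ N : RawMod Bᵐᵒᵖ, IsGenericModule Bᵐᵒᵖ N → endolength Bᵐᵒᵖ N = (d : ℕ∞) →
      ∃ i, Nonempty (N.M ≃ₗ[Bᵐᵒᵖ] (T i).M)

/-- A tame generalized multicoil algebra. -/
def IsTameGeneralizedMulticoilAlgebra (B : Type u) [Ring B] : Prop :=
  IsGeneralizedMulticoilAlgebra B ∧ IsGenericallyTameAlg B

/-- A tame generalized double tilted algebra. -/
def IsTameGeneralizedDoubleTiltedAlgebra (B : Type u) [Ring B] : Prop :=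
  IsGeneralizedDoubleTiltedAlgebra B ∧ IsGenericallyTameAlg B

/-! ### The quiver of an algebra, convex idempotents, basic and connected algebras -/

section AlgebraSide

variable (A : Type u) [Ring A]

/-- The Jacobson radical of `A` (as a left ideal; it is in fact two-sided). -/
def jacobsonRad : Ideal A := (⊥ : Ideal A).jacobson

/-- The square of the Jacobson radical of `A`. -/
def jacobsonRadSq : Ideal A :=
  Ideal.span {x | ∃ a ∈ jacobsonRad A, ∃ b ∈ jacobsonRad A, x = a * b}

/-- A primitive idempotent of `A`. -/
def IsPrimitiveIdempotent (e : A) : Prop :=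
  IsIdempotentElem e ∧ e ≠ 0 ∧
    ∀ f g : A, IsIdempotentElem f → IsIdempotentElem g → f * g = 0 → g * f = 0 →
      e = f + g → f = 0 ∨ g = 0

/-- A complete family of pairwise orthogonal primitive idempotents of `A`; its indices
are the vertices of the quiver `Q_A` of `A`. -/
structure CompleteIdemFamily (A : Type u) [Ring A] where
  n : ℕ
  e : Fin n → A
  prim : ∀ i, IsPrimitiveIdempotent A (e i)
  orth : ∀ i j, i ≠ j → e i * e j = 0
  total : ∑ i, e i = 1

/-- There is an arrow `i → j` in the quiver `Q_A` iff `e_i (rad A) e_j ⊄ (rad A)²`. -/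
def QAarrow (E : CompleteIdemFamily A) (i j : Fin E.n) : Prop :=
  ∃ y ∈ jacobsonRad A, E.e i * y * E.e j ∉ jacobsonRadSq A

/-- A set of vertices of `Q_A` is convex if every path of `Q_A` with source and target in
it has all its vertices in it. -/
def ConvexVertexSet (E : CompleteIdemFamily A) (S : Set (Fin E.n)) : Prop :=
  ∀ (n : ℕ) (c : ℕ → Fin E.n), (∀ k < n, QAarrow A E (c k) (c (k + 1))) →
    c 0 ∈ S → c n ∈ S → ∀ k ≤ n, c k ∈ S

/-- A convex idempotent of `A`: a sum of pairwise orthogonal primitive idempotents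
corresponding to the vertices of a convex subquiver of `Q_A`. -/
def IsConvexIdempotent (e : A) : Prop :=
  ∃ (E : CompleteIdemFamily A) (S : Finset (Fin E.n)),
    ConvexVertexSet A E ↑S ∧ e = ∑ i ∈ S, E.e i

/-- The corner `eAe` of `A` at an idempotent `e`, as a nonunital subring (it is a unital
ring with unit `e`). -/
def cornerRing (e : A) : NonUnitalSubring A where
  carrier := {x | e * x = x ∧ x * e = x}
  zero_mem' := by simp
  add_mem' := by
    rintro a b ⟨ha1, ha2⟩ ⟨hb1, hb2⟩
    constructor
    · rw [mul_add, ha1, hb1]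
    · rw [add_mul, ha2, hb2]
  neg_mem' := by
    rintro a ⟨ha1, ha2⟩
    constructor
    · rw [mul_neg, ha1]
    · rw [neg_mul, ha2]
  mul_mem' := by
    rintro a b ⟨ha1, ha2⟩ ⟨hb1, hb2⟩
    constructor
    · rw [← mul_assoc, ha1]
    · rw [mul_assoc, hb2]

/-- An (indecomposable =) connected algebra: no nontrivial central idempotents. -/
def IsConnectedAlgebra : Prop :=
  Nontrivial A ∧ ∀ e : A, IsIdempotentElem e → e ∈ Set.center A → e = 0 ∨ e = 1

/-- A basic algebra: distinct orthogonal primitive idempotents have nonisomorphic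
associated indecomposable projective right modules. -/
def IsBasicAlgebra : Prop :=
  ¬∃ e f : A, IsPrimitiveIdempotent A e ∧ IsPrimitiveIdempotent A f ∧
    e * f = 0 ∧ f * e = 0 ∧
    Nonempty ((Submodule.span Aᵐᵒᵖ {e} : Submodule Aᵐᵒᵖ A) ≃ₗ[Aᵐᵒᵖ]
      (Submodule.span Aᵐᵒᵖ {f} : Submodule Aᵐᵒᵖ A))

end AlgebraSide

/-! ### Support algebras and faithful algebras of families of vertices -/

section Support

variable (A : Type u) [Ring A]

/-- The radical of a module: the intersection of its maximal submodules. -/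
def modRadical (R : Type u) [Ring R] (M : Type u) [AddCommGroup M] [Module R M] :
    Submodule R M :=
  sInf {N | IsCoatom N}

/-- The intersection `ann_A(Γ)` of the annihilators of all right `A`-modules whose
vertices belong to `Γ`, as a two-sided ideal of `A`. -/
def annTwoSidedIdeal (Γ : Set (ARVertex Aᵐᵒᵖ)) : TwoSidedIdeal A :=
  TwoSidedIdeal.mk'
    {a | ∀ x ∈ Γ, ∀ X : IndecModA Aᵐᵒᵖ, ARVertex.mk X = x →
      ∀ m : X.1.M, MulOpposite.op a • m = 0}
    (by intro x _ X _ m; simp)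
    (by
      intro a b ha hb x hx X hX m
      have : MulOpposite.op (a + b) • m = MulOpposite.op a • m + MulOpposite.op b • m := by
        rw [← add_smul]; rfl
      rw [this, ha x hx X hX m, hb x hx X hX m, add_zero])
    (by
      intro a ha x hx X hX m
      have : MulOpposite.op (-a) • m = -(MulOpposite.op a • m) := by
        rw [← neg_smul]; rfl
      rw [this, ha x hx X hX m, neg_zero])
    (by
      intro a b hb x hx X hX m
      have : MulOpposite.op (a * b) • m = MulOpposite.op b • (MulOpposite.op a • m) := by
        rw [← mul_smul]; rfl
      rw [this, hb x hx X hX _])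
    (by
      intro a b ha x hx X hX m
      have : MulOpposite.op (a * b) • m = MulOpposite.op b • (MulOpposite.op a • m) := by
        rw [← mul_smul]; rfl
      rw [this, ha x hx X hX m, smul_zero])

/-- The faithful algebra `B(Γ) = A / ann_A(Γ)` of a family `Γ` of vertices of `Γ_A`. -/
abbrev faithfulAlg (Γ : Set (ARVertex Aᵐᵒᵖ)) : Type u :=
  (annTwoSidedIdeal A Γ).ringCon.Quotient

/-- The canonical projection `A → B(Γ)`. -/
def faithfulProj (Γ : Set (ARVertex Aᵐᵒᵖ)) : A →+* faithfulAlg A Γ :=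
  RingCon.mk' (annTwoSidedIdeal A Γ).ringCon

/-- The trace ideal `t_A(Γ)`: the two-sided ideal of `A` generated by the images of all
homomorphisms of right `A`-modules from `Q` to `A`. -/
def traceIdeal (Q : Submodule Aᵐᵒᵖ A) : TwoSidedIdeal A :=
  TwoSidedIdeal.span (⋃ f : ↥Q →ₗ[Aᵐᵒᵖ] A, Set.range f)

/-- A decomposition `A = P_Γ ⊕ Q_Γ` of `A` in `mod A` such that the simple summands of
`P_Γ / rad P_Γ` are exactly the simple composition factors of the modules in `Γ`. -/
structure GammaDecomp (A : Type u) [Ring A] (Γ : Set (ARVertex Aᵐᵒᵖ)) where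
  P : Submodule Aᵐᵒᵖ A
  Q : Submodule Aᵐᵒᵖ A
  compl : IsCompl P Q
  top_factors : ∀ (S : Type u) [AddCommGroup S] [Module Aᵐᵒᵖ S], IsSimpleModule Aᵐᵒᵖ S →
    (IsCompFactorMod Aᵐᵒᵖ S (↥P ⧸ modRadical Aᵐᵒᵖ ↥P) ↔
      ∃ x ∈ Γ, ∃ X : IndecModA Aᵐᵒᵖ, ARVertex.mk X = x ∧ IsCompFactorMod Aᵐᵒᵖ S X.1.M)

end Support

/-- Restriction of scalars along a surjective ring homomorphism `π : A → B` identifies a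
vertex `y` of `Γ_B` with a vertex `x` of `Γ_A`: representatives have the same underlying
group, with the `A`-action obtained from the `B`-action through `π`. -/
def VertexRestrictsTo {A B : Type u} [Ring A] [Ring B] (π : A →+* B)
    (y : ARVertex Bᵐᵒᵖ) (x : ARVertex Aᵐᵒᵖ) : Prop :=
  ∃ (N : IndecModA Bᵐᵒᵖ) (X : IndecModA Aᵐᵒᵖ), ARVertex.mk N = y ∧ ARVertex.mk X = x ∧
    ∃ e : X.1.M ≃+ N.1.M, ∀ (a : A) (m : X.1.M),
      e (MulOpposite.op a • m) = MulOpposite.op (π a) • e m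

/-! ### `K`-module structures on Hom-groups, lengths, and Ext -/

section KLength

variable (K B : Type u) [CommRing K] [Ring B] [Algebra K B]
variable (X N : Type u) [AddCommGroup X] [Module B X] [AddCommGroup N] [Module B N]

/-- The action of `K` on `B`-linear maps, through `algebraMap K B`. -/
def homKSMul (k : K) (f : X →ₗ[B] N) : X →ₗ[B] N where
  toFun x := algebraMap K B k • f x
  map_add' x y := by show algebraMap K B k • f (x + y) = _; rw [map_add, smul_add]
  map_smul' b x := by
    simp only [map_smul, RingHom.id_apply, smul_smul]
    rw [Algebra.commutes]

/-- The `K`-module structure on the group of `B`-linear maps. -/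
def homKModule : Module K (X →ₗ[B] N) where
  smul := homKSMul K B X N
  one_smul f := LinearMap.ext fun x => by
    show algebraMap K B 1 • f x = f x
    rw [map_one, one_smul]
  mul_smul k l f := LinearMap.ext fun x => by
    show algebraMap K B (k * l) • f x = algebraMap K B k • algebraMap K B l • f x
    rw [map_mul, mul_smul]
  smul_zero k := LinearMap.ext fun x => by
    show algebraMap K B k • (0 : X →ₗ[B] N) x = 0
    simp
  smul_add k f g := LinearMap.ext fun x => by
    show algebraMap K B k • (f + g) x = algebraMap K B k • f x + algebraMap K B k • g x
    simp [smul_add]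
  add_smul k l f := LinearMap.ext fun x => by
    show algebraMap K B (k + l) • f x = algebraMap K B k • f x + algebraMap K B l • f x
    rw [map_add, add_smul]
  zero_smul f := LinearMap.ext fun x => by
    show algebraMap K B 0 • f x = 0
    rw [map_zero, zero_smul]

/-- The length `|Hom_B(X, N)|` of the group of `B`-linear maps `X → N` as a `K`-module. -/
noncomputable def homKLength : WithBot ℕ∞ :=
  letI : Module K (X →ₗ[B] N) := homKModule K B X N
  Order.krullDim (Submodule K (X →ₗ[B] N))

/-- The canonical surjection from the free module on (the underlying set of) `X` to `X`. -/
noncomputable def freeCover : (X →₀ B) →ₗ[B] X :=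
  Finsupp.linearCombination B id

/-- The length `|Ext¹_B(X, N)|` of `Ext¹` as a `K`-module, computed as the cokernel of
`Hom_B(F, N) → Hom_B(Ω X, N)` for the canonical free cover `F → X` with kernel `Ω X`. -/
noncomputable def ext1KLength : WithBot ℕ∞ :=
  letI : Module K (↥(LinearMap.ker (freeCover B X)) →ₗ[B] N) :=
    homKModule K B (↥(LinearMap.ker (freeCover B X))) N
  let D : Submodule K (↥(LinearMap.ker (freeCover B X)) →ₗ[B] N) :=
    { carrier := {f | ∃ g : (X →₀ B) →ₗ[B] N,
        f = g.comp (LinearMap.ker (freeCover B X)).subtype}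
      add_mem' := by
        rintro f₁ f₂ ⟨g₁, rfl⟩ ⟨g₂, rfl⟩
        exact ⟨g₁ + g₂, rfl⟩
      zero_mem' := ⟨0, rfl⟩
      smul_mem' := by
        rintro k f ⟨g, rfl⟩
        exact ⟨homKSMul K B _ N k g, rfl⟩ }
  Order.krullDim (Submodule K ((↥(LinearMap.ker (freeCover B X)) →ₗ[B] N) ⧸ D))

end KLength

/-- Vanishing of `Ext¹_B(X, N)`: every short exact sequence `0 → N → E → X → 0` splits. -/
def Ext1IsZero (B : Type u) [Ring B] (X : Type u) [AddCommGroup X] [Module B X]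
    (N : Type u) [AddCommGroup N] [Module B N] : Prop :=
  ∀ (E : Type u) [AddCommGroup E] [Module B E], ∀ (f : N →ₗ[B] E) (g : E →ₗ[B] X),
    Function.Injective f → Function.Surjective g → LinearMap.range f = LinearMap.ker g →
    ∃ s : X →ₗ[B] E, g.comp s = LinearMap.id

/-- The syzygy `Ω X`: the kernel of the canonical free cover of `X`. -/
noncomputable def syzygyRaw (B : Type u) [Ring B] (X : RawMod B) : RawMod B :=
  ⟨↥(LinearMap.ker (freeCover B X.M))⟩

/-- Iterated syzygies. -/
noncomputable def syzygyIter (B : Type u) [Ring B] : ℕ → RawMod B → RawMod B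
  | 0, X => X
  | n + 1, X => syzygyRaw B (syzygyIter B n X)

/-- Vanishing of `Ext^r_B(X, N)` for `r ≥ 1`, via `Ext^r(X, N) ≅ Ext¹(Ω^{r-1} X, N)`. -/
noncomputable def ExtIsZero (B : Type u) [Ring B] (X N : RawMod B) (r : ℕ) : Prop :=
  Ext1IsZero B (syzygyIter B (r - 1) X).M N.M

/-- `[X] = [M]` in the Grothendieck group `K₀`: the modules `X` and `M` have the same
composition factors including multiplicities. -/
def SameCompFactors {B : Type u} [Ring B] (X M : ModA B) : Prop :=
  ∃ (n : ℕ) (s : Fin (n + 1) → Submodule B X.M) (t : Fin (n + 1) → Submodule B M.M)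
    (σ : Equiv.Perm (Fin n)),
    s 0 = ⊥ ∧ s (Fin.last n) = ⊤ ∧ t 0 = ⊥ ∧ t (Fin.last n) = ⊤ ∧
    (∀ i : Fin n, s i.castSucc ≤ s i.succ) ∧ (∀ i : Fin n, t i.castSucc ≤ t i.succ) ∧
    ∀ i : Fin n,
      IsSimpleModule B (↥(s i.succ) ⧸ (s i.castSucc).comap (s i.succ).subtype) ∧
      Nonempty ((↥(s i.succ) ⧸ (s i.castSucc).comap (s i.succ).subtype) ≃ₗ[B]
        (↥(t (σ i).succ) ⧸ (t (σ i).castSucc).comap (t (σ i).succ).subtype))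

/-- A torsion class in `mod B`: a class of modules closed under factor modules and
extensions. -/
def IsTorsionClass (B : Type u) [Ring B] (T : Set (ModA B)) : Prop :=
  (∀ M ∈ T, ∀ (N : ModA B) (g : M.M →ₗ[B] N.M), Function.Surjective g → N ∈ T) ∧
  ∀ (X E M : ModA B) (f : X.M →ₗ[B] E.M) (g : E.M →ₗ[B] M.M),
    Function.Injective f → Function.Surjective g → LinearMap.range f = LinearMap.ker g →
    X ∈ T → M ∈ T → E ∈ T

/-- A torsion class is functorially finite iff it is of the form `Fac(M)`. -/
def IsFunctoriallyFinite (B : Type u) [Ring B] (T : Set (ModA B)) : Prop :=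
  ∃ M : ModA B,
    T = {N | ∃ (k : ℕ) (g : (Fin k → M.M) →ₗ[B] N.M), Function.Surjective g}

/-- A module `M` is `τ`-rigid if `Hom(M, τM) = 0`. -/
def IsTauRigid {B : Type u} [Ring B] (M : ModA B) : Prop :=
  ∀ N : ModA B, IsTauOf N M → ∀ f : M.M →ₗ[B] N.M, f = 0

/-- A module `M` is rigid if `Ext¹(M, M) = 0`. -/
def IsRigid {B : Type u} [Ring B] (M : ModA B) : Prop := Ext1IsZero B M.M M.M

/-- `α(M) ≤ 2`: the middle term of any almost split sequence ending at `M` has at most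
two indecomposable direct summands. -/
def AlphaLe2 {B : Type u} [Ring B] (M : ModA B) : Prop :=
  ∀ s : AlmostSplitSeq B, s.r.Iso M →
    ∀ (k : ℕ) (N : Fin k → Submodule B s.m.M),
      (∀ i, IsIndecMod B ↥(N i)) → iSupIndep N → (⨆ i, N i) = ⊤ → k ≤ 2

/-!
A directing module is both rigid and `τ`-rigid, so if one of the three classes of modules is finite
up to isomorphism, then so is the class of directing modules. Suppose this holds for a cycle-finite
artin algebra `R` of infinite representation type. Passing repeatedly to indecomposable sources of
maps in the infinite radical must come to an end, since no cycle contains such a map; this gives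
infinitely many *left finite* indecomposable modules `X`, meaning that every predecessor of `X`
admits nonzero maps from only finitely many indecomposable modules.

A left finite module `X` has only finitely many predecessors. If none of them is injective, an
infinite number of them would force arbitrarily long paths of irreducible maps to `X` from an
indecomposable projective `P`, and then also from all iterated inverse translates of `P`. Infinitely
many of these translates map to `X`, so two of them are isomorphic and `P` is itself an inverse
translate, which is absurd. If some predecessor `I` is injective, a predecessor of `X` either is one
of the finitely many modules mapping to `I` or leads, through modules without nonzero maps to `I`,
to one of finitely many modules. The modules without nonzero maps to `I` are modules over a proper
quotient of `R`, because `R` does not embed in a module without nonzero maps to `I`, and one uses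
induction on the length of `R`.

Finally, a left finite module `X` which is not directing lies on a cycle through an injective
module `I`: otherwise its finite cycle class would be closed under inverse translation, hence under
translation and under predecessors, and would contain a projective. Since there are only finitely
many injectives `I`, each with finitely many predecessors, there are only finitely many such `X`.
Together with the finitely many directing ones this contradicts the infinity of left finite modules.
-/

section Basics

variable {R : Type u} [Ring R]

instance ModA.isNoetherian (X : ModA R) : IsNoetherian R X.M :=
  (isFiniteLength_iff_isNoetherian_isArtinian.1 X.finLen).1

instance ModA.isArtinian (X : ModA R) : IsArtinian R X.M :=
  (isFiniteLength_iff_isNoetherian_isArtinian.1 X.finLen).2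

/-- A submodule of a finite length module, as an object of `mod R`. -/
abbrev ModA.ofSubmodule (X : ModA R) (N : Submodule R X.M) : ModA R :=
  ⟨N, X.finLen.of_injective N.injective_subtype⟩

/-- A quotient of a finite length module, as an object of `mod R`. -/
abbrev ModA.ofQuotient (X : ModA R) (N : Submodule R X.M) : ModA R :=
  ⟨X.M ⧸ N, X.finLen.of_surjective N.mkQ_surjective⟩

theorem bijective_of_comp_eq_id {M N : Type*} [AddCommGroup M] [Module R M] [AddCommGroup N]
    [Module R N] {f : M →ₗ[R] N} {g : N →ₗ[R] M} (hgf : g.comp f = LinearMap.id)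
    (hfg : f.comp g = LinearMap.id) : Function.Bijective f :=
  Function.bijective_iff_has_inverse.2 ⟨g, LinearMap.congr_fun hgf, LinearMap.congr_fun hfg⟩

theorem exists_inverse_of_bijective {M N : Type*} [AddCommGroup M] [Module R M] [AddCommGroup N]
    [Module R N] {f : M →ₗ[R] N} (hf : Function.Bijective f) :
    ∃ g : N →ₗ[R] M, g.comp f = LinearMap.id ∧ f.comp g = LinearMap.id :=
  let e := LinearEquiv.ofBijective f hf
  ⟨e.symm, LinearMap.ext e.symm_apply_apply, LinearMap.ext e.apply_symm_apply⟩

namespace ModA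

theorem Iso.refl (X : ModA R) : X.Iso X := ⟨LinearEquiv.refl R _⟩

theorem Iso.symm {X Y : ModA R} (h : X.Iso Y) : Y.Iso X := ⟨h.some.symm⟩

theorem Iso.trans {X Y Z : ModA R} (h : X.Iso Y) (h' : Y.Iso Z) : X.Iso Z :=
  ⟨h.some.trans h'.some⟩

theorem Iso.of_bijective {X Y : ModA R} {f : X.M →ₗ[R] Y.M} (hf : Function.Bijective f) :
    X.Iso Y :=
  ⟨LinearEquiv.ofBijective f hf⟩

theorem IsIndec.of_iso {X Y : ModA R} (hX : X.IsIndec) (h : X.Iso Y) : Y.IsIndec := by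
  obtain ⟨e⟩ := h
  have := hX.1
  refine ⟨e.symm.toEquiv.nontrivial, fun f hf => ?_⟩
  have hconj := hX.2 (e.symm.conjRingEquiv f) (by rw [← map_mul, hf])
  simpa only [EmbeddingLike.map_eq_zero_iff, EmbeddingLike.map_eq_one_iff] using hconj

/-! ### Maps between indecomposable modules -/

section Indecomposable

variable {X Y Z : ModA R}

/-- Fitting's lemma. -/
theorem IsIndec.bijective_or_isNilpotent (hX : X.IsIndec) (f : Module.End R X.M) :
    Function.Bijective f ∨ IsNilpotent f := by
  obtain ⟨n, hn⟩ := Filter.eventually_atTop.1 (LinearMap.eventually_isCompl_ker_pow_range_pow f)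
  have hcompl := hn (n + 1) (by omega)
  set p : Module.End R X.M := Submodule.projection _ _ hcompl
  rcases hX.2 p (Submodule.isIdempotentElem_projection hcompl) with h0 | h1
  · left
    have hker : LinearMap.ker (f ^ (n + 1)) = ⊥ := by
      refine eq_bot_iff.2 fun x hx => ?_
      have hpx : p x = x := Submodule.projection_apply_left hcompl ⟨x, hx⟩
      simpa [h0] using hpx.symm
    have hinj : Function.Injective (f ^ n * f) := by
      rw [← pow_succ]
      exact LinearMap.ker_eq_bot.1 hker
    exact IsArtinian.bijective_of_injective_endomorphism f (Function.Injective.of_comp hinj)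
  · right
    refine ⟨n + 1, LinearMap.ext fun x => ?_⟩
    have hpx : p x ∈ LinearMap.ker (f ^ (n + 1)) := Submodule.projection_apply_mem hcompl x
    simpa [h1] using hpx

theorem IsIndec.bijective_or_of_add_eq_one (hX : X.IsIndec) {a b : Module.End R X.M}
    (h : a + b = 1) : Function.Bijective a ∨ Function.Bijective b := by
  refine (hX.bijective_or_isNilpotent a).imp_right fun hnil => ?_
  rw [← Module.End.isUnit_iff, ← sub_eq_of_eq_add' h.symm]
  exact hnil.isUnit_one_sub

theorem IsIndec.bijective_or_of_add (hX : X.IsIndec) {f g : X.M →ₗ[R] Y.M}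
    (h : Function.Bijective (f + g)) : Function.Bijective f ∨ Function.Bijective g := by
  obtain ⟨e, he, he'⟩ := exists_inverse_of_bijective h
  have hbij : Function.Bijective e := bijective_of_comp_eq_id he' he
  have key := hX.bijective_or_of_add_eq_one (a := e.comp f) (b := e.comp g)
    (by rw [← LinearMap.comp_add, he]; rfl)
  simpa only [LinearMap.coe_comp, Function.Bijective.of_comp_iff' hbij] using key

theorem IsIndec.not_bijective_zero (hX : X.IsIndec) :
    ¬Function.Bijective (0 : X.M →ₗ[R] Y.M) := fun h =>
  let ⟨_, _, hxy⟩ := hX.1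
  hxy (h.1 rfl)

theorem IsIndec.exists_bijective_of_sum (hX : X.IsIndec) {ι : Type*} (s : Finset ι)
    (f : ι → X.M →ₗ[R] Y.M) (h : Function.Bijective ⇑(∑ j ∈ s, f j)) :
    ∃ j ∈ s, Function.Bijective (f j) := by
  classical
  induction s using Finset.induction_on with
  | empty => exact absurd h (by simpa using hX.not_bijective_zero)
  | insert a s ha ih =>
    rw [Finset.sum_insert ha] at h
    rcases hX.bijective_or_of_add h with h | h
    · exact ⟨a, Finset.mem_insert_self _ _, h⟩
    · obtain ⟨j, hj, hb⟩ := ih h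
      exact ⟨j, Finset.mem_insert_of_mem hj, hb⟩

theorem IsIndec.ne_zero_of_bijective (hX : X.IsIndec) {f : X.M →ₗ[R] Y.M}
    (h : Function.Bijective f) : f ≠ 0 := by
  rintro rfl
  exact hX.not_bijective_zero h

theorem IsIndec.id_ne_zero (hX : X.IsIndec) : (LinearMap.id : X.M →ₗ[R] X.M) ≠ 0 :=
  hX.ne_zero_of_bijective Function.bijective_id

theorem IsIndec.bijective_of_leftInverse (hX : X.IsIndec) (hY : Y.IsIndec) {f : X.M →ₗ[R] Y.M}
    {r : Y.M →ₗ[R] X.M} (h : r.comp f = LinearMap.id) :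
    Function.Bijective f ∧ Function.Bijective r := by
  have hr : ∀ x, r (f x) = x := LinearMap.congr_fun h
  rcases hY.2 (f.comp r) (by ext y; simp [hr]) with h0 | h1
  · refine absurd (LinearMap.ext fun x => ?_) hX.id_ne_zero
    have hfx : f x = 0 := by simpa [hr] using LinearMap.congr_fun h0 (f x)
    rw [LinearMap.id_apply, ← hr x, hfx, map_zero, LinearMap.zero_apply]
  · exact ⟨bijective_of_comp_eq_id h h1, bijective_of_comp_eq_id h1 h⟩

theorem IsIndec.bijective_of_bijective_comp (hX : X.IsIndec) (hY : Y.IsIndec)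
    {f : X.M →ₗ[R] Y.M} {g : Y.M →ₗ[R] Z.M} (h : Function.Bijective (g.comp f)) :
    Function.Bijective f ∧ Function.Bijective g := by
  obtain ⟨e, he, -⟩ := exists_inverse_of_bijective h
  have hf := (hX.bijective_of_leftInverse hY (f := f) (r := e.comp g)
    (by rw [LinearMap.comp_assoc, he])).1
  exact ⟨hf, (Function.Bijective.of_comp_iff g hf).1 (by rwa [LinearMap.coe_comp] at h)⟩

end Indecomposable

end ModA

section Split

variable {X Y : ModA R} {f : X.M →ₗ[R] Y.M}

theorem SplitMonoMap.of_bijective (h : Function.Bijective f) : SplitMonoMap f :=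
  (exists_inverse_of_bijective h).imp fun _ => And.left

theorem SplitEpiMap.of_bijective (h : Function.Bijective f) : SplitEpiMap f :=
  (exists_inverse_of_bijective h).imp fun _ => And.right

theorem splitMonoMap_iff_bijective (hX : X.IsIndec) (hY : Y.IsIndec) :
    SplitMonoMap f ↔ Function.Bijective f :=
  ⟨fun ⟨_, hr⟩ => (hX.bijective_of_leftInverse hY hr).1, .of_bijective⟩

theorem splitEpiMap_iff_bijective (hX : X.IsIndec) (hY : Y.IsIndec) :
    SplitEpiMap f ↔ Function.Bijective f :=
  ⟨fun ⟨_, hs⟩ => (hY.bijective_of_leftInverse hX hs).2, .of_bijective⟩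

end Split

namespace ModA

variable {X Y : ModA R}

/-- The composition length as a natural number. -/
noncomputable def len (X : ModA R) : ℕ := (Module.length R X.M).toNat

theorem coe_len (X : ModA R) : (X.len : ℕ∞) = Module.length R X.M :=
  ENat.natCast_toNat (Module.length_ne_top_iff.2 X.finLen)

theorem len_ofSubmodule_lt {N : Submodule R X.M} (h : N ≠ ⊤) : (X.ofSubmodule N).len < X.len :=
  Nat.cast_lt (α := ℕ∞).1 (by simpa only [coe_len] using Submodule.length_lt h)

theorem len_le_of_injective {f : X.M →ₗ[R] Y.M} (hf : Function.Injective f) : X.len ≤ Y.len :=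
  Nat.cast_le (α := ℕ∞).1 (by simpa only [coe_len] using Module.length_le_of_injective f hf)

theorem len_le_of_surjective {f : X.M →ₗ[R] Y.M} (hf : Function.Surjective f) : Y.len ≤ X.len :=
  Nat.cast_le (α := ℕ∞).1 (by simpa only [coe_len] using Module.length_le_of_surjective f hf)

theorem Iso.len_eq (h : X.Iso Y) : X.len = Y.len :=
  (len_le_of_injective (f := h.some.toLinearMap) h.some.injective).antisymm
    (len_le_of_surjective (f := h.some.toLinearMap) h.some.surjective)

end ModA

/-- A decomposition of `X` as a finite direct sum of indecomposables, encoded by the inclusions and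
projections of the summands (orthogonality of distinct summands is not recorded). -/
structure IndecDecomposition (X : ModA R) where
  ι : Type
  [fintype : Fintype ι]
  summand : ι → ModA R
  indec : ∀ j, (summand j).IsIndec
  incl : ∀ j, (summand j).M →ₗ[R] X.M
  proj : ∀ j, X.M →ₗ[R] (summand j).M
  proj_comp_incl : ∀ j, (proj j).comp (incl j) = LinearMap.id
  sum_incl_comp_proj : ∑ j, (incl j).comp (proj j) = LinearMap.id

attribute [instance] IndecDecomposition.fintype

namespace IndecDecomposition

variable {X Y Z : ModA R}

theorem sum_incl_proj (d : IndecDecomposition X) (x : X.M) :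
    ∑ j, d.incl j (d.proj j x) = x := by
  simpa using LinearMap.congr_fun d.sum_incl_comp_proj x

theorem eq_sum_comp_incl_comp_proj (d : IndecDecomposition X) (f : X.M →ₗ[R] Y.M) :
    f = ∑ j, (f.comp (d.incl j)).comp (d.proj j) := by
  ext x
  conv_lhs => rw [← d.sum_incl_proj x]
  simp

theorem exists_comp_incl_ne_zero (d : IndecDecomposition X) {f : X.M →ₗ[R] Y.M} (hf : f ≠ 0) :
    ∃ j, f.comp (d.incl j) ≠ 0 := by
  contrapose! hf
  rw [d.eq_sum_comp_incl_comp_proj f]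
  simp [hf]

theorem exists_comp_incl_comp_proj_ne_zero (d : IndecDecomposition X) {f : X.M →ₗ[R] Y.M}
    {g : Z.M →ₗ[R] X.M} (h : f.comp g ≠ 0) :
    ∃ j, (f.comp (d.incl j)).comp ((d.proj j).comp g) ≠ 0 := by
  contrapose! h
  ext x
  rw [d.eq_sum_comp_incl_comp_proj f]
  simp only [LinearMap.comp_apply, LinearMap.sum_apply, LinearMap.zero_apply]
  exact Finset.sum_eq_zero fun j _ => LinearMap.congr_fun (h j) x

/-- The decomposition of a direct sum `X = Y ⊕ Z` induced by decompositions of `Y` and `Z`. -/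
def ofBiproduct (d : IndecDecomposition Y) (e : IndecDecomposition Z)
    {p : X.M →ₗ[R] Y.M} {i : Y.M →ₗ[R] X.M} {q : X.M →ₗ[R] Z.M} {j : Z.M →ₗ[R] X.M}
    (hpi : p.comp i = LinearMap.id) (hqj : q.comp j = LinearMap.id)
    (hsum : i.comp p + j.comp q = LinearMap.id) : IndecDecomposition X where
  ι := d.ι ⊕ e.ι
  summand := Sum.elim d.summand e.summand
  indec := Sum.rec d.indec e.indec
  incl := Sum.rec (fun k => i.comp (d.incl k)) fun k => j.comp (e.incl k)
  proj := Sum.rec (fun k => (d.proj k).comp p) fun k => (e.proj k).comp q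
  proj_comp_incl := by
    rintro (k | k)
    · change (d.proj k).comp ((p.comp i).comp (d.incl k)) = LinearMap.id
      rw [hpi, LinearMap.id_comp, d.proj_comp_incl]
    · change (e.proj k).comp ((q.comp j).comp (e.incl k)) = LinearMap.id
      rw [hqj, LinearMap.id_comp, e.proj_comp_incl]
  sum_incl_comp_proj := by
    ext x
    rw [Fintype.sum_sum_type, LinearMap.add_apply, LinearMap.sum_apply, LinearMap.sum_apply]
    change ∑ k, i (d.incl k (d.proj k (p x))) + ∑ k, j (e.incl k (e.proj k (q x))) = x
    rw [← map_sum, ← map_sum, sum_incl_proj, sum_incl_proj]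
    exact LinearMap.congr_fun hsum x

end IndecDecomposition

theorem ModA.exists_idempotent_of_not_isIndec {X : ModA R} [Nontrivial X.M] (hX : ¬X.IsIndec) :
    ∃ f : Module.End R X.M, f * f = f ∧ f ≠ 0 ∧ f ≠ 1 := by
  by_contra! h
  exact hX ⟨‹_›, fun f hf => or_iff_not_imp_left.2 (h f hf)⟩

theorem ModA.exists_indecDecomposition (X : ModA R) : Nonempty (IndecDecomposition X) := by
  induction hn : X.len using Nat.strong_induction_on generalizing X with
  | _ n ih =>
  rcases subsingleton_or_nontrivial X.M with hs | hnt
  · exact ⟨⟨Empty, nofun, nofun, nofun, nofun, nofun, LinearMap.ext fun x => Subsingleton.elim _ _⟩⟩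
  by_cases hX : X.IsIndec
  · exact ⟨⟨Unit, fun _ => X, fun _ => hX, fun _ => LinearMap.id, fun _ => LinearMap.id,
      fun _ => rfl, by simp⟩⟩
  obtain ⟨f, hf, hf0, hf1⟩ := exists_idempotent_of_not_isIndec hX
  have hff : ∀ x, f (f x) = f x := LinearMap.congr_fun hf
  have hrange : LinearMap.range f ≠ ⊤ := fun h => hf1 <| LinearMap.ext fun x => by
    obtain ⟨y, rfl⟩ := LinearMap.range_eq_top.1 h x
    exact hff y
  have hker : LinearMap.ker f ≠ ⊤ := fun h => hf0 (LinearMap.ker_eq_top.1 h)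
  obtain ⟨d⟩ := ih _ (hn ▸ len_ofSubmodule_lt hrange) (X.ofSubmodule (LinearMap.range f)) rfl
  obtain ⟨e⟩ := ih _ (hn ▸ len_ofSubmodule_lt hker) (X.ofSubmodule (LinearMap.ker f)) rfl
  refine ⟨d.ofBiproduct e (p := f.rangeRestrict) (i := (LinearMap.range f).subtype)
    (q := LinearMap.codRestrict (LinearMap.ker f) (LinearMap.id - f) fun x => by simp [hff])
    (j := (LinearMap.ker f).subtype) ?_ ?_ ?_⟩
  · ext ⟨_, y, rfl⟩
    exact hff y
  · ext ⟨x, hx⟩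
    simp [LinearMap.mem_ker.1 hx]
  · ext x
    simp

/-- A chosen decomposition into indecomposables. -/
noncomputable def ModA.decomposition (X : ModA R) : IndecDecomposition X :=
  X.exists_indecDecomposition.some

/-! ### The radical and its powers -/

section Radical

variable {X Y Z : ModA R}

theorem InRad.comp_right {f : Y.M →ₗ[R] Z.M} (hf : InRad f) (g : X.M →ₗ[R] Y.M) :
    InRad (f.comp g) := fun W hW a b => hf W hW (g.comp a) b

theorem InRad.comp_left {f : X.M →ₗ[R] Y.M} (hf : InRad f) (g : Y.M →ₗ[R] Z.M) :
    InRad (g.comp f) := fun W hW a b => hf W hW a (b.comp g)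

theorem InRad.add {f g : X.M →ₗ[R] Y.M} (hf : InRad f) (hg : InRad g) : InRad (f + g) :=
  fun W hW a b h => by
    rw [LinearMap.add_comp, LinearMap.comp_add] at h
    exact (hW.bijective_or_of_add h).elim (hf W hW a b) (hg W hW a b)

theorem InRad.zero : InRad (0 : X.M →ₗ[R] Y.M) := fun W hW a b h => by
  rw [LinearMap.zero_comp, LinearMap.comp_zero] at h
  exact hW.not_bijective_zero h

theorem InRad.neg {f : X.M →ₗ[R] Y.M} (hf : InRad f) : InRad (-f) := by
  simpa [LinearMap.neg_comp] using hf.comp_left (-LinearMap.id : Y.M →ₗ[R] Y.M)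

theorem InRad.not_splitMonoMap (hX : X.IsIndec) {f : X.M →ₗ[R] Y.M} (hf : InRad f) :
    ¬SplitMonoMap f := fun ⟨r, hr⟩ =>
  hf X hX LinearMap.id r (by rw [LinearMap.comp_id, hr]; exact Function.bijective_id)

theorem InRad.not_bijective (hX : X.IsIndec) {f : X.M →ₗ[R] Y.M} (hf : InRad f) :
    ¬Function.Bijective f := fun h => hf.not_splitMonoMap hX (.of_bijective h)

theorem InRad.of_not_splitMonoMap (hX : X.IsIndec) {f : X.M →ₗ[R] Y.M} (hf : ¬SplitMonoMap f) :
    InRad f := fun W hW a b h => by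
  obtain ⟨g, hg, -⟩ := exists_inverse_of_bijective
    (hW.bijective_of_bijective_comp hX (f := a) (g := b.comp f) h).2
  exact hf ⟨g.comp b, by rw [LinearMap.comp_assoc, hg]⟩

theorem comp_mem_radPow_succ {n : ℕ} {f : Y.M →ₗ[R] Z.M} (hf : f ∈ radPow R n Y Z)
    {g : X.M →ₗ[R] Y.M} (hg : InRad g) : f.comp g ∈ radPow R (n + 1) X Z :=
  AddSubgroup.subset_closure ⟨Y, g, f, hg, hf, rfl⟩

theorem radPow_comp_left {n : ℕ} {f : X.M →ₗ[R] Y.M} (hf : f ∈ radPow R n X Y)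
    (g : Y.M →ₗ[R] Z.M) : g.comp f ∈ radPow R n X Z := by
  induction n generalizing X Y Z with
  | zero => exact AddSubgroup.mem_top _
  | succ n ih =>
    induction hf using AddSubgroup.closure_induction with
    | mem f hf =>
      obtain ⟨W, a, b, ha, hb, rfl⟩ := hf
      exact comp_mem_radPow_succ (ih hb g) ha
    | zero => rw [LinearMap.comp_zero]; exact zero_mem _
    | add f f' _ _ h h' => rw [LinearMap.comp_add]; exact add_mem h h'
    | neg f _ h => rw [LinearMap.comp_neg]; exact neg_mem h

theorem radPow_comp_right {n : ℕ} {f : Y.M →ₗ[R] Z.M} (hf : f ∈ radPow R n Y Z)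
    (g : X.M →ₗ[R] Y.M) : f.comp g ∈ radPow R n X Z := by
  cases n with
  | zero => exact AddSubgroup.mem_top _
  | succ n =>
    induction hf using AddSubgroup.closure_induction with
    | mem f hf =>
      obtain ⟨W, a, b, ha, hb, rfl⟩ := hf
      rw [LinearMap.comp_assoc]
      exact comp_mem_radPow_succ hb (ha.comp_right g)
    | zero => rw [LinearMap.zero_comp]; exact zero_mem _
    | add f f' _ _ h h' => rw [LinearMap.add_comp]; exact add_mem h h'
    | neg f _ h => rw [LinearMap.neg_comp]; exact neg_mem h

theorem radPow_antitone (X Y : ModA R) : Antitone fun n => radPow R n X Y := by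
  refine antitone_nat_of_succ_le fun n => ?_
  induction n generalizing X Y with
  | zero => exact le_top
  | succ n ih =>
    refine (AddSubgroup.closure_le _).2 ?_
    rintro _ ⟨W, a, b, ha, hb, rfl⟩
    exact comp_mem_radPow_succ (ih _ _ hb) ha

theorem InRad.of_mem_radPow_one {f : X.M →ₗ[R] Y.M} (hf : f ∈ radPow R 1 X Y) : InRad f := by
  induction hf using AddSubgroup.closure_induction with
  | mem f hf =>
    obtain ⟨W, a, b, ha, -, rfl⟩ := hf
    exact ha.comp_left b
  | zero => exact .zero
  | add f f' _ _ h h' => exact h.add h'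
  | neg f _ h => exact h.neg

theorem InRadInf.not_bijective (hX : X.IsIndec) {f : X.M →ₗ[R] Y.M} (hf : InRadInf f) :
    ¬Function.Bijective f :=
  (InRad.of_mem_radPow_one (hf 1)).not_bijective hX

theorem InRadInf.comp_left {f : X.M →ₗ[R] Y.M} (hf : InRadInf f) (g : Y.M →ₗ[R] Z.M) :
    InRadInf (g.comp f) := fun n => radPow_comp_left (hf n) g

theorem InRadInf.comp_right {f : Y.M →ₗ[R] Z.M} (hf : InRadInf f) (g : X.M →ₗ[R] Y.M) :
    InRadInf (f.comp g) := fun n => radPow_comp_right (hf n) g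

end Radical

/-! ### Finiteness up to isomorphism -/

/-- `P` is satisfied by only finitely many indecomposable modules up to isomorphism. -/
def FiniteUpToIso (P : ModA R → Prop) : Prop :=
  {x : ARVertex R | ∃ X : IndecModA R, ARVertex.mk X = x ∧ P X.1}.Finite

theorem ARVertex.mk_eq_mk_iff {X Y : IndecModA R} : ARVertex.mk X = ARVertex.mk Y ↔ X.1.Iso Y.1 :=
  Quotient.eq (r := isoSetoid R)

namespace FiniteUpToIso

variable {P Q : ModA R → Prop}

theorem mono (h : FiniteUpToIso Q) (hPQ : ∀ X, X.IsIndec → P X → Q X) : FiniteUpToIso P :=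
  h.subset fun _ ⟨X, hX, hP⟩ => ⟨X, hX, hPQ X.1 X.2 hP⟩

theorem of_forall_iso {Y : ModA R} (h : ∀ X, X.IsIndec → P X → X.Iso Y) : FiniteUpToIso P :=
  Set.Subsingleton.finite fun _ ⟨X, hX, hPX⟩ _ ⟨X', hX', hPX'⟩ => by
    rw [← hX, ← hX', ARVertex.mk_eq_mk_iff]
    exact (h X.1 X.2 hPX).trans (h X'.1 X'.2 hPX').symm

theorem of_iso (Y : ModA R) : FiniteUpToIso fun X : ModA R => X.Iso Y :=
  of_forall_iso fun _ _ h => h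

theorem of_forall_not (h : ∀ X, X.IsIndec → ¬P X) : FiniteUpToIso P :=
  Set.finite_empty.subset fun _ ⟨X, _, hP⟩ => h X.1 X.2 hP

theorem or (hP : FiniteUpToIso P) (hQ : FiniteUpToIso Q) :
    FiniteUpToIso fun X => P X ∨ Q X :=
  (hP.union hQ).subset fun _ ⟨X, hX, h⟩ => h.imp (fun h => ⟨X, hX, h⟩) fun h => ⟨X, hX, h⟩

theorem exists_of_finite {ι : Type*} [Finite ι] {Q : ι → ModA R → Prop}
    (h : ∀ j, FiniteUpToIso (Q j)) : FiniteUpToIso fun X => ∃ j, Q j X :=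
  (Set.finite_iUnion h).subset fun _ ⟨X, hX, j, hj⟩ => Set.mem_iUnion.2 ⟨j, X, hX, hj⟩

theorem bind {Q : ModA R → ModA R → Prop} (hP : FiniteUpToIso P)
    (hQ : ∀ Y, Y.IsIndec → P Y → FiniteUpToIso (Q Y))
    (hiso : ∀ X Y Z : ModA R, X.Iso Y → Q X Z → Q Y Z) :
    FiniteUpToIso fun X => ∃ Y, Y.IsIndec ∧ P Y ∧ Q Y X := by
  refine Set.Finite.subset (hP.biUnion (t := fun y => {x | ∃ X : IndecModA R, ARVertex.mk X = x ∧
    ∃ Y : IndecModA R, ARVertex.mk Y = y ∧ Q Y.1 X.1}) ?_) ?_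
  · rintro _ ⟨Y, rfl, hY⟩
    refine (hQ Y.1 Y.2 hY).subset ?_
    rintro _ ⟨X, hX, Y', hY', h⟩
    exact ⟨X, hX, hiso _ _ _ (ARVertex.mk_eq_mk_iff.1 hY') h⟩
  · rintro _ ⟨X, hX, Y, hY, hPY, hQY⟩
    exact Set.mem_biUnion ⟨⟨Y, hY⟩, rfl, hPY⟩ ⟨X, hX, ⟨Y, hY⟩, rfl, hQY⟩

theorem exists_lt_iso (hP : FiniteUpToIso P) (x : ℕ → ModA R) (hx : ∀ n, (x n).IsIndec)
    (hPx : ∀ n, P (x n)) : ∃ i j, i < j ∧ (x i).Iso (x j) := by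
  have hmem : ∀ n, ARVertex.mk ⟨x n, hx n⟩ ∈
      {y : ARVertex R | ∃ X : IndecModA R, ARVertex.mk X = y ∧ P X.1} :=
    fun n => ⟨_, rfl, hPx n⟩
  obtain ⟨i, j, hij, h⟩ := Set.Finite.exists_lt_map_eq_of_forall_mem hmem hP
  exact ⟨i, j, hij, ARVertex.mk_eq_mk_iff.1 h⟩

end FiniteUpToIso

end Basics

/-! ### The Harada–Sai lemma -/

section HaradaSai

variable {R : Type u} [Ring R]

section Modules

variable {M N P : Type*} [AddCommGroup M] [Module R M] [AddCommGroup N] [Module R N]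
  [AddCommGroup P] [Module R P]

theorem exists_comp_eq_of_ker_le {g : M →ₗ[R] N} (hg : Function.Surjective g) {h : M →ₗ[R] P}
    (hk : LinearMap.ker g ≤ LinearMap.ker h) : ∃ s : N →ₗ[R] P, s.comp g = h := by
  refine ⟨((LinearMap.ker g).liftQ h hk).comp (g.quotKerEquivOfSurjective hg).symm.toLinearMap, ?_⟩
  ext x
  have hx : (g.quotKerEquivOfSurjective hg).symm (g x) = (LinearMap.ker g).mkQ x := by
    rw [LinearEquiv.symm_apply_eq]; rfl
  simp [hx]

theorem exists_comp_eq_of_range_le {f : M →ₗ[R] N} (hf : Function.Injective f) {h : P →ₗ[R] N}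
    (hr : LinearMap.range h ≤ LinearMap.range f) : ∃ s : P →ₗ[R] M, f.comp s = h := by
  refine ⟨(LinearEquiv.ofInjective f hf).symm.toLinearMap.comp
    (h.codRestrict (LinearMap.range f) fun z => hr ⟨z, rfl⟩), ?_⟩
  ext z
  exact congrArg Subtype.val ((LinearEquiv.ofInjective f hf).apply_symm_apply ⟨h z, hr ⟨z, rfl⟩⟩)

theorem exists_section_of_retraction {f : M →ₗ[R] N} {g : N →ₗ[R] P} (hg : Function.Surjective g)
    (hfg : LinearMap.range f = LinearMap.ker g) {r : N →ₗ[R] M} (hr : r.comp f = LinearMap.id) :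
    ∃ s : P →ₗ[R] N, g.comp s = LinearMap.id := by
  have hrf (x : M) : r (f x) = x := LinearMap.congr_fun hr x
  have hgf : g.comp f = 0 := LinearMap.range_le_ker_iff.1 hfg.le
  obtain ⟨s, hs⟩ := exists_comp_eq_of_ker_le hg (h := LinearMap.id - f.comp r) (by
    rw [← hfg]
    rintro _ ⟨x, rfl⟩
    simp [hrf])
  refine ⟨s, (LinearMap.cancel_right hg).1 ?_⟩
  rw [LinearMap.comp_assoc, hs, LinearMap.comp_sub, ← LinearMap.comp_assoc, hgf]
  simp

theorem exists_retraction_of_section {f : M →ₗ[R] N} {g : N →ₗ[R] P} (hf : Function.Injective f)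
    (hfg : LinearMap.range f = LinearMap.ker g) {s : P →ₗ[R] N} (hs : g.comp s = LinearMap.id) :
    ∃ r : N →ₗ[R] M, r.comp f = LinearMap.id := by
  have hgf : g.comp f = 0 := LinearMap.range_le_ker_iff.1 hfg.le
  obtain ⟨r, hr⟩ := exists_comp_eq_of_range_le hf (h := LinearMap.id - s.comp g) (by
    rw [hfg, LinearMap.range_le_ker_iff, LinearMap.comp_sub, ← LinearMap.comp_assoc, hs]
    simp)
  refine ⟨r, (LinearMap.cancel_left hf).1 ?_⟩
  rw [← LinearMap.comp_assoc, hr, LinearMap.sub_comp, LinearMap.comp_assoc, hgf]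
  simp

end Modules

namespace ModA

variable {X Y Z W : ModA R}

theorem IsIndec.eq_bot_or_eq_bot_of_isCompl (hX : X.IsIndec) {p q : Submodule R X.M}
    (h : IsCompl p q) : p = ⊥ ∨ q = ⊥ := by
  rcases hX.2 _ (Submodule.isIdempotentElem_projection h) with h0 | h1
  · refine Or.inl ((Submodule.eq_bot_iff _).2 fun x hx => ?_)
    simpa [h0] using (Submodule.projection_apply_of_mem_left h hx).symm
  · refine Or.inr ((Submodule.eq_bot_iff _).2 fun x hx => ?_)
    simpa [h1] using Submodule.projection_apply_right h ⟨x, hx⟩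

/-- The rank of a homomorphism is the length of its image. -/
noncomputable def rank (f : X.M →ₗ[R] Y.M) : ℕ := (Y.ofSubmodule (LinearMap.range f)).len

theorem rank_le_len (f : X.M →ₗ[R] Y.M) : rank f ≤ Y.len :=
  len_le_of_injective (X := Y.ofSubmodule _) (Submodule.injective_subtype _)

theorem rank_pos {f : X.M →ₗ[R] Y.M} (hf : f ≠ 0) : 0 < rank f := by
  have : Nontrivial (LinearMap.range f) :=
    Submodule.nontrivial_iff_ne_bot.2 (mt LinearMap.range_eq_bot.1 hf)
  have h : (0 : ℕ∞) < rank f := by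
    rw [rank, coe_len]
    exact Module.length_pos
  exact_mod_cast h

theorem rank_add_len_ker (f : X.M →ₗ[R] Y.M) :
    rank f + (X.ofSubmodule (LinearMap.ker f)).len = X.len := by
  have h := Module.length_eq_add_of_exact (LinearMap.ker f).subtype f.rangeRestrict
    (Submodule.injective_subtype _) f.surjective_rangeRestrict
    (LinearMap.exact_iff.2 (by rw [LinearMap.ker_rangeRestrict, Submodule.range_subtype]))
  have hlen : (rank f + (X.ofSubmodule (LinearMap.ker f)).len : ℕ∞) = X.len := by
    rw [rank, coe_len, coe_len, coe_len, h, add_comm]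
  exact_mod_cast hlen

theorem rank_comp_le_left (f : X.M →ₗ[R] Y.M) (h : Y.M →ₗ[R] Z.M) :
    rank (h.comp f) ≤ rank h :=
  len_le_of_injective (X := Z.ofSubmodule _) (Y := Z.ofSubmodule _)
    (Submodule.inclusion_injective (LinearMap.range_comp_le_range f h))

theorem rank_comp_le_right (f : X.M →ₗ[R] Y.M) (h : Y.M →ₗ[R] Z.M) :
    rank (h.comp f) ≤ rank f := by
  have hker : (X.ofSubmodule (LinearMap.ker f)).len ≤
      (X.ofSubmodule (LinearMap.ker (h.comp f))).len :=
    len_le_of_injective (X := X.ofSubmodule _) (Y := X.ofSubmodule _)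
      (Submodule.inclusion_injective (LinearMap.ker_le_ker_comp f h))
  have hf := rank_add_len_ker f
  have hhf := rank_add_len_ker (h.comp f)
  lia

theorem eq_of_le_of_len_le {p q : Submodule R X.M} (h : p ≤ q)
    (hlen : (X.ofSubmodule q).len ≤ (X.ofSubmodule p).len) : p = q := by
  refine h.eq_of_not_lt fun hlt => ?_
  have := Submodule.height_strictMono hlt
  rw [← Module.length_submodule, ← Module.length_submodule] at this
  have hpq : ((X.ofSubmodule p).len : ℕ∞) < (X.ofSubmodule q).len := by rwa [coe_len, coe_len]
  exact (Nat.cast_lt.1 hpq).not_ge hlen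

theorem isCompl_range_ker_of_rank_le (f : X.M →ₗ[R] Y.M) (h : Y.M →ₗ[R] Z.M)
    (hf : rank f ≤ rank (h.comp f)) (hh : rank h ≤ rank (h.comp f)) :
    IsCompl (LinearMap.range f) (LinearMap.ker h) := by
  have hker : LinearMap.ker f = LinearMap.ker (h.comp f) :=
    eq_of_le_of_len_le (LinearMap.ker_le_ker_comp f h) (by
      have := rank_add_len_ker f
      have := rank_add_len_ker (h.comp f)
      lia)
  have hrange : LinearMap.range (h.comp f) = LinearMap.range h :=
    eq_of_le_of_len_le (LinearMap.range_comp_le_range f h) hh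
  constructor
  · rw [Submodule.disjoint_def]
    rintro _ ⟨x, rfl⟩ hx
    exact (hker.symm ▸ (hx : x ∈ LinearMap.ker (h.comp f)) : x ∈ LinearMap.ker f)
  · rw [Submodule.codisjoint_iff_exists_add_eq]
    intro y
    obtain ⟨x, hx⟩ : h y ∈ LinearMap.range (h.comp f) := hrange ▸ ⟨y, rfl⟩
    exact ⟨f x, y - f x, ⟨x, rfl⟩, by simpa [sub_eq_zero] using hx.symm, by abel⟩

theorem IsIndec.bijective_of_rank_le (hZ : Z.IsIndec) (hW : W.IsIndec) {f : X.M →ₗ[R] Z.M}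
    {g : Z.M →ₗ[R] W.M} {h : W.M →ₗ[R] Y.M} (hne : h.comp (g.comp f) ≠ 0)
    (hf : rank f ≤ rank (h.comp (g.comp f))) (hh : rank h ≤ rank (h.comp (g.comp f))) :
    Function.Bijective g := by
  have hZcompl := isCompl_range_ker_of_rank_le f (h.comp g) hf ((rank_comp_le_left g h).trans hh)
  have hWcompl := isCompl_range_ker_of_rank_le (g.comp f) h ((rank_comp_le_right f g).trans hf) hh
  have hf0 : LinearMap.range f ≠ ⊥ := fun h0 => hne (by rw [LinearMap.range_eq_bot.1 h0]; simp)
  have hgf0 : LinearMap.range (g.comp f) ≠ ⊥ := fun h0 =>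
    hne (by rw [LinearMap.range_eq_bot.1 h0]; simp)
  have hker := (hZ.eq_bot_or_eq_bot_of_isCompl hZcompl).resolve_left hf0
  have hrange := hWcompl.sup_eq_top
  rw [(hW.eq_bot_or_eq_bot_of_isCompl hWcompl).resolve_left hgf0, sup_bot_eq] at hrange
  exact ⟨Function.Injective.of_comp (f := h) (LinearMap.ker_eq_bot.1 hker),
    Function.Surjective.of_comp (g := f) (LinearMap.range_eq_top.1 hrange)⟩

end ModA

/-- `NonisoChain P n f` says that `f` is a composite of `n` nonisomorphisms between indecomposable
modules with property `P`. The empty composite is the identity of such a module. -/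
inductive NonisoChain (P : ModA R → Prop) : ℕ → ∀ {X Y : ModA R}, (X.M →ₗ[R] Y.M) → Prop
  | id {X : ModA R} (hX : X.IsIndec) (pX : P X) :
      NonisoChain P 0 (LinearMap.id : X.M →ₗ[R] X.M)
  | cons {n : ℕ} {X Z Y : ModA R} {f : X.M →ₗ[R] Z.M} {g : Z.M →ₗ[R] Y.M} (hX : X.IsIndec)
      (pX : P X) (hf : ¬Function.Bijective f) (hg : NonisoChain P n g) :
      NonisoChain P (n + 1) (g.comp f)

namespace NonisoChain

variable {P Q : ModA R → Prop} {X Y W : ModA R} {n : ℕ} {f : X.M →ₗ[R] Y.M}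

theorem isIndec_left (h : NonisoChain P n f) : X.IsIndec := by
  cases h <;> assumption

theorem prop_left (h : NonisoChain P n f) : P X := by
  cases h <;> assumption

theorem snoc (h : NonisoChain P n f) (hW : W.IsIndec) (pW : P W) {g : Y.M →ₗ[R] W.M}
    (hg : ¬Function.Bijective g) : NonisoChain P (n + 1) (g.comp f) := by
  induction h with
  | id hX pX => exact cons (g := LinearMap.id) hX pX hg (id hW pW)
  | cons hX pX hf _ ih =>
    rw [← LinearMap.comp_assoc]
    exact cons hX pX hf (ih hg)

theorem exists_eq_comp {a b : ℕ} (h : NonisoChain P (a + b) f) :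
    ∃ (Z : ModA R) (g : X.M →ₗ[R] Z.M) (k : Z.M →ₗ[R] Y.M),
      NonisoChain P a g ∧ NonisoChain P b k ∧ f = k.comp g := by
  induction a generalizing X with
  | zero => exact ⟨X, _, f, id h.isIndec_left h.prop_left, by simpa using h, rfl⟩
  | succ a ih =>
    rw [Nat.succ_add] at h
    cases h with
    | cons hX pX hf hg =>
      obtain ⟨W, g, k, hga, hk, rfl⟩ := ih hg
      exact ⟨W, _, k, cons hX pX hf hga, hk, rfl⟩

theorem mono (h : NonisoChain P n f) (hPQ : ∀ X : ModA R, X.IsIndec → P X → Q X) :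
    NonisoChain Q n f := by
  induction h with
  | id hX pX => exact id hX (hPQ _ hX pX)
  | cons hX pX hf _ ih => exact cons hX (hPQ _ hX pX) hf ih

-- A composite of length `2 ^ (m + 1) - 1` is `h ∘ g ∘ f` with `f`, `h` of length `2 ^ m - 1`; were
-- the rank not to drop, `g` would be bijective.
theorem rank_add_le {b m : ℕ} (hn : n + 1 = 2 ^ m) (h : NonisoChain (fun Z => Z.len ≤ b) n f)
    (hf : f ≠ 0) : ModA.rank f + m ≤ b := by
  induction m generalizing n X Y with
  | zero =>
    obtain rfl : n = 0 := by simpa using hn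
    cases h with
    | id hX pX => exact (ModA.rank_le_len _).trans pX
  | succ m ih =>
    obtain ⟨k, hk⟩ : ∃ k, k + 1 = 2 ^ m := ⟨2 ^ m - 1, Nat.sub_add_cancel Nat.one_le_two_pow⟩
    obtain rfl : n = k + (k + 1) := by rw [pow_succ] at hn; lia
    obtain ⟨Z, f, _, hf', hgh, rfl⟩ := h.exists_eq_comp
    clear h
    cases hgh with
    | @cons _ _ W _ g h hZ pZ hg hh =>
      rw [LinearMap.comp_assoc] at hf ⊢
      have rank_f := ih hk hf' (by rintro rfl; simp at hf)
      have rank_h := ih hk hh (by rintro rfl; simp at hf)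
      have rank_le_f := ModA.rank_comp_le_right f (h.comp g)
      have rank_le_h := ModA.rank_comp_le_left (g.comp f) h
      rw [LinearMap.comp_assoc] at rank_le_f
      by_contra hlt
      exact hg (hZ.bijective_of_rank_le hh.isIndec_left hf (by lia) (by lia))

end NonisoChain

theorem FiniteUpToIso.exists_len_le {P : ModA R → Prop} (hP : FiniteUpToIso P) :
    ∃ b, ∀ X : ModA R, X.IsIndec → P X → X.len ≤ b := by
  obtain ⟨b, hb⟩ := (hP.image (Quotient.lift (fun X : IndecModA R => X.1.len)
    fun _ _ h => ModA.Iso.len_eq h)).bddAbove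
  exact ⟨b, fun X hX pX => hb ⟨_, ⟨⟨X, hX⟩, rfl, pX⟩, rfl⟩⟩

theorem harada_sai {P : ModA R → Prop} (hP : FiniteUpToIso P) :
    ∃ N, ∀ n ≥ N, ∀ (X Y : ModA R) (f : X.M →ₗ[R] Y.M), NonisoChain P n f → f = 0 := by
  obtain ⟨b, hb⟩ := hP.exists_len_le
  have hpow := Nat.sub_add_cancel (Nat.one_le_two_pow (n := b))
  refine ⟨2 ^ b - 1, fun n hn X Y f h => ?_⟩
  obtain ⟨d, rfl⟩ := Nat.exists_eq_add_of_le hn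
  obtain ⟨Z, g, k, hg, -, rfl⟩ := (h.mono hb).exists_eq_comp
  suffices g = 0 by rw [this, LinearMap.comp_zero]
  by_contra hne
  have hrank := hg.rank_add_le hpow hne
  have hpos := ModA.rank_pos hne
  lia

end HaradaSai

/-! ### Predecessors and cycles -/

section Cycles

variable {R : Type u} [Ring R]

namespace ModA

/-- `NonzeroHom X Y`: there is a nonzero homomorphism between the indecomposable modules
`X` and `Y`. -/
def NonzeroHom (X Y : ModA R) : Prop :=
  X.IsIndec ∧ Y.IsIndec ∧ ∃ f : X.M →ₗ[R] Y.M, f ≠ 0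

/-- `NonisoHom X Y`: there is a nonzero nonisomorphism between the indecomposable modules
`X` and `Y`. These are the arrows from which cycles in `ind` are composed. -/
def NonisoHom (X Y : ModA R) : Prop :=
  X.IsIndec ∧ Y.IsIndec ∧ ∃ f : X.M →ₗ[R] Y.M, f ≠ 0 ∧ ¬Function.Bijective f

/-- `X.Precedes Y`: `X` is a predecessor of `Y` in `ind`, that is, they are joined by a path of
nonzero homomorphisms between indecomposable modules. Every module precedes itself. -/
def Precedes : ModA R → ModA R → Prop := Relation.ReflTransGen NonzeroHom

variable {X Y Z : ModA R}

theorem NonisoHom.nonzeroHom (h : NonisoHom X Y) : NonzeroHom X Y :=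
  let ⟨hX, hY, f, hf, _⟩ := h
  ⟨hX, hY, f, hf⟩

theorem Iso.comp_ne_zero {W : ModA R} {e : Y.M ≃ₗ[R] W.M} {f : X.M →ₗ[R] Y.M} (hf : f ≠ 0) :
    e.toLinearMap.comp f ≠ 0 := fun h0 =>
  hf (LinearMap.ext fun x => e.injective (by simpa using LinearMap.congr_fun h0 x))

theorem NonzeroHom.trans_iso (h : NonzeroHom X Y) (e : Y.Iso Z) : NonzeroHom X Z := by
  obtain ⟨hX, hY, f, hf⟩ := h
  exact ⟨hX, hY.of_iso e, e.some.toLinearMap.comp f, Iso.comp_ne_zero hf⟩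

theorem Iso.trans_nonzeroHom (e : X.Iso Y) (h : NonzeroHom Y Z) : NonzeroHom X Z := by
  obtain ⟨hY, hZ, f, hf⟩ := h
  refine ⟨hY.of_iso e.symm, hZ, f.comp e.some.toLinearMap, fun h0 => hf ?_⟩
  exact (LinearMap.cancel_right e.some.surjective).1 (by rw [h0, LinearMap.zero_comp])

theorem NonisoHom.trans_iso (h : NonisoHom X Y) (e : Y.Iso Z) : NonisoHom X Z := by
  obtain ⟨hX, hY, f, hf, hb⟩ := h
  exact ⟨hX, hY.of_iso e, e.some.toLinearMap.comp f, Iso.comp_ne_zero hf,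
    fun hb' => hb ((Function.Bijective.of_comp_iff' e.some.bijective f).1 hb')⟩

theorem Iso.trans_nonisoHom (e : X.Iso Y) (h : NonisoHom Y Z) : NonisoHom X Z := by
  obtain ⟨hY, hZ, f, hf, hb⟩ := h
  refine ⟨hY.of_iso e.symm, hZ, f.comp e.some.toLinearMap, fun h0 => hf ?_,
    fun hb' => hb ((Function.Bijective.of_comp_iff f e.some.bijective).1 hb')⟩
  exact (LinearMap.cancel_right e.some.surjective).1 (by rw [h0, LinearMap.zero_comp])

namespace Precedes

theorem refl (X : ModA R) : X.Precedes X := Relation.ReflTransGen.refl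

theorem trans (h : X.Precedes Y) (h' : Y.Precedes Z) : X.Precedes Z :=
  Relation.ReflTransGen.trans h h'

theorem of_hom (hX : X.IsIndec) (hY : Y.IsIndec) {f : X.M →ₗ[R] Y.M} (hf : f ≠ 0) :
    X.Precedes Y := Relation.ReflTransGen.single ⟨hX, hY, f, hf⟩

theorem of_iso (hX : X.IsIndec) (h : X.Iso Y) : X.Precedes Y :=
  of_hom hX (hX.of_iso h) (f := h.some.toLinearMap) (hX.ne_zero_of_bijective h.some.bijective)

theorem isIndec_left (h : X.Precedes Y) (hY : Y.IsIndec) : X.IsIndec := by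
  rcases Relation.ReflTransGen.cases_head h with rfl | ⟨Z, h, -⟩
  exacts [hY, h.1]

theorem isIndec_right (h : X.Precedes Y) (hX : X.IsIndec) : Y.IsIndec := by
  rcases Relation.ReflTransGen.cases_tail h with rfl | ⟨Z, -, h⟩
  exacts [hX, h.2.1]

end Precedes

theorem transGen_trans_iso (h : Relation.TransGen NonisoHom X Y) (e : Y.Iso Z) :
    Relation.TransGen NonisoHom X Z := by
  cases h with
  | single h => exact .single (h.trans_iso e)
  | tail h h' => exact .tail h (h'.trans_iso e)

theorem Iso.trans_transGen (e : X.Iso Y) (h : Relation.TransGen NonisoHom Y Z) :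
    Relation.TransGen NonisoHom X Z := by
  obtain ⟨W, hYW, hWZ⟩ := Relation.TransGen.head'_iff.1 h
  exact .head' (e.trans_nonisoHom hYW) hWZ

theorem Precedes.iso_or_transGen (h : X.Precedes Y) :
    X.Iso Y ∨ Relation.TransGen NonisoHom X Y := by
  induction h with
  | refl => exact .inl (Iso.refl X)
  | @tail Y Z _ h ih =>
    obtain ⟨hY, hZ, f, hf⟩ := h
    by_cases hb : Function.Bijective f
    · exact ih.imp (·.trans (.of_bijective hb)) (transGen_trans_iso · (.of_bijective hb))
    · have hYZ : NonisoHom Y Z := ⟨hY, hZ, f, hf, hb⟩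
      exact .inr (ih.elim (fun e => .single (e.trans_nonisoHom hYZ)) (·.tail hYZ))

theorem Precedes.trans_transGen (h : X.Precedes Y) (h' : Relation.TransGen NonisoHom Y Z) :
    Relation.TransGen NonisoHom X Z :=
  h.iso_or_transGen.elim (·.trans_transGen h') (·.trans h')

theorem exists_seq_of_reflTransGen {r : ModA R → ModA R → Prop} (h : Relation.ReflTransGen r X Y) :
    ∃ (n : ℕ) (c : ℕ → ModA R), c 0 = X ∧ c n = Y ∧ ∀ i < n, r (c i) (c (i + 1)) := by
  induction h using Relation.ReflTransGen.head_induction_on with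
  | refl => exact ⟨0, fun _ => Y, rfl, rfl, by simp⟩
  | @head X Z h _ ih =>
    obtain ⟨n, c, rfl, hn, hc⟩ := ih
    refine ⟨n + 1, fun k => Nat.casesOn k X c, rfl, hn, ?_⟩
    rintro (_ | i) hi
    exacts [h, hc i (by lia)]

end ModA

open ModA

theorem exists_modCycle {X Z : ModA R} (hX : X.IsIndec) {f : X.M →ₗ[R] Z.M} (hf : f ≠ 0)
    (hb : ¬Function.Bijective f) (h : Relation.ReflTransGen NonisoHom Z X) :
    ∃ C : ModCycle R, C.Passes X ∧ (InRadInf f → ¬C.IsFiniteCycle) := by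
  obtain ⟨n, c, rfl, hn, hc⟩ := exists_seq_of_reflTransGen h
  let obj : ℕ → ModA R
    | 0 => X
    | i + 1 => c i
  have hom (i : ℕ) (hi : i < n + 1) : ∃ g : (obj i).M →ₗ[R] (obj (i + 1)).M,
      g ≠ 0 ∧ ¬Function.Bijective g ∧
        (i = 0 → InRadInf (Y := c 0) f → InRadInf (X := obj i) (Y := obj (i + 1)) g) := by
    cases i with
    | zero => exact ⟨f, hf, hb, fun _ => id⟩
    | succ i =>
      obtain ⟨_, _, g, hg, hg'⟩ := hc i (by lia)
      exact ⟨g, hg, hg', fun h => by lia⟩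
  have indec (i : ℕ) (hi : i < n + 1 + 1) : (obj i).IsIndec := by
    rcases i with _ | i
    · exact hX
    · rcases (Nat.lt_succ_iff.1 (Nat.lt_of_succ_lt_succ hi)).lt_or_eq with hi | rfl
      exacts [(hc i hi).1, show (c i).IsIndec from hn ▸ hX]
  choose g hg0 hgb hgr using hom
  exact ⟨⟨n + 1, n.succ_pos, fun i => obj i, fun i => indec i i.2, hn, fun i => g i i.2,
    fun i => hg0 i i.2, fun i => hgb i i.2⟩, ⟨0, Iso.refl X⟩,
    fun hr hfin => hfin 0 (hgr 0 n.succ_pos rfl hr)⟩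

theorem ModCycle.Passes.transGen {C : ModCycle R} {X : ModA R} (hX : C.Passes X) :
    Relation.TransGen NonisoHom X X := by
  obtain ⟨i, e⟩ := hX
  have step (k : Fin C.len) : NonisoHom (C.obj k.castSucc) (C.obj k.succ) :=
    ⟨C.obj_indec _, C.obj_indec _, C.hom k, C.hom_ne_zero k, C.hom_not_iso k⟩
  have from_zero (k : Fin (C.len + 1)) : Relation.ReflTransGen NonisoHom (C.obj 0) (C.obj k) :=
    Fin.induction .refl (fun k ih => ih.tail (step k)) k
  have to_zero (k : Fin (C.len + 1)) : Relation.ReflTransGen NonisoHom (C.obj k) (C.obj 0) :=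
    Fin.reverseInduction (C.closed ▸ .refl) (fun k ih => ih.head (step k)) k
  have loop : Relation.TransGen NonisoHom (C.obj 0) (C.obj 0) :=
    .head' (step ⟨0, C.len_pos⟩) (to_zero _)
  exact e.symm.trans_transGen
    (transGen_trans_iso ((loop.trans_right (to_zero i)).trans_left (from_zero i)) e)

theorem not_isDirectingModule_iff {X : ModA R} :
    ¬IsDirectingModule X ↔ Relation.TransGen NonisoHom X X := by
  rw [IsDirectingModule, not_not]
  refine ⟨fun ⟨C, hC⟩ => hC.transGen, fun h => ?_⟩
  obtain ⟨Z, ⟨hX, _, f, hf, hb⟩, hZX⟩ := Relation.TransGen.head'_iff.1 h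
  obtain ⟨C, hC, -⟩ := exists_modCycle hX hf hb hZX
  exact ⟨C, hC⟩

/-- All cycles in the category of indecomposable `R`-modules are finite. The algebra `B` is
cycle-finite when this holds for `R = Bᵐᵒᵖ`. -/
def IsCycleFinite (R : Type u) [Ring R] : Prop := ∀ c : ModCycle R, c.IsFiniteCycle

theorem IsCycleFinite.not_precedes (hcf : IsCycleFinite R) {X Y : ModA R} (hX : X.IsIndec)
    {f : X.M →ₗ[R] Y.M} (hf : f ≠ 0) (hf' : InRadInf f) : ¬Y.Precedes X := by
  have no_return {Z : ModA R} {g : X.M →ₗ[R] Z.M} (hg : g ≠ 0) (hg' : InRadInf g) :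
      ¬Relation.ReflTransGen NonisoHom Z X := fun h => by
    obtain ⟨C, -, hC⟩ := exists_modCycle hX hg (hg'.not_bijective hX) h
    exact hC hg' (hcf C)
  intro h
  rcases h.iso_or_transGen with ⟨⟨e⟩⟩ | h
  · exact no_return (Iso.comp_ne_zero hf) (hf'.comp_left e.toLinearMap) .refl
  · exact no_return hf hf' h.to_reflTransGen

/-! ### Directing modules are rigid and `τ`-rigid -/

theorem exists_nonisoHom_of_not_split {N E X : ModA R} (hN : N.IsIndec) (hX : X.IsIndec)
    {f : N.M →ₗ[R] E.M} {g : E.M →ₗ[R] X.M} (hg : Function.Surjective g)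
    (hfg : LinearMap.range f = LinearMap.ker g) (hns : ¬SplitEpiMap g) :
    ∃ Z, NonisoHom N Z ∧ NonisoHom Z X := by
  classical
  let d := E.decomposition
  obtain ⟨j, hgj, hfj⟩ : ∃ j, g.comp (d.incl j) ≠ 0 ∧ (d.proj j).comp f ≠ 0 := by
    by_contra! hzero
    let e : E.M →ₗ[R] E.M :=
      ∑ j, if g.comp (d.incl j) = 0 then 0 else (d.incl j).comp (d.proj j)
    have hge : g.comp e = g := by
      ext x
      conv_rhs => rw [← d.sum_incl_proj x]
      simp only [e, LinearMap.comp_apply, LinearMap.sum_apply, map_sum]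
      refine Finset.sum_congr rfl fun j _ => ?_
      split_ifs with hj
      · rw [LinearMap.zero_apply, map_zero, ← LinearMap.comp_apply, hj, LinearMap.zero_apply]
      · rfl
    have hef : e.comp f = 0 := by
      ext x
      simp only [e, LinearMap.comp_apply, LinearMap.sum_apply]
      refine Finset.sum_eq_zero fun j _ => ?_
      split_ifs with hj
      · rfl
      · rw [LinearMap.comp_apply, ← LinearMap.comp_apply (d.proj j), hzero j hj,
          LinearMap.zero_apply, map_zero]
    obtain ⟨s, hs⟩ := exists_comp_eq_of_ker_le hg (hfg ▸ LinearMap.range_le_ker_iff.2 hef)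
    refine hns ⟨s, (LinearMap.cancel_right hg).1 ?_⟩
    rw [LinearMap.comp_assoc, hs, hge, LinearMap.id_comp]
  refine ⟨d.summand j, ⟨hN, d.indec j, _, hfj, fun hb => ?_⟩, d.indec j, hX, _, hgj, fun hb => ?_⟩
  · obtain ⟨r, hr, -⟩ := exists_inverse_of_bijective hb
    exact hns (exists_section_of_retraction hg hfg (r := r.comp (d.proj j))
      (by rw [LinearMap.comp_assoc, hr]))
  · obtain ⟨r, -, hr⟩ := exists_inverse_of_bijective hb
    exact hns ⟨(d.incl j).comp r, by rw [← LinearMap.comp_assoc, hr]⟩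

theorem IsDirectingModule.isRigid {M : ModA R} (hM : M.IsIndec) (h : IsDirectingModule M) :
    IsRigid M := by
  intro E _ _ f g _ hg hfg
  have hE : IsFiniteLength R E := isFiniteLength_iff_isNoetherian_isArtinian.2
    ⟨isNoetherian_of_range_eq_ker f g hfg, isArtinian_of_range_eq_ker f g hfg⟩
  by_contra hns
  obtain ⟨Z, hMZ, hZM⟩ := exists_nonisoHom_of_not_split (E := ⟨E, hE⟩) hM hM hg hfg hns
  exact not_isDirectingModule_iff.2 (.head hMZ (.single hZM)) h

theorem AlmostSplitSeq.transGen_nonisoHom (s : AlmostSplitSeq R) :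
    Relation.TransGen NonisoHom s.l s.r :=
  let ⟨_, hl, hr⟩ := exists_nonisoHom_of_not_split s.l_indec s.r_indec s.surj s.exact s.not_split
  .head hl (.single hr)

theorem IsDirectingModule.isTauRigid {M : ModA R} (hM : M.IsIndec) (h : IsDirectingModule M) :
    IsTauRigid M := by
  rintro N ⟨s, hl, hr⟩ f
  by_contra hf
  have hN := s.l_indec.of_iso hl
  have hback : M.Precedes s.l := (Precedes.of_hom hM hN hf).trans (.of_iso hN hl.symm)
  exact not_isDirectingModule_iff.2
    (hback.trans_transGen (transGen_trans_iso s.transGen_nonisoHom hr)) h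

end Cycles

/-! ### Almost split maps -/

section AlmostSplit

variable {R : Type u} [Ring R]

/-- Left almost split maps: they do not split and every map from the same module which is not a
split monomorphism factors through them. -/
def IsLeftAlmostSplit {X Y : ModA R} (f : X.M →ₗ[R] Y.M) : Prop :=
  ¬SplitMonoMap f ∧ ∀ (Z : ModA R) (h : X.M →ₗ[R] Z.M), ¬SplitMonoMap h →
    ∃ h' : Y.M →ₗ[R] Z.M, h'.comp f = h

/-- Minimal left almost split maps: left almost split maps that are left minimal. -/
def IsMinLeftAlmostSplit {X Y : ModA R} (f : X.M →ₗ[R] Y.M) : Prop :=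
  IsLeftAlmostSplit f ∧ ∀ φ : Y.M →ₗ[R] Y.M, φ.comp f = f → Function.Bijective φ

/-- The consequences of being an artin algebra on which the argument rests: the regular module has
finite length, left almost split maps exist, and the powers of the radical stabilise on each pair
of modules. -/
class ArtinLike (R : Type u) [Ring R] : Prop where
  isFiniteLength : IsFiniteLength R R
  exists_isLeftAlmostSplit : ∀ X : ModA R, X.IsIndec →
    ∃ (Y : ModA R) (f : X.M →ₗ[R] Y.M), IsLeftAlmostSplit f
  radPow_stabilises : ∀ X Y : ModA R, ∃ N, ∀ n ≥ N, radPow R n X Y = radPow R N X Y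

/-- `X` is injective relative to the modules of finite length: every monomorphism from `X` into
such a module splits. -/
def ModA.IsRelInjective (X : ModA R) : Prop :=
  ∀ (Y : ModA R) (f : X.M →ₗ[R] Y.M), Function.Injective f → SplitMonoMap f

variable {U E C X Y Z : ModA R}

theorem splitMonoMap_comp_equiv_iff {f : Y.M →ₗ[R] Z.M} (e : X.M ≃ₗ[R] Y.M) :
    SplitMonoMap (X := X) (f.comp e.toLinearMap) ↔ SplitMonoMap f := by
  constructor
  · rintro ⟨r, hr⟩
    refine ⟨e.toLinearMap.comp r, LinearMap.ext fun y => ?_⟩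
    simpa using congrArg e (LinearMap.congr_fun hr (e.symm y))
  · rintro ⟨r, hr⟩
    refine ⟨e.symm.toLinearMap.comp r, LinearMap.ext fun x => ?_⟩
    simpa using congrArg e.symm (LinearMap.congr_fun hr (e x))

theorem splitMonoMap_equiv_comp_iff {f : X.M →ₗ[R] Y.M} (e : Y.M ≃ₗ[R] Z.M) :
    SplitMonoMap (Y := Z) (e.toLinearMap.comp f) ↔ SplitMonoMap f := by
  constructor
  · rintro ⟨r, hr⟩
    exact ⟨r.comp e.toLinearMap, hr⟩
  · rintro ⟨r, hr⟩
    refine ⟨r.comp e.symm.toLinearMap, LinearMap.ext fun x => ?_⟩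
    simpa using LinearMap.congr_fun hr x

theorem splitEpiMap_comp_equiv_iff {f : Y.M →ₗ[R] Z.M} (e : X.M ≃ₗ[R] Y.M) :
    SplitEpiMap (X := X) (f.comp e.toLinearMap) ↔ SplitEpiMap f := by
  constructor
  · rintro ⟨s, hs⟩
    exact ⟨e.toLinearMap.comp s, hs⟩
  · rintro ⟨s, hs⟩
    refine ⟨e.symm.toLinearMap.comp s, LinearMap.ext fun x => ?_⟩
    simpa using LinearMap.congr_fun hs x

theorem splitEpiMap_equiv_comp_iff {f : X.M →ₗ[R] Y.M} (e : Y.M ≃ₗ[R] Z.M) :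
    SplitEpiMap (Y := Z) (e.toLinearMap.comp f) ↔ SplitEpiMap f := by
  constructor
  · rintro ⟨s, hs⟩
    refine ⟨s.comp e.toLinearMap, LinearMap.ext fun y => ?_⟩
    simpa using congrArg e.symm (LinearMap.congr_fun hs (e y))
  · rintro ⟨s, hs⟩
    refine ⟨s.comp e.symm.toLinearMap, LinearMap.ext fun y => ?_⟩
    simpa using congrArg e (LinearMap.congr_fun hs (e.symm y))

/-- Take a left almost split map whose target has minimal length. -/
theorem exists_isMinLeftAlmostSplit [ArtinLike R] (hU : U.IsIndec) :
    ∃ (E : ModA R) (lam : U.M →ₗ[R] E.M), IsMinLeftAlmostSplit lam := by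
  classical
  have hex : ∃ (n : ℕ) (E : ModA R) (lam : U.M →ₗ[R] E.M), E.len = n ∧ IsLeftAlmostSplit lam :=
    let ⟨E, lam, h⟩ := ArtinLike.exists_isLeftAlmostSplit U hU
    ⟨E.len, E, lam, rfl, h⟩
  obtain ⟨E, lam, hn, hlam⟩ := Nat.find_spec hex
  refine ⟨E, lam, hlam, fun φ hφ => ?_⟩
  suffices htop : LinearMap.range φ = ⊤ from
    IsNoetherian.bijective_of_surjective_endomorphism φ (LinearMap.range_eq_top.1 htop)
  by_contra hne
  refine Nat.find_min hex (hn ▸ ModA.len_ofSubmodule_lt hne)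
    ⟨E.ofSubmodule (LinearMap.range φ), φ.rangeRestrict.comp lam, rfl,
      fun ⟨r, hr⟩ => hlam.1 ⟨r.comp φ.rangeRestrict, hr⟩, fun Z h hh => ?_⟩
  obtain ⟨h', rfl⟩ := hlam.2 Z h hh
  exact ⟨h'.comp (LinearMap.range φ).subtype, congrArg h'.comp hφ⟩

theorem IsLeftAlmostSplit.injective {lam : U.M →ₗ[R] E.M} (hlam : IsLeftAlmostSplit lam)
    (hU : ¬U.IsRelInjective) : Function.Injective lam := by
  rw [ModA.IsRelInjective] at hU
  push Not at hU
  obtain ⟨Y, f, hf, hns⟩ := hU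
  obtain ⟨f', rfl⟩ := hlam.2 Y f hns
  exact Function.Injective.of_comp (f := f') hf

theorem IsMinLeftAlmostSplit.surjective {lam : U.M →ₗ[R] E.M} (hlam : IsMinLeftAlmostSplit lam)
    (hU : U.IsRelInjective) : Function.Surjective lam := by
  have hns : ¬SplitMonoMap (Y := E.ofSubmodule (LinearMap.range lam)) lam.rangeRestrict := by
    rintro ⟨r, hr⟩
    have hinj : Function.Injective lam.rangeRestrict :=
      Function.LeftInverse.injective (g := r) (LinearMap.congr_fun hr)
    exact hlam.1.1 (hU E lam ((LinearMap.injective_rangeRestrict_iff lam).1 hinj))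
  obtain ⟨t, ht⟩ := hlam.1.2 (E.ofSubmodule (LinearMap.range lam)) _ hns
  have hb := hlam.2 ((LinearMap.range lam).subtype.comp t) (by
    rw [LinearMap.comp_assoc, ht]; rfl)
  intro y
  obtain ⟨z, rfl⟩ := hb.2 y
  exact (t z).2

theorem exists_pullback {lam : U.M →ₗ[R] E.M} {π : E.M →ₗ[R] C.M} (hπ : Function.Surjective π)
    (hex : LinearMap.range lam = LinearMap.ker π) (h : Z.M →ₗ[R] C.M) :
    ∃ (P : ModA R) (ι : U.M →ₗ[R] P.M) (a : P.M →ₗ[R] E.M) (b : P.M →ₗ[R] Z.M),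
      Function.Surjective b ∧ LinearMap.range ι = LinearMap.ker b ∧ a.comp ι = lam ∧
        π.comp a = h.comp b := by
  let a := LinearMap.fst R E.M Z.M
  let b := LinearMap.snd R E.M Z.M
  have hfin : IsFiniteLength R (E.M × Z.M) :=
    isFiniteLength_iff_isNoetherian_isArtinian.2 ⟨inferInstance, inferInstance⟩
  let P : ModA R :=
    ModA.ofSubmodule ⟨E.M × Z.M, hfin⟩ (LinearMap.eqLocus (π.comp a) (h.comp b))
  have hlam (u : U.M) : π (lam u) = 0 := LinearMap.mem_ker.1 (hex ▸ LinearMap.mem_range_self lam u)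
  refine ⟨P, ((LinearMap.inl R E.M Z.M).comp lam).codRestrict _ fun u => ?_,
    a.comp (Submodule.subtype _), b.comp (Submodule.subtype _), fun z => ?_, ?_, rfl,
    LinearMap.ext fun x => x.2⟩
  · simp [a, b, hlam]
  · obtain ⟨e, he⟩ := hπ (h z)
    exact ⟨⟨(e, z), he⟩, rfl⟩
  · refine le_antisymm (LinearMap.range_le_ker_iff.2 rfl) ?_
    rintro ⟨⟨e, z⟩, hx⟩ (rfl : z = 0)
    obtain ⟨u, rfl⟩ : e ∈ LinearMap.range lam := by simpa [a, b, hex] using hx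
    exact ⟨u, rfl⟩

theorem IsMinLeftAlmostSplit.exists_lift {lam : U.M →ₗ[R] E.M} (hlam : IsMinLeftAlmostSplit lam)
    {π : E.M →ₗ[R] C.M} (hπ : Function.Surjective π) (hex : LinearMap.range lam = LinearMap.ker π)
    {h : Z.M →ₗ[R] C.M} (hh : ¬SplitEpiMap h) : ∃ h' : Z.M →ₗ[R] E.M, π.comp h' = h := by
  obtain ⟨P, ι, a, b, hb, hιb, haι, hsq⟩ := exists_pullback hπ hex h
  by_cases hι : SplitMonoMap ι
  · obtain ⟨r, hr⟩ := hι
    obtain ⟨s, hs⟩ := exists_section_of_retraction hb hιb hr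
    exact ⟨a.comp s, by rw [← LinearMap.comp_assoc, hsq, LinearMap.comp_assoc, hs,
      LinearMap.comp_id]⟩
  · -- otherwise `ι` factors through `lam`, and minimality forces `h` to split
    obtain ⟨t, ht⟩ := hlam.1.2 P ι hι
    have hat : Function.Bijective (a.comp t) :=
      hlam.2 (a.comp t) (by rw [LinearMap.comp_assoc, ht, haι])
    obtain ⟨q, hq⟩ := exists_comp_eq_of_ker_le hπ (h := b.comp t) (by
      rw [← hex, LinearMap.range_le_ker_iff, LinearMap.comp_assoc, ht,
        ← LinearMap.range_le_ker_iff, hιb])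
    have hsurj : Function.Surjective (h.comp q) := by
      refine Function.Surjective.of_comp (g := π) ?_
      rw [← LinearMap.coe_comp, LinearMap.comp_assoc, hq, ← LinearMap.comp_assoc, ← hsq,
        LinearMap.comp_assoc, LinearMap.coe_comp]
      exact hπ.comp hat.2
    obtain ⟨v, -, hv⟩ := exists_inverse_of_bijective
      (IsNoetherian.bijective_of_surjective_endomorphism (h.comp q) hsurj)
    exact absurd ⟨q.comp v, by rw [← LinearMap.comp_assoc, hv]⟩ hh

theorem IsMinLeftAlmostSplit.isIndec_coker {lam : U.M →ₗ[R] E.M} (hlam : IsMinLeftAlmostSplit lam)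
    {π : E.M →ₗ[R] C.M} (hπ : Function.Surjective π) (hex : LinearMap.range lam = LinearMap.ker π)
    (hns : ¬SplitEpiMap π) : C.IsIndec := by
  have eq_one_of_splitEpiMap (e : Module.End R C.M) (he : e * e = e) :
      SplitEpiMap (X := C) (Y := C) e → e = 1 := fun ⟨s, hs⟩ =>
    calc e = e * (e * s) := by rw [show e * s = 1 from hs, mul_one]
      _ = 1 := by rw [← mul_assoc, he]; exact hs
  refine ⟨not_subsingleton_iff_nontrivial.1 fun _ => hns ⟨0, LinearMap.ext fun x =>
    Subsingleton.elim _ _⟩, fun e he => or_iff_not_imp_right.2 fun he1 => ?_⟩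
  by_contra he0
  have hcompl : (1 - e) * (1 - e) = 1 - e := (IsIdempotentElem.one_sub he :)
  obtain ⟨a, ha⟩ := hlam.exists_lift hπ hex (mt (eq_one_of_splitEpiMap e he) he1)
  obtain ⟨b, hb⟩ := hlam.exists_lift hπ hex (mt (eq_one_of_splitEpiMap _ hcompl) (by simpa))
  exact hns ⟨a + b, by rw [LinearMap.comp_add, ha, hb]; exact add_sub_cancel e 1⟩

theorem AlmostSplitSeq.not_splitMonoMap (s : AlmostSplitSeq R) : ¬SplitMonoMap s.f :=
  fun ⟨_, hr⟩ => s.not_split (exists_section_of_retraction s.surj s.exact hr)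

theorem AlmostSplitSeq.isLeftAlmostSplit (s : AlmostSplitSeq R) : IsLeftAlmostSplit s.f :=
  ⟨s.not_splitMonoMap, s.left_almost⟩

/-- The almost split sequence starting at a module that is not injective. -/
def IsMinLeftAlmostSplit.almostSplitSeq {lam : U.M →ₗ[R] E.M} (hlam : IsMinLeftAlmostSplit lam)
    (hU : U.IsIndec) (hinj : ¬U.IsRelInjective) : AlmostSplitSeq R :=
  have hlam_inj := hlam.1.injective hinj
  have hπ := (LinearMap.range lam).mkQ_surjective
  have hex : LinearMap.range lam = LinearMap.ker (LinearMap.range lam).mkQ :=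
    (Submodule.ker_mkQ _).symm
  have hns : ¬SplitEpiMap (Y := E.ofQuotient (LinearMap.range lam)) (LinearMap.range lam).mkQ :=
    fun ⟨_, hs⟩ => hlam.1.1 (exists_retraction_of_section hlam_inj hex hs)
  { l := U
    m := E
    r := E.ofQuotient (LinearMap.range lam)
    f := lam
    g := (LinearMap.range lam).mkQ
    inj := hlam_inj
    surj := hπ
    exact := hex
    not_split := hns
    l_indec := hU
    r_indec := hlam.isIndec_coker hπ hex hns
    right_almost := fun _ _ hh => hlam.exists_lift hπ hex hh
    left_almost := hlam.1.2 }

namespace AlmostSplitSeq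

variable (s s' : AlmostSplitSeq R)

theorem comp_eq_zero : s.g.comp s.f = 0 := LinearMap.range_le_ker_iff.1 s.exact.le

theorem not_projective : ¬Module.Projective R s.r.M := fun _ =>
  s.not_split (Module.projective_lifting_property s.g LinearMap.id s.surj)

theorem exists_comp_f_eq {h : Z.M →ₗ[R] s.m.M} (h0 : s.g.comp h = 0) :
    ∃ w : Z.M →ₗ[R] s.l.M, s.f.comp w = h :=
  exists_comp_eq_of_range_le s.inj (s.exact ▸ LinearMap.range_le_ker_iff.2 h0)

theorem exists_comp_g_eq {h : s.m.M →ₗ[R] Z.M} (h0 : h.comp s.f = 0) :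
    ∃ w : s.r.M →ₗ[R] Z.M, w.comp s.g = h :=
  exists_comp_eq_of_ker_le s.surj (s.exact ▸ LinearMap.range_le_ker_iff.2 h0)

theorem bijective_left {β : s.l.M →ₗ[R] s.l.M} {b : s.m.M →ₗ[R] s.m.M} (hg : s.g.comp b = s.g)
    (hβ : s.f.comp β = b.comp s.f) : Function.Bijective β := by
  obtain ⟨w, hw⟩ := s.exists_comp_f_eq (h := LinearMap.id - b)
    (by rw [LinearMap.comp_sub, hg, LinearMap.comp_id, sub_self])
  refine (s.l_indec.bijective_or_of_add_eq_one (a := β) (b := w.comp s.f) ?_).resolve_right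
    fun hbij => ?_
  · refine (LinearMap.cancel_left s.inj).1 ?_
    rw [LinearMap.comp_add, ← LinearMap.comp_assoc, hw, hβ, LinearMap.sub_comp, add_sub_cancel]
    rfl
  · obtain ⟨r, hr, -⟩ := exists_inverse_of_bijective hbij
    exact s.not_splitMonoMap ⟨r.comp w, by rw [LinearMap.comp_assoc, hr]⟩

theorem bijective_right {β : s.r.M →ₗ[R] s.r.M} {b : s.m.M →ₗ[R] s.m.M} (hf : b.comp s.f = s.f)
    (hβ : β.comp s.g = s.g.comp b) : Function.Bijective β := by
  obtain ⟨w, hw⟩ := s.exists_comp_g_eq (h := LinearMap.id - b)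
    (by rw [LinearMap.sub_comp, hf, LinearMap.id_comp, sub_self])
  refine (s.r_indec.bijective_or_of_add_eq_one (a := β) (b := s.g.comp w) ?_).resolve_right
    fun hbij => ?_
  · refine (LinearMap.cancel_right s.surj).1 ?_
    rw [LinearMap.add_comp, LinearMap.comp_assoc, hw, hβ, LinearMap.comp_sub, add_sub_cancel]
    rfl
  · obtain ⟨r, -, hr⟩ := exists_inverse_of_bijective hbij
    exact s.not_split ⟨w.comp r, by rw [← LinearMap.comp_assoc, hr]⟩

variable {s s'}

theorem exists_map_of_right (e : s.r.M ≃ₗ[R] s'.r.M) :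
    ∃ (a : s.m.M →ₗ[R] s'.m.M) (α : s.l.M →ₗ[R] s'.l.M),
      s'.g.comp a = e.toLinearMap.comp s.g ∧ s'.f.comp α = a.comp s.f := by
  obtain ⟨a, ha⟩ := s'.right_almost s.m (e.toLinearMap.comp s.g)
    (mt (splitEpiMap_equiv_comp_iff e).1 s.not_split)
  obtain ⟨α, hα⟩ := s'.exists_comp_f_eq (h := a.comp s.f)
    (by rw [← LinearMap.comp_assoc, ha, LinearMap.comp_assoc, s.comp_eq_zero, LinearMap.comp_zero])
  exact ⟨a, α, ha, hα⟩

theorem exists_map_of_left (e : s.l.M ≃ₗ[R] s'.l.M) :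
    ∃ (a : s.m.M →ₗ[R] s'.m.M) (α : s.r.M →ₗ[R] s'.r.M),
      a.comp s.f = s'.f.comp e.toLinearMap ∧ α.comp s.g = s'.g.comp a := by
  obtain ⟨a, ha⟩ := s.left_almost s'.m (s'.f.comp e.toLinearMap)
    (mt (splitMonoMap_comp_equiv_iff e).1 s'.not_splitMonoMap)
  obtain ⟨α, hα⟩ := s.exists_comp_g_eq (h := s'.g.comp a)
    (by rw [LinearMap.comp_assoc, ha, ← LinearMap.comp_assoc, s'.comp_eq_zero,
      LinearMap.zero_comp])
  exact ⟨a, α, ha, hα⟩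

theorem left_iso (h : s.r.Iso s'.r) : s.l.Iso s'.l := by
  obtain ⟨e⟩ := h
  obtain ⟨a, α, ha, hα⟩ := exists_map_of_right e
  obtain ⟨b, β, hb, hβ⟩ := exists_map_of_right e.symm
  have hβα : Function.Bijective (β.comp α) := s.bijective_left (b := b.comp a)
    (by rw [← LinearMap.comp_assoc, hb, LinearMap.comp_assoc, ha, ← LinearMap.comp_assoc,
      e.symm_comp, LinearMap.id_comp])
    (by rw [← LinearMap.comp_assoc, hβ, LinearMap.comp_assoc, hα, LinearMap.comp_assoc])
  exact .of_bijective (s.l_indec.bijective_of_bijective_comp s'.l_indec hβα).1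

theorem right_iso (h : s.l.Iso s'.l) : s.r.Iso s'.r := by
  obtain ⟨e⟩ := h
  obtain ⟨a, α, ha, hα⟩ := exists_map_of_left e
  obtain ⟨b, β, hb, hβ⟩ := exists_map_of_left e.symm
  have hβα : Function.Bijective (β.comp α) := s.bijective_right (b := b.comp a)
    (by rw [LinearMap.comp_assoc, ha, ← LinearMap.comp_assoc, hb, LinearMap.comp_assoc,
      e.symm_comp, LinearMap.comp_id])
    (by rw [LinearMap.comp_assoc, hα, ← LinearMap.comp_assoc, hβ, LinearMap.comp_assoc])
  exact .of_bijective (s.r_indec.bijective_of_bijective_comp s'.r_indec hβα).1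

end AlmostSplitSeq

namespace IsTauOf

variable {U U' C C' : ModA R}

theorem congr (h : IsTauOf U C) (hU : U.Iso U') (hC : C.Iso C') : IsTauOf U' C' :=
  let ⟨s, hl, hr⟩ := h
  ⟨s, hl.trans hU, hr.trans hC⟩

theorem left_iso (h : IsTauOf U C) (h' : IsTauOf U' C') (hC : C.Iso C') : U.Iso U' := by
  obtain ⟨s, hl, hr⟩ := h
  obtain ⟨s', hl', hr'⟩ := h'
  exact (hl.symm.trans (s.left_iso ((hr.trans hC).trans hr'.symm))).trans hl'

theorem right_iso (h : IsTauOf U C) (h' : IsTauOf U' C') (hU : U.Iso U') : C.Iso C' := by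
  obtain ⟨s, hl, hr⟩ := h
  obtain ⟨s', hl', hr'⟩ := h'
  exact (hr.symm.trans (s.right_iso ((hl.trans hU).trans hl'.symm))).trans hr'

end IsTauOf

theorem exists_isTauOf [ArtinLike R] (hU : U.IsIndec) (hinj : ¬U.IsRelInjective) :
    ∃ C, IsTauOf U C := by
  obtain ⟨E, lam, hlam⟩ := exists_isMinLeftAlmostSplit hU
  exact ⟨_, hlam.almostSplitSeq hU hinj, .refl _, .refl _⟩

/-! ### Irreducible maps -/

theorem IsIrred.equiv_comp {f : X.M →ₗ[R] Y.M} (hf : IsIrred f) (e : Y.M ≃ₗ[R] Z.M) :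
    IsIrred (X := X) (Y := Z) (e.toLinearMap.comp f) := by
  refine ⟨mt (splitMonoMap_equiv_comp_iff e).1 hf.1, mt (splitEpiMap_equiv_comp_iff e).1 hf.2.1,
    fun W g h hgh => ?_⟩
  rw [← splitEpiMap_equiv_comp_iff e.symm]
  refine hf.2.2 W g _ ?_
  rw [LinearMap.comp_assoc, hgh, ← LinearMap.comp_assoc, e.symm_comp, LinearMap.id_comp]

theorem IsIrred.comp_equiv {f : Y.M →ₗ[R] Z.M} (hf : IsIrred f) (e : X.M ≃ₗ[R] Y.M) :
    IsIrred (X := X) (Y := Z) (f.comp e.toLinearMap) := by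
  refine ⟨mt (splitMonoMap_comp_equiv_iff e).1 hf.1, mt (splitEpiMap_comp_equiv_iff e).1 hf.2.1,
    fun W g h hgh => ?_⟩
  rw [← splitMonoMap_comp_equiv_iff e.symm]
  refine hf.2.2 W _ h ?_
  rw [← LinearMap.comp_assoc, hgh, LinearMap.comp_assoc, e.comp_symm, LinearMap.comp_id]

theorem IsIrred.not_bijective {f : X.M →ₗ[R] Y.M} (hf : IsIrred f) : ¬Function.Bijective f :=
  fun h => hf.1 (.of_bijective h)

/-- There is an irreducible homomorphism between the indecomposable modules `X` and `Y`, that is,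
an arrow of the Auslander–Reiten quiver. -/
def ModA.IrredHom (X Y : ModA R) : Prop :=
  X.IsIndec ∧ Y.IsIndec ∧ ∃ f : X.M →ₗ[R] Y.M, IsIrred f

open ModA

theorem ModA.IrredHom.congr {X' Y' : ModA R} (h : IrredHom X Y) (hX : X.Iso X') (hY : Y.Iso Y') :
    IrredHom X' Y' := by
  obtain ⟨hXi, hYi, f, hf⟩ := h
  exact ⟨hXi.of_iso hX, hYi.of_iso hY, _, (hf.comp_equiv hX.some.symm).equiv_comp hY.some⟩

theorem IsLeftAlmostSplit.exists_retraction {lam : U.M →ₗ[R] E.M} (hlam : IsLeftAlmostSplit lam)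
    {f : U.M →ₗ[R] Y.M} (hf : IsIrred f) :
    ∃ (r : E.M →ₗ[R] Y.M) (t : Y.M →ₗ[R] E.M), r.comp lam = f ∧ r.comp t = LinearMap.id := by
  obtain ⟨r, hr⟩ := hlam.2 Y f hf.1
  obtain ⟨t, ht⟩ := (hf.2.2 E lam r hr).resolve_left hlam.1
  exact ⟨r, t, hr, ht⟩

theorem IsMinLeftAlmostSplit.isIrred_comp {lam : U.M →ₗ[R] E.M} (hlam : IsMinLeftAlmostSplit lam)
    (hU : U.IsIndec) (hZ : Z.IsIndec) {r : E.M →ₗ[R] Z.M} {t : Z.M →ₗ[R] E.M}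
    (hrt : r.comp t = LinearMap.id) : IsIrred (r.comp lam) := by
  have hns : ¬SplitMonoMap (r.comp lam) := fun ⟨q, hq⟩ => hlam.1.1 ⟨q.comp r, hq⟩
  refine ⟨hns, fun h => hns (.of_bijective ((splitEpiMap_iff_bijective hU hZ).1 h)),
    fun W g h hgh => or_iff_not_imp_left.2 fun hg => ?_⟩
  obtain ⟨g', rfl⟩ := hlam.1.2 W g hg
  -- `φ` fixes `lam`, hence is invertible, and `r ∘ φ = h ∘ g'`
  let φ : E.M →ₗ[R] E.M := LinearMap.id + t.comp (h.comp g' - r)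
  have hφ : φ.comp lam = lam := by
    rw [LinearMap.add_comp, LinearMap.comp_assoc, LinearMap.sub_comp, LinearMap.comp_assoc, hgh,
      sub_self, LinearMap.comp_zero, add_zero, LinearMap.id_comp]
  have hrφ : r.comp φ = h.comp g' := by
    rw [LinearMap.comp_add, ← LinearMap.comp_assoc, hrt, LinearMap.id_comp, LinearMap.comp_id,
      add_sub_cancel]
  obtain ⟨v, -, hv⟩ := exists_inverse_of_bijective (hlam.2 φ hφ)
  refine ⟨g'.comp (v.comp t), ?_⟩
  rw [← LinearMap.comp_assoc, ← hrφ, LinearMap.comp_assoc, ← LinearMap.comp_assoc t, hv,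
    LinearMap.id_comp, hrt]

theorem AlmostSplitSeq.isIrred_comp (s : AlmostSplitSeq R) (hX : X.IsIndec)
    {r : s.m.M →ₗ[R] X.M} {t : X.M →ₗ[R] s.m.M} (hrt : r.comp t = LinearMap.id)
    (hr : ¬Function.Bijective (r.comp s.f)) : IsIrred (s.g.comp t) := by
  have hns : ¬SplitEpiMap (s.g.comp t) := fun ⟨q, hq⟩ => s.not_split ⟨t.comp q, hq⟩
  refine ⟨fun h => hns (.of_bijective ((splitMonoMap_iff_bijective hX s.r_indec).1 h)), hns,
    fun W g h hgh => or_iff_not_imp_right.2 fun hh => ?_⟩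
  obtain ⟨h', rfl⟩ := s.right_almost W h hh
  obtain ⟨w, hw⟩ := s.exists_comp_f_eq (h := t - h'.comp g)
    (by rw [LinearMap.comp_sub, ← LinearMap.comp_assoc, hgh, sub_self])
  have hsum : (r.comp h').comp g + (r.comp s.f).comp w = LinearMap.id := by
    rw [LinearMap.comp_assoc, LinearMap.comp_assoc, hw, LinearMap.comp_sub, hrt, add_sub_cancel]
  have hbij := (hX.bijective_or_of_add_eq_one hsum).resolve_right fun h =>
    hr (hX.bijective_of_bijective_comp s.l_indec h).2
  obtain ⟨v, hv, -⟩ := exists_inverse_of_bijective hbij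
  exact ⟨v.comp (r.comp h'), by rw [LinearMap.comp_assoc, hv]⟩

theorem ModA.IrredHom.tau_right {W : ModA R} (h : IrredHom U W) (hC : IsTauOf U C) :
    IrredHom W C := by
  obtain ⟨s, hl, hr⟩ := hC
  obtain ⟨-, hW, f, hf⟩ := h.congr hl.symm (.refl W)
  obtain ⟨r, t, rfl, hrt⟩ := s.isLeftAlmostSplit.exists_retraction hf
  exact IrredHom.congr ⟨hW, s.r_indec, _, s.isIrred_comp hW hrt hf.not_bijective⟩ (.refl W) hr

theorem ModA.IrredHom.nonzeroHom_tau (h : IrredHom Y C) (hC : IsTauOf U C) : NonzeroHom U Y := by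
  obtain ⟨s, ⟨e⟩, hr⟩ := hC
  obtain ⟨hY, -, y, hy⟩ := h.congr (.refl Y) hr.symm
  obtain ⟨y', rfl⟩ := s.right_almost Y y hy.2.1
  obtain ⟨t, ht⟩ := (hy.2.2 s.m y' s.g rfl).resolve_right s.not_split
  refine ⟨s.l_indec.of_iso ⟨e⟩, hY, (t.comp s.f).comp e.symm.toLinearMap, fun h0 => ?_⟩
  obtain ⟨q, hq⟩ := s.exists_comp_g_eq (h := t) ((LinearMap.cancel_right e.symm.surjective).1 h0)
  exact hy.1 ⟨q, by rw [← LinearMap.comp_assoc, hq, ht]⟩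

theorem IndecDecomposition.exists_iso_summand (d : IndecDecomposition E) (hZ : Z.IsIndec)
    {r : E.M →ₗ[R] Z.M} {t : Z.M →ₗ[R] E.M} (hrt : r.comp t = LinearMap.id) :
    ∃ j, Z.Iso (d.summand j) := by
  have hsum : ∑ j, (r.comp (d.incl j)).comp ((d.proj j).comp t) = LinearMap.id := by
    ext x
    rw [← hrt]
    simp only [LinearMap.sum_apply, LinearMap.comp_apply]
    rw [← map_sum, d.sum_incl_proj]
  obtain ⟨j, -, hj⟩ := hZ.exists_bijective_of_sum Finset.univ
    (fun j => (r.comp (d.incl j)).comp ((d.proj j).comp t))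
    (by rw [hsum]; exact Function.bijective_id)
  exact ⟨j, .of_bijective (hZ.bijective_of_bijective_comp (d.indec j) hj).1⟩

theorem FiniteUpToIso.irredHom [ArtinLike R] (U : ModA R) : FiniteUpToIso (IrredHom U) := by
  by_cases hU : U.IsIndec
  · obtain ⟨E, lam, hlam⟩ := exists_isMinLeftAlmostSplit hU
    refine (exists_of_finite fun j => of_iso (E.decomposition.summand j)).mono ?_
    rintro W hW ⟨_, _, f, hf⟩
    obtain ⟨r, t, -, hrt⟩ := hlam.1.exists_retraction hf
    exact E.decomposition.exists_iso_summand hW hrt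
  · exact .of_forall_not fun X _ h => hU h.1

theorem IsMinLeftAlmostSplit.exists_isIrred_comp_ne_zero {T : ModA R} {lam : U.M →ₗ[R] E.M}
    (hlam : IsMinLeftAlmostSplit lam) (hU : U.IsIndec) {a : T.M →ₗ[R] U.M} {f : E.M →ₗ[R] Y.M}
    (hf : f.comp (lam.comp a) ≠ 0) : ∃ (W : ModA R) (c : U.M →ₗ[R] W.M) (i : W.M →ₗ[R] E.M),
      W.IsIndec ∧ IsIrred c ∧ (f.comp i).comp (c.comp a) ≠ 0 := by
  let d := E.decomposition
  obtain ⟨j, hj⟩ := d.exists_comp_incl_comp_proj_ne_zero hf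
  exact ⟨_, _, _, d.indec j, hlam.isIrred_comp hU (d.indec j) (d.proj_comp_incl j), hj⟩

theorem exists_isIrred_comp_ne_zero [ArtinLike R] {T : ModA R} (hU : U.IsIndec)
    {a : T.M →ₗ[R] U.M} {f : U.M →ₗ[R] Y.M} (hf : f.comp a ≠ 0) (hns : ¬SplitMonoMap f) :
    ∃ (W : ModA R) (c : U.M →ₗ[R] W.M) (b : W.M →ₗ[R] Y.M),
      W.IsIndec ∧ IsIrred c ∧ b.comp (c.comp a) ≠ 0 := by
  obtain ⟨E, lam, hlam⟩ := exists_isMinLeftAlmostSplit hU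
  obtain ⟨f', rfl⟩ := hlam.1.2 Y f hns
  obtain ⟨W, c, i, hW, hc, h⟩ := hlam.exists_isIrred_comp_ne_zero hU hf
  exact ⟨W, c, f'.comp i, hW, hc, h⟩

theorem IsLeftAlmostSplit.exists_factor_mem_radPow {lam : U.M →ₗ[R] E.M}
    (hlam : IsLeftAlmostSplit lam) (hU : U.IsIndec) {m : ℕ} {f : U.M →ₗ[R] Y.M}
    (hf : f ∈ radPow R (m + 1) U Y) : ∃ f' ∈ radPow R m E Y, f'.comp lam = f := by
  induction hf using AddSubgroup.closure_induction with
  | mem f hf =>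
    obtain ⟨W, a, b, ha, hb, rfl⟩ := hf
    obtain ⟨a', rfl⟩ := hlam.2 W a (ha.not_splitMonoMap hU)
    exact ⟨b.comp a', radPow_comp_right hb a', rfl⟩
  | zero => exact ⟨0, zero_mem _, LinearMap.zero_comp _⟩
  | add f g _ _ hf hg =>
    obtain ⟨f', hf', rfl⟩ := hf
    obtain ⟨g', hg', rfl⟩ := hg
    exact ⟨f' + g', add_mem hf' hg', LinearMap.add_comp ..⟩
  | neg f _ hf =>
    obtain ⟨f', hf', rfl⟩ := hf
    exact ⟨-f', neg_mem hf', LinearMap.neg_comp ..⟩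

theorem exists_forall_mem_radPow_imp_inRadInf [ArtinLike R] (X Y : ModA R) :
    ∃ N, ∀ f ∈ radPow R N X Y, InRadInf f := by
  obtain ⟨N, hN⟩ := ArtinLike.radPow_stabilises X Y
  refine ⟨N, fun f hf n => ?_⟩
  rcases le_total N n with h | h
  · rwa [hN n h]
  · exact radPow_antitone X Y h hf

theorem exists_isIrred_comp_ne_zero_of_inRadInf [ArtinLike R] {T : ModA R} (hU : U.IsIndec)
    {a : T.M →ₗ[R] U.M} {f : U.M →ₗ[R] Y.M} (hf : f.comp a ≠ 0) (hinf : InRadInf f) :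
    ∃ (W : ModA R) (c : U.M →ₗ[R] W.M) (b : W.M →ₗ[R] Y.M),
      W.IsIndec ∧ IsIrred c ∧ InRadInf b ∧ b.comp (c.comp a) ≠ 0 := by
  obtain ⟨E, lam, hlam⟩ := exists_isMinLeftAlmostSplit hU
  obtain ⟨N, hN⟩ := exists_forall_mem_radPow_imp_inRadInf E Y
  obtain ⟨f', hf', rfl⟩ := hlam.1.exists_factor_mem_radPow hU (hinf (N + 1))
  obtain ⟨W, c, i, hW, hc, h⟩ := hlam.exists_isIrred_comp_ne_zero hU hf
  exact ⟨W, c, f'.comp i, hW, hc, (hN f' hf').comp_right i, h⟩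

end AlmostSplit

/-! ### Left finite modules -/

section LeftFinite

variable {R : Type u} [Ring R]

namespace ModA

/-- `Y` receives nonzero maps from only finitely many indecomposable modules. -/
def HasFinitelyManySources (Y : ModA R) : Prop :=
  FiniteUpToIso fun X => NonzeroHom X Y

/-- `X` is left finite if it is indecomposable and each of its predecessors receives nonzero maps
from only finitely many indecomposable modules. -/
def IsLeftFinite (X : ModA R) : Prop :=
  X.IsIndec ∧ ∀ Y : ModA R, Y.Precedes X → Y.HasFinitelyManySources

/-- `X` precedes `Y` along a path whose first map lies in the infinite radical. For a cycle-finite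
ring this is a strict order on `ind`. -/
def InfinitelyPrecedes (X Y : ModA R) : Prop :=
  X.IsIndec ∧ ∃ (Z : ModA R) (f : X.M →ₗ[R] Z.M), Z.IsIndec ∧ f ≠ 0 ∧ InRadInf f ∧ Z.Precedes Y

variable {X Y Z : ModA R}

theorem IsLeftFinite.of_precedes (h : X.IsLeftFinite) (hY : Y.Precedes X) : Y.IsLeftFinite :=
  ⟨hY.isIndec_left h.1, fun _ hZ => h.2 _ (hZ.trans hY)⟩

theorem InfinitelyPrecedes.trans (h : X.InfinitelyPrecedes Y) (h' : Y.InfinitelyPrecedes Z) :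
    X.InfinitelyPrecedes Z := by
  obtain ⟨hX, W, f, hW, hf, hfinf, hWY⟩ := h
  obtain ⟨hY, W', g, hW', hg, -, hW'Z⟩ := h'
  exact ⟨hX, W, f, hW, hf, hfinf, (hWY.trans (.of_hom hY hW' hg)).trans hW'Z⟩

end ModA

open ModA

theorem IsCycleFinite.exists_forall_not_infinitelyPrecedes (hcf : IsCycleFinite R)
    {P : ModA R → Prop} (hP : FiniteUpToIso P) {X : ModA R} (hX : X.IsIndec) (pX : P X) :
    ∃ Y : ModA R, Y.IsIndec ∧ P Y ∧ ∀ Z, P Z → ¬Z.InfinitelyPrecedes Y := by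
  by_contra! hcon
  have hcon' (Y : {Y : ModA R // Y.IsIndec ∧ P Y}) :
      ∃ Z : {Y : ModA R // Y.IsIndec ∧ P Y}, Z.1.InfinitelyPrecedes Y.1 := by
    obtain ⟨Z, pZ, hZ⟩ := hcon Y.1 Y.2.1 Y.2.2
    exact ⟨⟨Z, hZ.1, pZ⟩, hZ⟩
  choose next hnext using hcon'
  let y (n : ℕ) := next^[n] ⟨X, hX, pX⟩
  have hsucc (n : ℕ) : (y (n + 1)).1.InfinitelyPrecedes (y n).1 := by
    simp only [y, Function.iterate_succ_apply']
    exact hnext _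
  have : IsTrans (ModA R) fun Y Z => Z.InfinitelyPrecedes Y := ⟨fun _ _ _ h h' => h'.trans h⟩
  obtain ⟨i, j, hij, e⟩ := hP.exists_lt_iso (fun n => (y n).1) (fun n => (y n).2.1)
    fun n => (y n).2.2
  obtain ⟨-, Z, f, -, hf, hfinf, hZ⟩ := Nat.rel_of_forall_rel_succ_of_lt
    (fun Y Z : ModA R => Z.InfinitelyPrecedes Y) (f := fun n => (y n).1) hsucc hij
  exact hcf.not_precedes (y j).2.1 hf hfinf (hZ.trans (.of_iso (y i).2.1 e))

variable [ArtinLike R]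

theorem FiniteUpToIso.exists_notMem_radPow (n : ℕ) (X : ModA R) :
    FiniteUpToIso fun U => ∃ f : X.M →ₗ[R] U.M, f ∉ radPow R n X U := by
  induction n generalizing X with
  | zero => exact .of_forall_not fun U _ ⟨f, hf⟩ => hf (AddSubgroup.mem_top f)
  | succ n ih =>
    let d := X.decomposition
    choose E lam hlam using fun j => ArtinLike.exists_isLeftAlmostSplit (d.summand j) (d.indec j)
    refine (exists_of_finite fun j => (of_iso (d.summand j)).or (ih (E j))).mono ?_
    rintro U hU ⟨f, hf⟩
    obtain ⟨j, hj⟩ : ∃ j, f.comp (d.incl j) ∉ radPow R (n + 1) (d.summand j) U := by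
      by_contra! hcon
      refine hf ?_
      rw [d.eq_sum_comp_incl_comp_proj f]
      exact sum_mem fun j _ => radPow_comp_right (hcon j) _
    refine ⟨j, or_iff_not_imp_left.2 fun hiso => ?_⟩
    obtain ⟨f', hf'⟩ := (hlam j).2 U (f.comp (d.incl j)) fun hs =>
      hiso (Iso.of_bijective ((splitMonoMap_iff_bijective (d.indec j) hU).1 hs)).symm
    refine ⟨f', fun h => hj ?_⟩
    rw [← hf']
    exact comp_mem_radPow_succ h (.of_not_splitMonoMap (d.indec j) (hlam j).1)

/-- The regular module, a generator of the module category. -/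
abbrev ModA.regular (R : Type u) [Ring R] [ArtinLike R] : ModA R := ⟨R, ArtinLike.isFiniteLength⟩

theorem ModA.exists_comp_regular_ne_zero {U Y : ModA R} {g : U.M →ₗ[R] Y.M} (hg : g ≠ 0) :
    ∃ a : (regular R).M →ₗ[R] U.M, g.comp a ≠ 0 := by
  obtain ⟨x, hx⟩ := DFunLike.ne_iff.1 hg
  refine ⟨LinearMap.toSpanSingleton R U.M x, fun h => hx ?_⟩
  simpa using LinearMap.congr_fun h (1 : R)

theorem ModA.exists_inRadInf_of_not_hasFinitelyManySources {Y : ModA R}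
    (h : ¬Y.HasFinitelyManySources) :
    ∃ (j : (regular R).decomposition.ι) (f : ((regular R).decomposition.summand j).M →ₗ[R] Y.M),
      f ≠ 0 ∧ InRadInf f := by
  obtain ⟨N, hN⟩ := exists_forall_mem_radPow_imp_inRadInf (regular R) Y
  obtain ⟨f, hf, hf0⟩ : ∃ f ∈ radPow R N (regular R) Y, f ≠ 0 := by
    by_contra! hcon
    refine h ((FiniteUpToIso.exists_notMem_radPow N (regular R)).mono ?_)
    rintro U - ⟨-, -, g, hg⟩
    obtain ⟨a, ha⟩ := exists_comp_regular_ne_zero hg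
    exact ⟨a, fun ha' => ha (hcon _ (radPow_comp_left ha' g))⟩
  obtain ⟨j, hj⟩ := (regular R).decomposition.exists_comp_incl_ne_zero hf0
  exact ⟨j, _, hj, (hN f hf).comp_right _⟩

/-- Otherwise an infinite radical map could be factored through arbitrarily long chains of
irreducible maps between modules with `P`, contradicting the Harada–Sai lemma. -/
theorem FiniteUpToIso.exists_irredHom_not {P : ModA R → Prop} (hP : FiniteUpToIso P)
    {Q Y : ModA R} (hQ : Q.IsIndec) (pQ : P Q) {f : Q.M →ₗ[R] Y.M} (hf : f ≠ 0)
    (hinf : InRadInf f) : ∃ (X Z : ModA R) (g : Z.M →ₗ[R] Y.M),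
      P X ∧ IrredHom X Z ∧ ¬P Z ∧ g ≠ 0 ∧ InRadInf g := by
  by_contra! hcon
  have hchain (n : ℕ) : ∃ (X : ModA R) (a : Q.M →ₗ[R] X.M) (b : X.M →ₗ[R] Y.M),
      NonisoChain P n a ∧ X.IsIndec ∧ P X ∧ InRadInf b ∧ b.comp a ≠ 0 := by
    induction n with
    | zero => exact ⟨Q, _, f, .id hQ pQ, hQ, pQ, hinf, hf⟩
    | succ n ih =>
      obtain ⟨X, a, b, hch, hX, pX, hb, h0⟩ := ih
      obtain ⟨W, c, b', hW, hc, hb', h0'⟩ := exists_isIrred_comp_ne_zero_of_inRadInf hX h0 hb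
      have pW : P W := of_not_not fun pW =>
        hcon X W b' pX ⟨hX, hW, c, hc⟩ pW (by rintro rfl; exact h0' (LinearMap.zero_comp _)) hb'
      exact ⟨W, _, b', hch.snoc hW pW hc.not_bijective, hW, pW, hb', h0'⟩
  obtain ⟨N, hN⟩ := harada_sai hP
  obtain ⟨X, a, b, hch, -, -, -, h0⟩ := hchain N
  exact h0 (by rw [hN N le_rfl _ _ _ hch, LinearMap.comp_zero])

/-- The boundary of the class of left finite modules: the indecomposable modules outside of it which
are projective or the target of an irreducible map from a left finite module. -/
def ModA.IsLeftFiniteBoundary (Z : ModA R) : Prop :=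
  Z.IsIndec ∧ ¬Z.IsLeftFinite ∧ ((∃ j, Z.Iso ((regular R).decomposition.summand j)) ∨
    ∃ X : ModA R, X.IsIndec ∧ X.IsLeftFinite ∧ IrredHom X Z)

theorem FiniteUpToIso.isLeftFiniteBoundary (h : FiniteUpToIso (IsLeftFinite (R := R))) :
    FiniteUpToIso (IsLeftFiniteBoundary (R := R)) :=
  ((exists_of_finite fun j => of_iso ((regular R).decomposition.summand j)).or
    (h.bind (fun X _ _ => irredHom X) fun _ _ Z e h => h.congr e (.refl Z))).mono
    fun _ _ hZ => hZ.2.2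

theorem FiniteUpToIso.exists_isLeftFiniteBoundary (h : FiniteUpToIso (IsLeftFinite (R := R)))
    {Y : ModA R} (hY : ¬Y.HasFinitelyManySources) :
    ∃ (Z : ModA R) (f : Z.M →ₗ[R] Y.M), Z.IsLeftFiniteBoundary ∧ f ≠ 0 ∧ InRadInf f := by
  obtain ⟨j, f, hf, hinf⟩ := exists_inRadInf_of_not_hasFinitelyManySources hY
  have hj := (regular R).decomposition.indec j
  by_cases hfin : IsLeftFinite ((regular R).decomposition.summand j)
  · obtain ⟨X, Z, g, hX, hXZ, hZ, hg, hginf⟩ := h.exists_irredHom_not hj hfin hf hinf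
    exact ⟨Z, g, ⟨hXZ.2.1, hZ, .inr ⟨X, hXZ.1, hX, hXZ⟩⟩, hg, hginf⟩
  · exact ⟨_, f, ⟨hj, hfin, .inl ⟨j, .refl _⟩⟩, hf, hinf⟩

/-- If there were only finitely many left finite modules, then among the finitely many boundary
modules each would be infinitely preceded by another one. -/
theorem IsCycleFinite.not_finiteUpToIso_isLeftFinite (hcf : IsCycleFinite R)
    (hinf : ¬FiniteUpToIso fun _ : ModA R => True) :
    ¬FiniteUpToIso (IsLeftFinite (R := R)) := by
  intro hfin
  have exists_source {Z : ModA R} (hZ : Z.IsIndec) (hZ' : ¬Z.IsLeftFinite) :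
      ∃ Z' : ModA R, Z'.IsLeftFiniteBoundary ∧ Z'.InfinitelyPrecedes Z := by
    obtain ⟨Y, hYZ, hY⟩ : ∃ Y : ModA R, Y.Precedes Z ∧ ¬Y.HasFinitelyManySources := by
      by_contra! hcon
      exact hZ' ⟨hZ, hcon⟩
    obtain ⟨Z', f, hZ', hf, hfinf⟩ := hfin.exists_isLeftFiniteBoundary hY
    exact ⟨Z', hZ', hZ'.1, Y, f, hYZ.isIndec_left hZ, hf, hfinf, hYZ⟩
  obtain ⟨Y, hY, hY'⟩ : ∃ Y : ModA R, Y.IsIndec ∧ ¬Y.IsLeftFinite := by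
    by_contra! hcon
    exact hinf (hfin.mono fun X hX _ => hcon X hX)
  obtain ⟨Z, hZ, -⟩ := exists_source hY hY'
  obtain ⟨W, hW, hbW, hmin⟩ :=
    hcf.exists_forall_not_infinitelyPrecedes hfin.isLeftFiniteBoundary hZ.1 hZ
  obtain ⟨W', hW', hlt⟩ := exists_source hW hbW.2.1
  exact hmin W' hW' hlt

end LeftFinite

/-! ### Paths of irreducible maps -/

section IrredPaths

open ModA Filter

variable {R : Type u} [Ring R] {m n : ℕ} {U V W X Y Z : ModA R}

theorem IsIrred.ne_zero {f : X.M →ₗ[R] Y.M} (hf : IsIrred f) (hX : X.IsIndec) (hY : Y.IsIndec) :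
    f ≠ 0 := by
  rintro rfl
  rcases hf.2.2 ⟨PUnit, .of_subsingleton⟩ 0 0 (LinearMap.comp_zero _) with ⟨r, hr⟩ | ⟨r, hr⟩
  · exact hX.id_ne_zero (hr.symm.trans (LinearMap.comp_zero _))
  · exact hY.id_ne_zero (hr.symm.trans (LinearMap.zero_comp _))

theorem ModA.IrredHom.nonzeroHom (h : IrredHom X Y) : NonzeroHom X Y :=
  let ⟨hX, hY, f, hf⟩ := h
  ⟨hX, hY, f, hf.ne_zero hX hY⟩

theorem ModA.IrredHom.precedes (h : IrredHom X Y) : X.Precedes Y := .single h.nonzeroHom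

/-- `IrredPath n U X`: a path of `n` irreducible maps between indecomposable modules leads from `U`
to a module isomorphic to `X`. -/
inductive IrredPath : ℕ → ModA R → ModA R → Prop
  | of_iso {U X : ModA R} (hU : U.IsIndec) (e : U.Iso X) : IrredPath 0 U X
  | cons {n : ℕ} {U W X : ModA R} (h : IrredHom U W) (hW : IrredPath n W X) : IrredPath (n + 1) U X

/-- There are arbitrarily long paths of irreducible maps from `U` to `X`. -/
def HasLongPaths (U X : ModA R) : Prop := ∃ᶠ n in atTop, IrredPath n U X

namespace IrredPath

theorem isIndec (h : IrredPath n U X) : U.IsIndec := by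
  cases h with
  | of_iso hU _ => exact hU
  | cons h _ => exact h.1

theorem iso_left (h : IrredPath n U X) (e : U.Iso V) : IrredPath n V X := by
  cases h with
  | of_iso hU e' => exact .of_iso (hU.of_iso e) (e.symm.trans e')
  | cons h hW => exact .cons (h.congr e (.refl _)) hW

theorem trans (h : IrredPath m U W) (h' : IrredPath n W X) : IrredPath (m + n) U X := by
  induction h with
  | of_iso _ e =>
    rw [Nat.zero_add]
    exact h'.iso_left e.symm
  | cons h _ ih =>
    rw [Nat.succ_add]
    exact .cons h (ih h')

theorem precedes (h : IrredPath n U X) : U.Precedes X := by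
  induction h with
  | of_iso hU e => exact .of_iso hU e
  | cons h _ ih => exact h.precedes.trans ih

theorem hasLongPaths_left (h : IrredPath n U W) (hW : HasLongPaths W X) : HasLongPaths U X := by
  rw [HasLongPaths, frequently_atTop] at hW ⊢
  intro k
  obtain ⟨m, hkm, hm⟩ := hW k
  exact ⟨n + m, Nat.le_add_left_of_le hkm, h.trans hm⟩

theorem hasLongPaths_right (h : IrredPath n W X) (hU : HasLongPaths U W) : HasLongPaths U X := by
  rw [HasLongPaths, frequently_atTop] at hU ⊢
  intro k
  obtain ⟨m, hkm, hm⟩ := hU k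
  exact ⟨m + n, Nat.le_add_right_of_le hkm, hm.trans h⟩

theorem hasLongPaths (h : IrredPath (n + 1) X X) : HasLongPaths X X := by
  refine frequently_atTop.2 fun k => ?_
  induction k with
  | zero => exact ⟨n + 1, Nat.zero_le _, h⟩
  | succ k ih =>
    obtain ⟨m, hm, hp⟩ := ih
    exact ⟨n + 1 + m, by lia, h.trans hp⟩

end IrredPath

theorem HasLongPaths.precedes (h : HasLongPaths U X) : U.Precedes X :=
  let ⟨_, hn⟩ := h.exists
  hn.precedes

theorem HasLongPaths.isIndec (h : HasLongPaths U X) : U.IsIndec :=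
  let ⟨_, hn⟩ := h.exists
  hn.isIndec

namespace ModA.IsLeftFinite

theorem hasFinitelyManySources (hX : X.IsLeftFinite) : X.HasFinitelyManySources := hX.2 X (.refl X)

theorem finiteUpToIso_irredPath (hX : X.IsLeftFinite) (n : ℕ) :
    FiniteUpToIso fun U => IrredPath n U X := by
  induction n with
  | zero => exact (FiniteUpToIso.of_iso X).mono fun U _ h => by cases h; assumption
  | succ n ih =>
    refine FiniteUpToIso.mono (ih.bind (Q := fun W U => IrredHom U W)
      (fun W _ hW => (hX.2 W hW.precedes).mono fun U _ h => h.nonzeroHom)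
      fun _ _ Z e h => h.congr (.refl Z) e) ?_
    rintro U - (_ | ⟨h, hW⟩)
    exact ⟨_, h.2.1, hW, h⟩

end ModA.IsLeftFinite

section ArtinLike

variable [ArtinLike R]

/-- Otherwise a nonzero map could be factored through arbitrarily long chains of irreducible maps
between modules with a nonzero map to `Y`, contradicting the Harada–Sai lemma. -/
theorem ModA.HasFinitelyManySources.exists_irredPath (hY : Y.HasFinitelyManySources)
    (h : NonzeroHom U Y) : ∃ n, IrredPath n U Y := by
  obtain ⟨hU, hYi, f, hf⟩ := h
  by_contra hcon
  have hchain (n : ℕ) : ∃ (X : ModA R) (a : U.M →ₗ[R] X.M) (b : X.M →ₗ[R] Y.M),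
      NonisoChain (NonzeroHom · Y) n a ∧ X.IsIndec ∧ b.comp a ≠ 0 ∧
        ∀ m, IrredPath m X Y → ∃ k, IrredPath k U Y := by
    induction n with
    | zero => exact ⟨U, _, f, .id hU ⟨hU, hYi, f, hf⟩, hU, hf, fun m hm => ⟨m, hm⟩⟩
    | succ n ih =>
      obtain ⟨X, a, b, hch, hX, h0, hp⟩ := ih
      have hb : ¬SplitMonoMap b := fun hs => hcon <|
        hp 0 (.of_iso hX (.of_bijective ((splitMonoMap_iff_bijective hX hYi).1 hs)))
      obtain ⟨W, c, b', hW, hc, h0'⟩ := exists_isIrred_comp_ne_zero hX h0 hb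
      have hb' : b' ≠ 0 := by
        rintro rfl
        exact h0' (LinearMap.zero_comp _)
      exact ⟨W, _, b', hch.snoc hW ⟨hW, hYi, b', hb'⟩ hc.not_bijective, hW, h0',
        fun m hm => hp (m + 1) (.cons ⟨hX, hW, c, hc⟩ hm)⟩
  obtain ⟨N, hN⟩ := harada_sai hY
  obtain ⟨X, a, b, hch, -, h0, -⟩ := hchain N
  exact h0 (by rw [hN N le_rfl _ _ _ hch, LinearMap.comp_zero])

namespace ModA.IsLeftFinite

theorem exists_irredPath (hX : X.IsLeftFinite) (h : U.Precedes X) : ∃ n, IrredPath n U X := by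
  induction h using Relation.ReflTransGen.head_induction_on with
  | refl => exact ⟨0, .of_iso hX.1 (.refl X)⟩
  | head h h' ih =>
    obtain ⟨n, hn⟩ := ih
    obtain ⟨m, hm⟩ := (hX.2 _ h').exists_irredPath h
    exact ⟨m + n, hm.trans hn⟩

theorem exists_irredPath_succ (hX : X.IsLeftFinite) (h : Relation.TransGen NonisoHom U X) :
    ∃ n, IrredPath (n + 1) U X := by
  obtain ⟨Y, ⟨hU, hY, f, hf, hb⟩, hYX⟩ := Relation.TransGen.head'_iff.1 h
  obtain ⟨W, c, b, hW, hc, h0⟩ := exists_isIrred_comp_ne_zero hU (a := LinearMap.id) hf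
    (mt (splitMonoMap_iff_bijective hU hY).1 hb)
  have hb0 : b ≠ 0 := by
    rintro rfl
    exact h0 (LinearMap.zero_comp _)
  have hYX' : Y.Precedes X := Relation.ReflTransGen.mono (fun _ _ => NonisoHom.nonzeroHom) _ _ hYX
  obtain ⟨n, hn⟩ := hX.exists_irredPath ((Precedes.of_hom hW hY hb0).trans hYX')
  exact ⟨n, .cons ⟨hU, hW, c, hc⟩ hn⟩

theorem hasLongPaths (hX : X.IsLeftFinite) (hnd : ¬IsDirectingModule X) : HasLongPaths X X :=
  let ⟨_, hn⟩ := hX.exists_irredPath_succ (not_isDirectingModule_iff.1 hnd)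
  hn.hasLongPaths

end ModA.IsLeftFinite

theorem ModA.IsIndec.exists_nonzeroHom_summand_regular (hU : U.IsIndec) :
    ∃ j, NonzeroHom ((regular R).decomposition.summand j) U := by
  obtain ⟨a, ha⟩ := exists_comp_regular_ne_zero hU.id_ne_zero
  obtain ⟨j, hj⟩ := (regular R).decomposition.exists_comp_incl_ne_zero (f := a) ha
  exact ⟨j, (regular R).decomposition.indec j, hU, _, hj⟩

theorem ModA.projective_summand_regular (j : (regular R).decomposition.ι) :
    Module.Projective R ((regular R).decomposition.summand j).M :=
  .of_split _ _ ((regular R).decomposition.proj_comp_incl j)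

/-- The modules at the start of a path of bounded length being finite in number, infinitely many
predecessors yield arbitrarily long paths, which may be prolonged to start at a projective. -/
theorem ModA.IsLeftFinite.exists_hasLongPaths_summand_regular (hX : X.IsLeftFinite)
    (hinf : ¬FiniteUpToIso fun U : ModA R => U.Precedes X) :
    ∃ j, HasLongPaths ((regular R).decomposition.summand j) X := by
  by_contra! hcon
  simp only [HasLongPaths, not_frequently] at hcon
  obtain ⟨N, hN⟩ := eventually_atTop.1 (eventually_all.2 hcon)
  refine hinf ((FiniteUpToIso.exists_of_finite
    fun n : Fin N => hX.finiteUpToIso_irredPath n).mono fun U hU hUX => ?_)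
  obtain ⟨n, hn⟩ := hX.exists_irredPath hUX
  obtain ⟨j, hj⟩ := hU.exists_nonzeroHom_summand_regular
  obtain ⟨k, hk⟩ := (hX.2 U hUX).exists_irredPath hj
  exact ⟨⟨n, not_le.1 fun hNn => hN (k + n) (Nat.le_add_left_of_le hNn) j (hk.trans hn)⟩, hn⟩

end ArtinLike

/-! ### Sectional paths -/

/-- `φ : U → Z` is zero, or irreducible with an indecomposable target not isomorphic to `W`. -/
def IsZeroOrIrredAway (W : ModA R) (φ : U.M →ₗ[R] Z.M) : Prop :=
  φ = 0 ∨ (Z.IsIndec ∧ IsIrred φ ∧ ¬Z.Iso W)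

theorem ModA.IsIndec.exists_section_comp_eq_zero {E : ModA R} (hW : W.IsIndec) (hZ : Z.IsIndec)
    (hZW : ¬Z.Iso W) {r : E.M →ₗ[R] W.M} {s₀ : W.M →ₗ[R] E.M} (hrs : r.comp s₀ = LinearMap.id)
    {r' : E.M →ₗ[R] Z.M} {s' : Z.M →ₗ[R] E.M} (hrs' : r'.comp s' = LinearMap.id) :
    ∃ s : W.M →ₗ[R] E.M, r.comp s = LinearMap.id ∧ r'.comp s = 0 := by
  let σ := s₀ - s'.comp (r'.comp s₀)
  have hr'σ : r'.comp σ = 0 := by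
    rw [LinearMap.comp_sub, ← LinearMap.comp_assoc, hrs', LinearMap.id_comp, sub_self]
  have hrσ : r.comp σ + (r.comp s').comp (r'.comp s₀) = LinearMap.id := by
    rw [LinearMap.comp_sub, hrs, LinearMap.comp_assoc, sub_add_cancel]
  have hbij : Function.Bijective (r.comp σ) := (hW.bijective_or_of_add_eq_one hrσ).resolve_right
    fun hb => hZW (Iso.of_bijective (hW.bijective_of_bijective_comp hZ hb).1).symm
  obtain ⟨v, -, hv⟩ := exists_inverse_of_bijective hbij
  exact ⟨σ.comp v, hv, by rw [← LinearMap.comp_assoc, hr'σ, LinearMap.zero_comp]⟩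

theorem IsLeftAlmostSplit.exists_retraction_of_isZeroOrIrredAway {E : ModA R}
    {lam : U.M →ₗ[R] E.M} (hlam : IsLeftAlmostSplit lam) (hW : W.IsIndec) {f : U.M →ₗ[R] W.M}
    (hf : IsIrred f) {φ : U.M →ₗ[R] Z.M} (hφ : IsZeroOrIrredAway W φ) :
    ∃ (r : E.M →ₗ[R] W.M) (r' : E.M →ₗ[R] Z.M) (s : W.M →ₗ[R] E.M),
      r.comp lam = f ∧ r'.comp lam = φ ∧ r.comp s = LinearMap.id ∧ r'.comp s = 0 := by
  obtain ⟨r, s₀, hr, hrs⟩ := hlam.exists_retraction hf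
  rcases hφ with rfl | ⟨hZ, hφ, hZW⟩
  · exact ⟨r, 0, s₀, hr, LinearMap.zero_comp _, hrs, LinearMap.zero_comp _⟩
  · obtain ⟨r', s', hr', hrs'⟩ := hlam.exists_retraction hφ
    obtain ⟨s, hs, hs'⟩ := hW.exists_section_comp_eq_zero hZ hZW hrs hrs'
    exact ⟨r, r', s, hr, hr', hs, hs'⟩

theorem AlmostSplitSeq.exists_isIrred_factor (s : AlmostSplitSeq R) (hW : W.IsIndec)
    {f : s.l.M →ₗ[R] W.M} (hf : IsIrred f) {h : W.M →ₗ[R] X.M} {φ : s.l.M →ₗ[R] Z.M}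
    {t : Z.M →ₗ[R] X.M} (hφ : IsZeroOrIrredAway W φ) (hft : h.comp f = t.comp φ) :
    ∃ (φ' : W.M →ₗ[R] s.r.M) (t' : s.r.M →ₗ[R] X.M), IsIrred φ' ∧ h = t'.comp φ' := by
  obtain ⟨r, r', σ, rfl, rfl, hσ, hσ'⟩ :=
    s.isLeftAlmostSplit.exists_retraction_of_isZeroOrIrredAway hW hf hφ
  obtain ⟨w, hw⟩ := s.exists_comp_g_eq (h := h.comp r - t.comp r')
    (by rw [LinearMap.sub_comp, LinearMap.comp_assoc, LinearMap.comp_assoc, hft, sub_self])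
  refine ⟨s.g.comp σ, w, s.isIrred_comp hW hσ hf.not_bijective, ?_⟩
  rw [← LinearMap.comp_assoc, hw, LinearMap.sub_comp, LinearMap.comp_assoc, LinearMap.comp_assoc,
    hσ, hσ', LinearMap.comp_id, LinearMap.comp_zero, sub_zero]

theorem ModA.IsRelInjective.eq_zero_of_comp_eq [ArtinLike R] (hI : U.IsRelInjective)
    (hU : U.IsIndec) (hW : W.IsIndec) {f : U.M →ₗ[R] W.M} (hf : IsIrred f) {h : W.M →ₗ[R] X.M}
    {φ : U.M →ₗ[R] Z.M} {t : Z.M →ₗ[R] X.M} (hφ : IsZeroOrIrredAway W φ)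
    (hft : h.comp f = t.comp φ) : h = 0 := by
  obtain ⟨E, lam, hlam⟩ := exists_isMinLeftAlmostSplit hU
  obtain ⟨r, r', σ, rfl, rfl, hσ, hσ'⟩ :=
    hlam.1.exists_retraction_of_isZeroOrIrredAway hW hf hφ
  have hrt : h.comp r = t.comp r' := (LinearMap.cancel_right (hlam.surjective hI)).1 hft
  rw [← LinearMap.comp_id h, ← hσ, ← LinearMap.comp_assoc, hrt, LinearMap.comp_assoc, hσ',
    LinearMap.comp_zero]

/-- `SectionalComp n f h`: the maps `f : U → W` and `h : W → X` are the first map and the composite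
of the remaining maps of a sectional path, that is, a path of irreducible maps no module of which is
the Auslander–Reiten translate of the one two steps further. The path has `n + 1` maps and ends
with an isomorphism. -/
inductive SectionalComp : ℕ → ∀ {U W X : ModA R}, (U.M →ₗ[R] W.M) → (W.M →ₗ[R] X.M) → Prop
  | of_bijective {U W X : ModA R} {f : U.M →ₗ[R] W.M} {h : W.M →ₗ[R] X.M} (hU : U.IsIndec)
      (hW : W.IsIndec) (hf : IsIrred f) (hh : Function.Bijective h) : SectionalComp 0 f h
  | cons {n : ℕ} {U W V X : ModA R} {f : U.M →ₗ[R] W.M} {f' : W.M →ₗ[R] V.M} {h : V.M →ₗ[R] X.M}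
      (hU : U.IsIndec) (hf : IsIrred f) (ht : ¬IsTauOf U V) (hs : SectionalComp n f' h) :
      SectionalComp (n + 1) f (h.comp f')

namespace SectionalComp

variable {f : U.M →ₗ[R] W.M} {h : W.M →ₗ[R] X.M}

theorem isIndec_left (hs : SectionalComp n f h) : U.IsIndec := by
  cases hs <;> assumption

theorem irredHom (hs : SectionalComp n f h) : IrredHom U W := by
  cases hs with
  | of_bijective hU hW hf _ => exact ⟨hU, hW, f, hf⟩
  | cons hU hf _ hs => exact ⟨hU, hs.isIndec_left, f, hf⟩

theorem irredPath (hs : SectionalComp n f h) : IrredPath n W X := by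
  induction hs with
  | of_bijective _ hW _ hh => exact .of_iso hW (.of_bijective hh)
  | cons _ _ _ hs ih => exact .cons hs.irredHom ih

theorem isIndec_right (hs : SectionalComp n f h) : X.IsIndec :=
  hs.irredPath.precedes.isIndec_right hs.irredHom.2.1

theorem comp_ne_comp [ArtinLike R] (hs : SectionalComp n f h) {Z : ModA R} {φ : U.M →ₗ[R] Z.M}
    {t : Z.M →ₗ[R] X.M} (hφ : IsZeroOrIrredAway W φ) : h.comp f ≠ t.comp φ := by
  intro hft
  induction hs generalizing Z with
  | @of_bijective U W X f h hU hW hf hh =>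
    by_cases hI : U.IsRelInjective
    · exact hW.ne_zero_of_bijective hh (hI.eq_zero_of_comp_eq hU hW hf hφ hft)
    · obtain ⟨E, lam, hlam⟩ := exists_isMinLeftAlmostSplit hU
      obtain ⟨φ', t', hφ', rfl⟩ :=
        (hlam.almostSplitSeq hU hI).exists_isIrred_factor hW hf hφ hft
      obtain ⟨v, hv, -⟩ := exists_inverse_of_bijective hh
      exact hφ'.1 ⟨v.comp t', hv⟩
  | @cons n U W V X f f' h hU hf ht hs ih =>
    have hW := hs.isIndec_left
    by_cases hI : U.IsRelInjective
    · refine ih (Z := V) (φ := 0) (t := 0) (.inl rfl) ?_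
      rw [hI.eq_zero_of_comp_eq hU hW hf hφ hft, LinearMap.comp_zero]
    · obtain ⟨E, lam, hlam⟩ := exists_isMinLeftAlmostSplit hU
      let s := hlam.almostSplitSeq hU hI
      obtain ⟨φ', t', hφ', hft'⟩ := s.exists_isIrred_factor hW hf hφ hft
      exact ih (.inr ⟨s.r_indec, hφ', fun e => ht ⟨s, .refl _, e⟩⟩) hft'

theorem comp_ne_zero [ArtinLike R] (hs : SectionalComp n f h) : h.comp f ≠ 0 := by
  simpa only [LinearMap.comp_zero] using
    hs.comp_ne_comp (φ := 0) (t := (0 : X.M →ₗ[R] X.M)) (.inl rfl)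

theorem nonzeroHom [ArtinLike R] (hs : SectionalComp n f h) : NonzeroHom U X :=
  ⟨hs.isIndec_left, hs.isIndec_right, _, hs.comp_ne_zero⟩

theorem nonisoChain [ArtinLike R] (hs : SectionalComp n f h) :
    NonisoChain (NonzeroHom · X) (n + 1) (h.comp f) := by
  induction hs with
  | @of_bijective U W X f h hU hW hf hh =>
    have hs := of_bijective hU hW hf hh
    have hX := hs.isIndec_right
    have hid : NonisoChain (NonzeroHom · X) 0 LinearMap.id := .id hX ⟨hX, hX, _, hX.id_ne_zero⟩
    exact .cons (f := h.comp f) hU hs.nonzeroHom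
      (fun hb => hf.not_bijective (hU.bijective_of_bijective_comp hW hb).1) hid
  | cons hU hf ht hs ih => exact .cons hU (cons hU hf ht hs).nonzeroHom hf.not_bijective ih

end SectionalComp

/-- There is a sectional path from `U` to `X` with `n + 1` irreducible maps, the first of which ends
in `W`. -/
def SectionalPath (n : ℕ) (U W X : ModA R) : Prop :=
  ∃ (f : U.M →ₗ[R] W.M) (h : W.M →ₗ[R] X.M), SectionalComp n f h

theorem IsTauOf.not_projective {C : ModA R} (h : IsTauOf U C) : ¬Module.Projective R C.M := by
  obtain ⟨s, -, ⟨e⟩⟩ := h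
  exact fun _ => s.not_projective (.of_equiv e.symm)

theorem exists_tauInv_seq {P : ModA R → Prop} (hP : ∀ V, P V → ∃ C, P C ∧ IsTauOf V C) (hU : P U) :
    ∃ u : ℕ → ModA R, u 0 = U ∧ ∀ k, P (u k) ∧ IsTauOf (u k) (u (k + 1)) := by
  choose next hnext using fun V : Subtype P => hP V.1 V.2
  let u (k : ℕ) : Subtype P := (fun V => ⟨next V, (hnext V).1⟩)^[k] ⟨U, hU⟩
  refine ⟨fun k => u k, rfl, fun k => ⟨(u k).2, ?_⟩⟩
  have hsucc : (u (k + 1)).1 = next (u k) := by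
    simp only [u, Function.iterate_succ_apply']
  simpa only [hsucc] using (hnext (u k)).2

theorem exists_isTauOf_of_iso {u : ℕ → ModA R} (hu : ∀ k, IsTauOf (u k) (u (k + 1))) {i j : ℕ}
    (hij : i < j) (e : (u i).Iso (u j)) : ∃ k, IsTauOf (u k) (u 0) := by
  induction i generalizing j with
  | zero =>
    obtain ⟨k, rfl⟩ := Nat.exists_eq_add_of_lt hij
    exact ⟨_, (hu _).congr (.refl _) e.symm⟩
  | succ i ih =>
    obtain ⟨k, rfl⟩ := Nat.exists_eq_add_of_lt hij
    exact ih (by lia) ((hu i).left_iso (hu (i + 1 + k)) e)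

variable [ArtinLike R]

theorem ModA.HasFinitelyManySources.exists_sectionalPath_lt (hX : X.HasFinitelyManySources) :
    ∃ N, ∀ n U W, SectionalPath n U W X → n < N := by
  obtain ⟨N, hN⟩ := harada_sai hX
  refine ⟨N, fun n U W ⟨f, h, hs⟩ => not_le.1 fun hNn => ?_⟩
  exact hs.comp_ne_zero (hN (n + 1) (Nat.le_succ_of_le hNn) _ _ _ hs.nonisoChain)

/-- A path of irreducible maps is either sectional or bends somewhere; in the second case the
inverse translates of the modules before the bend form a path which is shorter by two. -/
theorem IrredPath.exists_sectionalPath_or (h : IrredPath (n + 1) U X)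
    (hinj : ∀ W : ModA R, U.Precedes W → W.Precedes X → ¬W.IsRelInjective) :
    (∃ W, SectionalPath n U W X) ∨ ∃ m, n = m + 1 ∧ ∀ C, IsTauOf U C → IrredPath m C X := by
  induction n generalizing U with
  | zero =>
    obtain ⟨W, ⟨hU, hW, f, hf⟩, ⟨e⟩⟩ : ∃ W, IrredHom U W ∧ W.Iso X := by
      cases h with
      | cons hUW hW => cases hW with
        | of_iso _ e => exact ⟨_, hUW, e⟩
    exact .inl ⟨W, f, e.toLinearMap, .of_bijective hU hW hf e.bijective⟩
  | succ n ih =>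
    obtain ⟨W, hUW, hW⟩ : ∃ W, IrredHom U W ∧ IrredPath (n + 1) W X := by
      cases h with
      | cons hUW hW => exact ⟨_, hUW, hW⟩
    have hle := hUW.precedes
    obtain ⟨V, f', h', hs⟩ | ⟨m, rfl, hm⟩ := ih hW fun V h h' => hinj V (hle.trans h) h'
    · by_cases ht : IsTauOf U V
      · exact .inr ⟨n, rfl, fun C hC => hs.irredPath.iso_left (ht.right_iso hC (.refl U))⟩
      · obtain ⟨hU, -, f, hf⟩ := hUW
        exact .inl ⟨W, f, _, .cons hU hf ht hs⟩
    · obtain ⟨D, hD⟩ := exists_isTauOf hUW.2.1 (hinj W hle hW.precedes)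
      exact .inr ⟨m + 1, rfl, fun C hC => .cons ((hUW.tau_right hC).tau_right hD) (hm D hD)⟩

theorem HasLongPaths.tauInv {C : ModA R} (h : HasLongPaths U X) (hX : X.HasFinitelyManySources)
    (hinj : ∀ W : ModA R, U.Precedes W → W.Precedes X → ¬W.IsRelInjective) (hC : IsTauOf U C) :
    HasLongPaths C X := by
  obtain ⟨N, hN⟩ := hX.exists_sectionalPath_lt
  refine frequently_atTop.2 fun k => ?_
  obtain ⟨_ | m, hm, hp⟩ := frequently_atTop.1 h (N + k + 2)
  · lia
  obtain ⟨W, hW⟩ | ⟨l, rfl, hl⟩ := hp.exists_sectionalPath_or hinj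
  · have := hN _ _ _ hW
    lia
  · exact ⟨l, by lia, hl C hC⟩

theorem exists_nonzeroHom_of_irredPath {u : ℕ → ModA R} (hu : ∀ k, IsTauOf (u k) (u (k + 1)))
    (hinj : ∀ W : ModA R, W.Precedes X → ¬W.IsRelInjective) {k : ℕ} (h : IrredPath n (u k) X) :
    ∃ l ≥ k, NonzeroHom (u l) X := by
  induction n using Nat.strong_induction_on generalizing k with
  | _ n ih =>
    cases n with
    | zero =>
      cases h with
      | of_iso hU e =>
        obtain ⟨e⟩ := e
        exact ⟨k, le_rfl, hU, hU.of_iso ⟨e⟩, _, hU.ne_zero_of_bijective e.bijective⟩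
    | succ n =>
      obtain ⟨W, f, g, hs⟩ | ⟨m, rfl, hm⟩ := h.exists_sectionalPath_or fun W _ => hinj W
      · exact ⟨k, le_rfl, hs.nonzeroHom⟩
      · obtain ⟨l, hl, hlX⟩ := ih m (by lia) (hm _ (hu k))
        exact ⟨l, Nat.le_of_succ_le hl, hlX⟩

/-- Otherwise long paths start at a projective `P` and thereby at all its inverse translates,
infinitely many of which map to `X`; two of these are isomorphic, which makes `P` an inverse
translate. -/
theorem ModA.IsLeftFinite.finiteUpToIso_precedes_of_not_isRelInjective (hX : X.IsLeftFinite)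
    (hinj : ∀ W : ModA R, W.Precedes X → ¬W.IsRelInjective) :
    FiniteUpToIso fun U : ModA R => U.Precedes X := by
  by_contra hinf
  obtain ⟨j, hj⟩ := hX.exists_hasLongPaths_summand_regular hinf
  obtain ⟨u, hu0, hu⟩ := exists_tauInv_seq (P := fun U => HasLongPaths U X) (fun V hV => by
    obtain ⟨C, hC⟩ := exists_isTauOf hV.isIndec (hinj V hV.precedes)
    exact ⟨C, hV.tauInv hX.hasFinitelyManySources (fun W _ => hinj W) hC, hC⟩) hj
  have hfreq (k : ℕ) : ∃ l > k, NonzeroHom (u l) X := by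
    obtain ⟨n, hn⟩ := (hu (k + 1)).1.exists
    exact exists_nonzeroHom_of_irredPath (fun k => (hu k).2) hinj hn
  obtain ⟨φ, hφ, hφX⟩ := Nat.exists_strictMono_subsequence hfreq
  obtain ⟨a, b, hab, e⟩ := hX.hasFinitelyManySources.exists_lt_iso (fun n => u (φ n))
    (fun n => (hφX n).1) hφX
  obtain ⟨k, hk⟩ := exists_isTauOf_of_iso (fun k => (hu k).2) (hφ hab) e
  rw [hu0] at hk
  exact hk.not_projective (projective_summand_regular j)

/-- Otherwise the modules equivalent to `X` in the order `Precedes` would be closed under inverse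
translation, hence, being finite in number, under translation, and so under passing to predecessors.
But some projective precedes `X`, and it is not an inverse translate. -/
theorem ModA.IsLeftFinite.exists_isRelInjective_of_not_isDirectingModule (hX : X.IsLeftFinite)
    (hfin : FiniteUpToIso fun U : ModA R => U.Precedes X) (hnd : ¬IsDirectingModule X) :
    ∃ I : ModA R, I.IsRelInjective ∧ I.Precedes X ∧ X.Precedes I := by
  by_contra! hcon
  let C (U : ModA R) : Prop := U.Precedes X ∧ X.Precedes U
  have hinv : ∀ U, C U → ∃ D, C D ∧ IsTauOf U D := fun U hU => by
    have hUf := hX.of_precedes hU.1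
    have hinj : ∀ W : ModA R, U.Precedes W → W.Precedes U → ¬W.IsRelInjective :=
      fun W h h' hW => hcon W hW (h'.trans hU.1) (hU.2.trans h)
    obtain ⟨D, hD⟩ := exists_isTauOf hUf.1 (hinj U (.refl U) (.refl U))
    obtain ⟨a, ha⟩ := hX.exists_irredPath hU.1
    obtain ⟨b, hb⟩ := hUf.exists_irredPath hU.2
    have hUU : HasLongPaths U U :=
      hb.hasLongPaths_right (ha.hasLongPaths_left (hX.hasLongPaths hnd))
    have hDU := hUU.tauInv hUf.hasFinitelyManySources hinj hD
    obtain ⟨W, hUW⟩ : ∃ W, IrredHom U W := by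
      obtain ⟨m, hm, hp⟩ := frequently_atTop.1 hUU 1
      cases hp with
      | of_iso => lia
      | cons h _ => exact ⟨_, h⟩
    exact ⟨D, ⟨hDU.precedes.trans hU.1,
      hU.2.trans (hUW.precedes.trans (hUW.tau_right hD).precedes)⟩, hD⟩
  have htau : ∀ U, C U → ∃ V, C V ∧ IsTauOf V U := fun U hU => by
    obtain ⟨u, rfl, hu⟩ := exists_tauInv_seq hinv hU
    obtain ⟨i, j, hij, e⟩ := hfin.exists_lt_iso u (fun k => (hX.of_precedes (hu k).1.1).1)
      fun k => (hu k).1.1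
    obtain ⟨k, hk⟩ := exists_isTauOf_of_iso (fun k => (hu k).2) hij e
    exact ⟨u k, (hu k).1, hk⟩
  have hpred {n : ℕ} {U Y : ModA R} (h : IrredPath n U Y) (hY : C Y) : C U := by
    induction h with
    | of_iso hU e =>
      exact ⟨(Precedes.of_iso hU e).trans hY.1, hY.2.trans (.of_iso (hU.of_iso e) e.symm)⟩
    | cons hUW _ ih =>
      obtain ⟨V, hV, hVW⟩ := htau _ (ih hY)
      exact ⟨hUW.precedes.trans (ih hY).1, hV.2.trans (.single (hUW.nonzeroHom_tau hVW))⟩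
  obtain ⟨j, hj⟩ := hX.1.exists_nonzeroHom_summand_regular
  obtain ⟨n, hn⟩ := hX.hasFinitelyManySources.exists_irredPath hj
  obtain ⟨V, -, hV⟩ := htau _ (hpred hn ⟨.refl X, .refl X⟩)
  exact hV.not_projective (projective_summand_regular j)

end IrredPaths

/-! ### Duality over a commutative artinian ring -/

section Duality

variable {K : Type u} [CommRing K]

section MultiplicityFree

/-- Modules with multiplicity-free socle: two simple submodules with the same annihilator agree.
The socle itself is avoided by working with elements killed by a maximal ideal. -/
def HasMultiplicityFreeSocle (K : Type u) [CommRing K] (E : Type u) [AddCommGroup E] [Module K E] :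
    Prop :=
  ∀ m : Ideal K, m.IsMaximal → ∀ x y : E, (∀ k ∈ m, k • x = 0) → (∀ k ∈ m, k • y = 0) → x ≠ 0 →
    ∃ k : K, k • x = y

variable {E F : Type u} [AddCommGroup E] [Module K E] [AddCommGroup F] [Module K F]

theorem HasMultiplicityFreeSocle.of_injective (hF : HasMultiplicityFreeSocle K F) {f : E →ₗ[K] F}
    (hf : Function.Injective f) : HasMultiplicityFreeSocle K E := fun m hm x y hx hy hx0 =>
  have ⟨k, hk⟩ := hF m hm (f x) (f y) (fun k hk => by rw [← map_smul, hx k hk, map_zero])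
    (fun k hk => by rw [← map_smul, hy k hk, map_zero]) ((map_ne_zero_iff f hf).2 hx0)
  ⟨k, hf (by rw [map_smul, hk])⟩

theorem exists_mul_smul_eq_of_notMem (E : Type u) [AddCommGroup E] [Module K E]
    {m : Ideal K} (hm : m.IsMaximal) {a : K} (ha : a ∉ m) :
    ∃ b : K, ∀ x : E, (∀ k ∈ m, k • x = 0) → (b * a) • x = x := by
  obtain ⟨b, i, hi, hbi⟩ := hm.exists_inv ha
  exact ⟨b, fun x hx => by rw [eq_sub_of_add_eq hbi, sub_smul, hx i hi, one_smul, sub_zero]⟩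

theorem hasMultiplicityFreeSocle_quotient_iInf_maximalSpectrum :
    HasMultiplicityFreeSocle K (K ⧸ ⨅ m : MaximalSpectrum K, m.asIdeal) := by
  intro m hm x y hx hy hx0
  obtain ⟨a, rfl⟩ := Submodule.mkQ_surjective _ x
  obtain ⟨b, rfl⟩ := Submodule.mkQ_surjective _ y
  have ham : a ∉ m := by
    intro ham
    refine hx0 ((Submodule.Quotient.mk_eq_zero _).2 ((Submodule.mem_iInf _).2 fun m' => ?_))
    by_contra ha'
    have hmm' : m ≤ m'.asIdeal := fun k hk =>
      (m'.isMaximal.isPrime.mem_or_mem ((Submodule.mem_iInf _).1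
        ((Submodule.Quotient.mk_eq_zero _).1 (hx k hk)) m')).resolve_right ha'
    exact ha' (hm.eq_of_le m'.isMaximal.ne_top hmm' ▸ ham)
  obtain ⟨c, hc⟩ := exists_mul_smul_eq_of_notMem (K ⧸ ⨅ m : MaximalSpectrum K, m.asIdeal) hm ham
  refine ⟨b * c, ?_⟩
  rw [← map_smul, smul_eq_mul, show b * c * a = (c * a) • b by rw [smul_eq_mul]; ring, map_smul,
    hc _ hy]

theorem exists_ne_zero_quotient_iInf_maximalSpectrum [IsArtinianRing K] {m : Ideal K}
    (hm : m.IsMaximal) : ∃ x : K ⧸ ⨅ m' : MaximalSpectrum K, m'.asIdeal,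
      x ≠ 0 ∧ ∀ k ∈ m, k • x = 0 := by
  classical
  let _ := Fintype.ofFinite (MaximalSpectrum K)
  obtain ⟨a, ha, ham⟩ : ∃ a ∈ (Finset.univ.erase ⟨m, hm⟩).inf MaximalSpectrum.asIdeal, a ∉ m := by
    refine Set.not_subset.1 fun hle => ?_
    obtain ⟨m', hm', hle'⟩ := (Ideal.IsPrime.inf_le' hm.isPrime).1 hle
    exact Finset.ne_of_mem_erase hm' (MaximalSpectrum.ext (m'.isMaximal.eq_of_le hm.ne_top hle'))
  refine ⟨Submodule.mkQ _ a, fun h => ?_, fun k hk => ?_⟩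
  · exact ham ((Submodule.mem_iInf _).1 ((Submodule.Quotient.mk_eq_zero _).1 h) ⟨m, hm⟩)
  · refine (Submodule.Quotient.mk_eq_zero _).2 ((Submodule.mem_iInf _).2 fun m' => ?_)
    by_cases hm' : m' = ⟨m, hm⟩
    · exact hm' ▸ m.mul_mem_right a hk
    · exact m'.asIdeal.mul_mem_left k
        (Finset.inf_le (f := MaximalSpectrum.asIdeal)
          (Finset.mem_erase.2 ⟨hm', Finset.mem_univ m'⟩) ha)

theorem exists_maximal_hasMultiplicityFreeSocle {S : Submodule K E}
    (hS : HasMultiplicityFreeSocle K S) :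
    ∃ J, S ≤ J ∧ Maximal (fun J : Submodule K E => HasMultiplicityFreeSocle K J) J := by
  refine zorn_le_nonempty₀ _ (fun c hc hchain N hN => ⟨sSup c, ?_, fun _ => le_sSup⟩) S hS
  rintro m hm ⟨x, hx⟩ ⟨y, hy⟩ hmx hmy hx0
  have hmem := fun {z} => Submodule.mem_sSup_of_directed (z := z) ⟨N, hN⟩ hchain.directedOn
  obtain ⟨N₁, hN₁, hxN⟩ := hmem.1 hx
  obtain ⟨N₂, hN₂, hyN⟩ := hmem.1 hy
  obtain ⟨N₃, hN₃, h₁, h₂⟩ := hchain.directedOn N₁ hN₁ N₂ hN₂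
  obtain ⟨k, hk⟩ := hc hN₃ m hm ⟨x, h₁ hxN⟩ ⟨y, h₂ hyN⟩
    (fun k hk => Subtype.ext (Subtype.ext_iff.1 (hmx k hk) :))
    (fun k hk => Subtype.ext (Subtype.ext_iff.1 (hmy k hk) :))
    (fun h => hx0 (Subtype.ext (Subtype.ext_iff.1 h :)))
  exact ⟨k, Subtype.ext (Subtype.ext_iff.1 hk :)⟩

theorem exists_maximal_disjoint (J : Submodule K E) :
    ∃ C : Submodule K E, Maximal (Disjoint J) C := by
  obtain ⟨C, -, hC⟩ := zorn_le_nonempty₀ {C : Submodule K E | Disjoint J C}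
    (fun c hc hchain _ _ => ⟨sSup c, hchain.directedOn.disjoint_sSup_right.2 hc, fun _ => le_sSup⟩)
    ⊥ disjoint_bot_right
  exact ⟨C, hC⟩

theorem injective_of_maximal_disjoint {J C : Submodule K E} (hC : Maximal (Disjoint J) C)
    {r : E ⧸ C →ₗ[K] F} (hr : Function.Injective (r.comp (C.mkQ.comp J.subtype))) :
    Function.Injective r := by
  have hcomap : Disjoint J (LinearMap.ker (r.comp C.mkQ)) := by
    refine Submodule.disjoint_def.2 fun x hxJ hx => ?_
    exact congrArg Subtype.val (hr (a₁ := ⟨x, hxJ⟩) (a₂ := 0) (by rw [map_zero]; exact hx))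
  refine LinearMap.ker_eq_bot.1 ((LinearMap.ker_eq_bot').2 fun v hv => ?_)
  obtain ⟨x, rfl⟩ := C.mkQ_surjective v
  have hCle : C ≤ LinearMap.ker (r.comp C.mkQ) := fun z hz => by
    rw [LinearMap.mem_ker, LinearMap.comp_apply,
      show C.mkQ z = 0 from (Submodule.Quotient.mk_eq_zero C).2 hz, map_zero]
  exact (Submodule.Quotient.mk_eq_zero C).2 (hC.2 hcomap hCle hv)

-- `J` is essential in `E ⧸ C`, so the two modules have the same socle.
theorem exists_mkQ_eq_of_maximal_disjoint {J C : Submodule K E} (hC : Maximal (Disjoint J) C)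
    {m : Ideal K} (hm : m.IsMaximal) {v : E ⧸ C} (hv : ∀ k ∈ m, k • v = 0) :
    ∃ j ∈ J, C.mkQ j = v := by
  obtain rfl | hv0 := eq_or_ne v 0
  · exact ⟨0, J.zero_mem, map_zero _⟩
  obtain ⟨w, rfl⟩ := C.mkQ_surjective v
  have hwC : w ∉ C := fun h => hv0 ((Submodule.Quotient.mk_eq_zero C).2 h)
  have hmeet : ¬Disjoint J (C ⊔ Submodule.span K {w}) := fun h =>
    hwC (hC.2 h le_sup_left (Submodule.mem_sup_right (Submodule.mem_span_singleton_self w)))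
  obtain ⟨j, hjJ, hj, hj0⟩ : ∃ j ∈ J, j ∈ C ⊔ Submodule.span K {w} ∧ j ≠ 0 := by
    simpa only [Submodule.disjoint_def, not_forall, exists_prop] using hmeet
  obtain ⟨c, hc, a, rfl⟩ : ∃ c ∈ C, ∃ a : K, c + a • w = j := by
    obtain ⟨c, hc, z, hz, rfl⟩ := Submodule.mem_sup.1 hj
    obtain ⟨a, rfl⟩ := Submodule.mem_span_singleton.1 hz
    exact ⟨c, hc, a, rfl⟩
  have ham : a ∉ m := fun ha => hj0 <| Submodule.disjoint_def.1 hC.1 _ hjJ <|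
    C.add_mem hc ((Submodule.Quotient.mk_eq_zero C).1 (hv a ha))
  obtain ⟨b, hb⟩ := exists_mul_smul_eq_of_notMem (E ⧸ C) hm ham
  refine ⟨b • (c + a • w), J.smul_mem b hjJ, ?_⟩
  rw [map_smul, map_add, show C.mkQ c = 0 from (Submodule.Quotient.mk_eq_zero C).2 hc, zero_add,
    map_smul, smul_smul, hb _ hv]

theorem injective_of_maximal_hasMultiplicityFreeSocle [Module.Injective K E] {J : Submodule K E}
    (hJ : Maximal (fun J : Submodule K E => HasMultiplicityFreeSocle K J) J) :
    Module.Injective K J := by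
  obtain ⟨C, hC⟩ := exists_maximal_disjoint J
  have hq : Function.Injective (C.mkQ.comp J.subtype) := by
    refine LinearMap.ker_eq_bot.1 (LinearMap.ker_eq_bot'.2 fun x hx => Subtype.ext ?_)
    exact Submodule.disjoint_def.1 hC.1 x x.2 ((Submodule.Quotient.mk_eq_zero C).1 hx)
  obtain ⟨r, hr⟩ := Module.Injective.extension_property K E _ _ _ hq J.subtype
  have hr_inj : Function.Injective r :=
    injective_of_maximal_disjoint hC (hr.symm ▸ J.subtype_injective)
  have hsocle : HasMultiplicityFreeSocle K (E ⧸ C) := by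
    intro m hm x y hx hy hx0
    obtain ⟨i, hi, rfl⟩ := exists_mkQ_eq_of_maximal_disjoint hC hm hx
    obtain ⟨j, hj, rfl⟩ := exists_mkQ_eq_of_maximal_disjoint hC hm hy
    have hzero : ∀ z : J, (∀ k ∈ m, k • C.mkQ z = 0) → ∀ k ∈ m, k • z = 0 := fun z hz k hk =>
      hq (by rw [map_smul, map_zero]; exact hz k hk)
    obtain ⟨k, hk⟩ := hJ.1 m hm ⟨i, hi⟩ ⟨j, hj⟩ (hzero ⟨i, hi⟩ hx) (hzero ⟨j, hj⟩ hy)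
      (fun h => hx0 (by rw [show i = 0 from congrArg Subtype.val h, map_zero]))
    exact ⟨k, by rw [← map_smul]; exact congrArg C.mkQ (congrArg Subtype.val hk)⟩
  have hle : J ≤ LinearMap.range r := fun x hx => ⟨C.mkQ x, LinearMap.congr_fun hr ⟨x, hx⟩⟩
  have hmem : ∀ v, r v ∈ J := fun v => hJ.2
    (hsocle.of_injective (LinearEquiv.ofInjective r hr_inj).symm.injective) hle ⟨v, rfl⟩
  refine ⟨fun X Y _ _ _ _ f hf g => ?_⟩
  obtain ⟨h, hh⟩ := Module.Injective.extension_property K E _ _ f hf (J.subtype.comp g)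
  refine ⟨(r.codRestrict J hmem).comp (C.mkQ.comp h), fun x => Subtype.ext ?_⟩
  calc r (C.mkQ (h (f x))) = r (C.mkQ (g x)) :=
        congrArg (fun z => r (C.mkQ z)) (LinearMap.congr_fun hh x)
    _ = g x := LinearMap.congr_fun hr (g x)

end MultiplicityFree

/-- Dualizing modules: injective cogenerators with multiplicity-free socle. Over a commutative
artinian ring `Hom(-, J)` is then a duality on the modules of finite length. -/
structure IsDualizing (K : Type u) [CommRing K] (J : Type u) [AddCommGroup J] [Module K J] :
    Prop where
  injective : Module.Injective K J
  exists_apply_ne_zero : ∀ {M : Type u} [AddCommGroup M] [Module K M] {x : M}, x ≠ 0 →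
    ∃ φ : M →ₗ[K] J, φ x ≠ 0
  hasMultiplicityFreeSocle : HasMultiplicityFreeSocle K J

theorem exists_comp_eq_of_ker_le_of_injective {J M N : Type u} [AddCommGroup J] [Module K J]
    [Module.Injective K J] [AddCommGroup M] [Module K M] [AddCommGroup N] [Module K N]
    {g : M →ₗ[K] N} {h : M →ₗ[K] J} (hk : LinearMap.ker g ≤ LinearMap.ker h) :
    ∃ s : N →ₗ[K] J, s.comp g = h := by
  obtain ⟨s, hs⟩ := Module.Injective.extension_property K J _ _
    ((LinearMap.ker g).liftQ g le_rfl)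
    (LinearMap.ker_eq_bot.1 (Submodule.ker_liftQ_eq_bot _ _ _ le_rfl))
    ((LinearMap.ker g).liftQ h hk)
  exact ⟨s, LinearMap.ext fun x => LinearMap.congr_fun hs ((LinearMap.ker g).mkQ x)⟩

theorem exists_isDualizing (K : Type u) [CommRing K] [IsArtinianRing K] :
    ∃ (J : Type u) (_ : AddCommGroup J) (_ : Module K J), IsDualizing K J := by
  let S := K ⧸ ⨅ m : MaximalSpectrum K, m.asIdeal
  let E := CategoryTheory.Injective.under (ModuleCat.of K S)
  let i : S →ₗ[K] E := (CategoryTheory.Injective.ι (ModuleCat.of K S)).hom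
  have hi : Function.Injective i := (ModuleCat.mono_iff_injective _).1 inferInstance
  have : Module.Injective K E :=
    Module.injective_module_of_injective_object K E
      (inj := CategoryTheory.Injective.injective_under _)
  obtain ⟨J, hSJ, hJ⟩ := exists_maximal_hasMultiplicityFreeSocle
    (hasMultiplicityFreeSocle_quotient_iInf_maximalSpectrum.of_injective
      (LinearEquiv.ofInjective i hi).symm.injective)
  have hinj : Module.Injective K J := injective_of_maximal_hasMultiplicityFreeSocle hJ
  refine ⟨J, _, _, hinj, fun {M} _ _ {x} hx => ?_, hJ.1⟩
  obtain ⟨m, hm, hle⟩ := Ideal.exists_le_maximal (LinearMap.ker (LinearMap.toSpanSingleton K M x))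
    fun h => hx (by simpa only [LinearMap.mem_ker, LinearMap.toSpanSingleton_apply, one_smul] using
      (Ideal.eq_top_iff_one _).1 h)
  obtain ⟨z, hz0, hz⟩ := exists_ne_zero_quotient_iInf_maximalSpectrum hm
  let z' : J := ⟨i z, hSJ ⟨z, rfl⟩⟩
  have hker : LinearMap.ker (LinearMap.toSpanSingleton K M x) ≤
      LinearMap.ker (LinearMap.toSpanSingleton K J z') := fun k hk => Subtype.ext <|
    (map_smul i k z).symm.trans (by rw [hz k (hle hk), map_zero]; rfl)
  obtain ⟨φ, hφ⟩ := exists_comp_eq_of_ker_le_of_injective hker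
  refine ⟨φ, fun h => hz0 (hi ?_)⟩
  have hφx : φ x = z' := by
    simpa only [LinearMap.comp_apply, LinearMap.toSpanSingleton_apply, one_smul] using
      LinearMap.congr_fun hφ (1 : K)
  rw [map_zero]
  exact congrArg Subtype.val (hφx.symm.trans h)

namespace IsDualizing

variable {J M : Type u} [AddCommGroup J] [Module K J] [AddCommGroup M] [Module K M]

theorem length_hom_le_one (hJ : IsDualizing K J) [IsSimpleModule K M] :
    Module.length K (M →ₗ[K] J) ≤ 1 := by
  obtain h | h := subsingleton_or_nontrivial (M →ₗ[K] J)
  · rw [Module.length_eq_zero]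
    exact zero_le_one
  have := IsSimpleModule.nontrivial K M
  obtain ⟨s, hs⟩ := exists_ne (0 : M)
  have hgen := IsSimpleModule.toSpanSingleton_surjective K hs
  have hkill : ∀ (φ : M →ₗ[K] J), ∀ k ∈ LinearMap.ker (LinearMap.toSpanSingleton K M s),
      k • φ s = 0 := fun φ k hk => by
    rw [← map_smul, show k • s = 0 from hk, map_zero]
  have heval : ∀ φ ψ : M →ₗ[K] J, φ s = ψ s → φ = ψ := fun φ ψ h => LinearMap.ext fun x => by
    obtain ⟨k, rfl⟩ := hgen x
    simp only [LinearMap.toSpanSingleton_apply, map_smul, h]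
  have hsimple : IsSimpleModule K (M →ₗ[K] J) := by
    refine isSimpleModule_iff_toSpanSingleton_surjective.2 ⟨h, fun φ hφ ψ => ?_⟩
    obtain ⟨k, hk⟩ := hJ.hasMultiplicityFreeSocle _
      (IsSimpleModule.ker_toSpanSingleton_isMaximal K hs) (φ s) (ψ s) (hkill φ) (hkill ψ)
      (fun h0 => hφ (heval φ 0 h0))
    exact ⟨k, heval _ _ hk⟩
  rw [Module.length_eq_one]

theorem length_hom_le (hJ : IsDualizing K J) (hM : IsFiniteLength K M) :
    Module.length K (M →ₗ[K] J) ≤ Module.length K M := by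
  have := hJ.injective
  induction hM with
  | of_subsingleton => rw [Module.length_eq_zero]; exact zero_le
  | @of_simple_quotient M _ _ N _ _ ih =>
    have hexact : Function.Exact N.subtype N.mkQ := LinearMap.exact_subtype_mkQ N
    rw [Module.length_eq_add_of_exact N.subtype N.mkQ N.subtype_injective N.mkQ_surjective hexact,
      Module.length_eq_one (R := K) (M := M ⧸ N), add_comm,
      Module.length_eq_add_of_exact (LinearMap.lcomp K J N.mkQ) (LinearMap.lcomp K J N.subtype)
        (LinearMap.lcomp_injective_of_surjective _ N.mkQ_surjective)
        (fun f => Module.Injective.extension_property K J _ _ _ N.subtype_injective f)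
        (LinearMap.exact_lcomp_of_exact_of_surjective _ hexact N.mkQ_surjective)]
    exact add_le_add hJ.length_hom_le_one ih

theorem isFiniteLength_hom (hJ : IsDualizing K J) (hM : IsFiniteLength K M) :
    IsFiniteLength K (M →ₗ[K] J) :=
  Module.length_ne_top_iff.1
    (ne_top_of_le_ne_top (Module.length_ne_top_iff.2 hM) (hJ.length_hom_le hM))

theorem exists_eq_apply (hJ : IsDualizing K J) (hM : IsFiniteLength K M)
    (F : (M →ₗ[K] J) →ₗ[K] J) : ∃ x : M, ∀ φ : M →ₗ[K] J, F φ = φ x := by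
  let ev : M →ₗ[K] (M →ₗ[K] J) →ₗ[K] J := LinearMap.applyₗ
  have hev : Function.Injective ev := by
    refine LinearMap.ker_eq_bot.1 (LinearMap.ker_eq_bot'.2 fun x hx => ?_)
    by_contra hx0
    obtain ⟨φ, hφ⟩ := hJ.exists_apply_ne_zero hx0
    exact hφ (LinearMap.congr_fun hx φ)
  have hdual := hJ.isFiniteLength_hom hM
  have hbidual := isFiniteLength_iff_isNoetherian_isArtinian.1 (hJ.isFiniteLength_hom hdual)
  have := hbidual.1
  have := hbidual.2
  have hrange : LinearMap.range ev = ⊤ := by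
    by_contra hne
    refine (Submodule.length_lt hne).not_ge ?_
    rw [← (LinearEquiv.ofInjective ev hev).length_eq]
    exact (hJ.length_hom_le hdual).trans (hJ.length_hom_le hM)
  obtain ⟨x, rfl⟩ := LinearMap.range_eq_top.1 hrange F
  exact ⟨x, fun φ => rfl⟩

end IsDualizing

end Duality

/-! ### Artin algebras -/

section LinearSystem

variable {R U Y : Type u} [Ring R] [AddCommGroup U] [Module R U] [AddCommGroup Y] [Module R Y]
  {m n : ℕ}

/-- The module obtained from `U` by universally adjoining elements `z j` which solve the linear
system `u i = ∑ j, a j i • z j`. -/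
abbrev AdjoinSolution (u : Fin m → U) (a : Fin n → Fin m → R) : Type u :=
  (U × (Fin n → R)) ⧸ Submodule.span R (Set.range fun i => (u i, fun j => -a j i))

/-- The canonical map from `U` to the module with an adjoined solution. -/
def AdjoinSolution.of (u : Fin m → U) (a : Fin n → Fin m → R) : U →ₗ[R] AdjoinSolution u a :=
  (Submodule.mkQ _).comp (LinearMap.inl R U (Fin n → R))

theorem AdjoinSolution.of_apply_eq_sum (u : Fin m → U) (a : Fin n → Fin m → R) (i : Fin m) :
    of u a (u i) = ∑ j, a j i • (Submodule.mkQ _ (0, Pi.single j 1) : AdjoinSolution u a) := by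
  simp only [← map_smul, ← map_sum]
  refine (Submodule.Quotient.eq _).2 (Submodule.subset_span ⟨i, ?_⟩)
  ext j <;> simp [Prod.fst_sum, Prod.snd_sum, Pi.single_apply]

theorem AdjoinSolution.exists_comp_of_eq_iff {u : Fin m → U} {a : Fin n → Fin m → R}
    {h : U →ₗ[R] Y} : (∃ h' : AdjoinSolution u a →ₗ[R] Y, h'.comp (of u a) = h) ↔
      ∃ z : Fin n → Y, ∀ i, h (u i) = ∑ j, a j i • z j := by
  constructor
  · rintro ⟨h', rfl⟩
    exact ⟨fun j => h' (Submodule.mkQ _ (0, Pi.single j 1)), fun i => by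
      simp only [LinearMap.comp_apply, of_apply_eq_sum, map_sum, map_smul]⟩
  · rintro ⟨z, hz⟩
    refine ⟨Submodule.liftQ _ (h.coprod (Fintype.linearCombination R z)) ?_, ?_⟩
    · rw [Submodule.span_le]
      rintro _ ⟨i, rfl⟩
      simp [hz, Fintype.linearCombination_apply]
    · ext x
      simp [of]

end LinearSystem

section DualPresentation

variable {K R J U V Y : Type u} [CommRing K] [Ring R] [Algebra K R]
  [AddCommGroup J] [Module K J]
  [AddCommGroup U] [Module R U] [Module K U] [IsScalarTower K R U]
  [AddCommGroup V] [Module R V] [Module K V] [IsScalarTower K R V]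
  [AddCommGroup Y] [Module R Y] [Module K Y] [IsScalarTower K R Y]
  {m n : ℕ} {ψ : Fin m → U →ₗ[K] J} {a : Fin n → Fin m → R}

/-- The map from a free right `R`-module to the dual of `U` determined by functionals `ψ i`; its
kernel consists of the relations between the `ψ i` over `R`. -/
def dualPresentation (R : Type u) [Ring R] [Algebra K R] [Module R U] [IsScalarTower K R U]
    (ψ : Fin m → U →ₗ[K] J) : (Fin m → R) →ₗ[K] (U →ₗ[K] J) :=
  ∑ i, ((ψ i).compRight K).comp ((Algebra.lsmul K K U).toLinearMap.comp (LinearMap.proj i))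

theorem dualPresentation_apply (r : Fin m → R) (x : U) :
    dualPresentation R ψ r x = ∑ i, ψ i (r i • x) := by
  simp [dualPresentation]

theorem dualPresentation_single (i : Fin m) (t : R) (x : U) :
    dualPresentation R ψ (Pi.single i t) x = ψ i (t • x) := by
  rw [dualPresentation_apply, Fintype.sum_eq_single i fun j hj => by simp [hj], Pi.single_eq_same]

theorem IsDualizing.exists_span_eq_top_and_span_eq_ker [IsArtinianRing K] [Module.Finite K R]
    (hJ : IsDualizing K J) (hU : IsFiniteLength K U) :
    ∃ (m n : ℕ) (ψ : Fin m → U →ₗ[K] J) (a : Fin n → Fin m → R),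
      Submodule.span K (Set.range ψ) = ⊤ ∧
      Submodule.span K (Set.range a) = LinearMap.ker (dualPresentation R ψ) := by
  have := (isFiniteLength_iff_isNoetherian_isArtinian.1 (hJ.isFiniteLength_hom hU)).1
  obtain ⟨m, ψ, hψ⟩ := Module.Finite.exists_fin (R := K) (M := U →ₗ[K] J)
  obtain ⟨n, a, ha⟩ := Submodule.fg_iff_exists_fin_generating_family.1
    (IsNoetherian.noetherian (LinearMap.ker (dualPresentation R ψ)))
  exact ⟨m, n, ψ, a, hψ, ha⟩

theorem IsDualizing.eq_of_forall_apply_eq (hJ : IsDualizing K J)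
    (hψ : Submodule.span K (Set.range ψ) = ⊤) {x y : U} (h : ∀ i, ψ i x = ψ i y) : x = y := by
  have happly : LinearMap.applyₗ (R := K) (M₂ := J) x = LinearMap.applyₗ y :=
    LinearMap.ext_on_range hψ h
  by_contra hxy
  obtain ⟨φ, hφ⟩ := hJ.exists_apply_ne_zero (sub_ne_zero.2 hxy)
  exact hφ (by rw [map_sub, sub_eq_zero]; exact LinearMap.congr_fun happly φ)

theorem IsDualizing.exists_eq_sum_apply (hJ : IsDualizing K J)
    (hψ : Submodule.span K (Set.range ψ) = ⊤) (hV : IsFiniteLength K V)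
    (φ : (V →ₗ[R] U) →ₗ[K] J) :
    ∃ u : Fin m → V, ∀ g : V →ₗ[R] U, φ g = ∑ i, ψ i (g (u i)) := by
  have := hJ.injective
  let θ : (V →ₗ[R] U) →ₗ[K] (Fin m → V →ₗ[K] J) :=
    LinearMap.pi fun i => ((ψ i).compRight K).comp (LinearMap.restrictScalarsₗ K R V U K)
  have hθ : LinearMap.ker θ ≤ LinearMap.ker φ := fun g hg => by
    have hg0 : g = 0 := LinearMap.ext fun x => hJ.eq_of_forall_apply_eq hψ fun i => by
      rw [LinearMap.zero_apply, map_zero]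
      exact LinearMap.congr_fun (congrFun hg i) x
    rw [hg0]
    exact Submodule.zero_mem _
  obtain ⟨s, rfl⟩ := exists_comp_eq_of_ker_le_of_injective hθ
  choose u hu using fun i => hJ.exists_eq_apply hV
    (s.comp (LinearMap.single K (fun _ : Fin m => V →ₗ[K] J) i))
  refine ⟨u, fun g => ?_⟩
  rw [LinearMap.comp_apply, ← Finset.univ_sum_single (θ g), map_sum]
  exact Finset.sum_congr rfl fun i _ => hu i (θ g i)

theorem sum_apply_sum_smul_eq_zero
    (ha : Submodule.span K (Set.range a) = LinearMap.ker (dualPresentation R ψ)) (z : Fin n → U) :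
    ∑ i, ψ i (∑ j, a j i • z j) = 0 := by
  have hrel : ∀ j, dualPresentation R ψ (a j) = 0 := fun j =>
    LinearMap.mem_ker.1 (ha ▸ Submodule.subset_span ⟨j, rfl⟩)
  simp only [map_sum]
  rw [Finset.sum_comm]
  exact Finset.sum_eq_zero fun j _ => by rw [← dualPresentation_apply, hrel, LinearMap.zero_apply]

theorem IsDualizing.exists_apply_smul_eq (hJ : IsDualizing K J) (hU : IsFiniteLength K U)
    (ha : Submodule.span K (Set.range a) = LinearMap.ker (dualPresentation R ψ))
    {η : (Fin m → Y) →ₗ[K] J} (hη : ∀ z : Fin n → Y, η (fun i => ∑ j, a j i • z j) = 0) (y : Y) :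
    ∃ x : U, ∀ (i : Fin m) (t : R), ψ i (t • x) = η (Pi.single i (t • y)) := by
  have := hJ.injective
  let q : (Fin m → R) →ₗ[K] J :=
    η.comp (LinearMap.pi fun i => ((LinearMap.toSpanSingleton R Y y).restrictScalars K).comp
      (LinearMap.proj i))
  have hq : ∀ r, q r = η fun i => r i • y := fun r => rfl
  have hker : LinearMap.ker (dualPresentation R ψ) ≤ LinearMap.ker q := by
    rw [← ha, Submodule.span_le]
    rintro _ ⟨j, rfl⟩
    rw [SetLike.mem_coe, LinearMap.mem_ker, hq, ← hη (Pi.single j y)]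
    congr 1
    ext i
    rw [Fintype.sum_eq_single j fun k hk => by simp [hk], Pi.single_eq_same]
  obtain ⟨s, hs⟩ := exists_comp_eq_of_ker_le_of_injective hker
  obtain ⟨x, hx⟩ := hJ.exists_eq_apply hU s
  refine ⟨x, fun i t => ?_⟩
  rw [← dualPresentation_single, ← hx, ← LinearMap.comp_apply, hs, hq]
  congr 1
  ext k
  obtain rfl | hk := eq_or_ne k i
  · simp
  · simp [hk]

theorem IsDualizing.exists_linearMap_of_forall_eq_zero (hJ : IsDualizing K J)
    (hU : IsFiniteLength K U) (hψ : Submodule.span K (Set.range ψ) = ⊤)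
    (ha : Submodule.span K (Set.range a) = LinearMap.ker (dualPresentation R ψ))
    {η : (Fin m → Y) →ₗ[K] J} (hη : ∀ z : Fin n → Y, η (fun i => ∑ j, a j i • z j) = 0) :
    ∃ g : Y →ₗ[R] U, ∀ y : Fin m → Y, ∑ i, ψ i (g (y i)) = η y := by
  choose g hg using hJ.exists_apply_smul_eq hU ha hη
  have hg1 : ∀ y i, ψ i (g y) = η (Pi.single i y) := fun y i => by
    simpa only [one_smul] using hg y i 1
  refine ⟨{ toFun := g
            map_add' := fun y y' => hJ.eq_of_forall_apply_eq hψ fun i => ?_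
            map_smul' := fun t y => hJ.eq_of_forall_apply_eq hψ fun i => ?_ }, fun y => ?_⟩
  · rw [map_add, hg1, hg1, hg1, Pi.single_add, map_add]
  · rw [RingHom.id_apply, hg, hg1]
  · conv_rhs => rw [← Finset.univ_sum_single y, map_sum]
    exact Finset.sum_congr rfl fun i _ => hg1 (y i) i

/-- Auslander: maps from `V` are determined by functionals on maps from `V` to `U`. -/
theorem IsDualizing.exists_factors_iff [IsArtinianRing K] [Module.Finite K R] [Module.Finite R V]
    (hJ : IsDualizing K J) (hU : IsFiniteLength K U) (hV : IsFiniteLength K V)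
    (φ : (V →ₗ[R] U) →ₗ[K] J) :
    ∃ (E : Type u) (_ : AddCommGroup E) (_ : Module R E) (_ : Module.Finite R E)
      (lam : V →ₗ[R] E), ∀ (Y : Type u) [AddCommGroup Y] [Module R Y] [Module K Y]
        [IsScalarTower K R Y] (h : V →ₗ[R] Y),
        (∃ h' : E →ₗ[R] Y, h'.comp lam = h) ↔ ∀ g : Y →ₗ[R] U, φ (g.comp h) = 0 := by
  obtain ⟨m, n, ψ, a, hψ, ha⟩ := hJ.exists_span_eq_top_and_span_eq_ker (R := R) hU
  obtain ⟨u, hu⟩ := hJ.exists_eq_sum_apply hψ hV φ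
  refine ⟨AdjoinSolution u a, _, _, inferInstance, AdjoinSolution.of u a, fun Y _ _ _ _ h => ?_⟩
  rw [AdjoinSolution.exists_comp_of_eq_iff]
  constructor
  · rintro ⟨z, hz⟩ g
    rw [hu, ← sum_apply_sum_smul_eq_zero ha (g ∘ z)]
    simp only [LinearMap.comp_apply, hz, map_sum, map_smul, Function.comp_apply]
  · intro hφ
    by_contra hno
    let T : (Fin n → Y) →ₗ[K] (Fin m → Y) := LinearMap.pi fun i =>
      ∑ j, (Algebra.lsmul K K Y (a j i)).comp (LinearMap.proj j)
    have hT : ∀ z, T z = fun i => ∑ j, a j i • z j := fun z => by ext i; simp [T]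
    have hmem : (LinearMap.range T).mkQ (fun i => h (u i)) ≠ 0 := fun h0 => by
      obtain ⟨z, hz⟩ := (Submodule.Quotient.mk_eq_zero _).1 h0
      exact hno ⟨z, fun i => by rw [← congrFun hz i, hT]⟩
    obtain ⟨ε, hε⟩ := hJ.exists_apply_ne_zero hmem
    obtain ⟨g, hg⟩ := hJ.exists_linearMap_of_forall_eq_zero (η := ε.comp (LinearMap.range T).mkQ)
      hU hψ ha fun z => by
        rw [LinearMap.comp_apply, ← hT,
          show (LinearMap.range T).mkQ (T z) = 0 from (Submodule.Quotient.mk_eq_zero _).2 ⟨z, rfl⟩,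
          map_zero]
    exact hε (by rw [← LinearMap.comp_apply, ← hg, ← hφ g, hu]; rfl)

end DualPresentation

section ArtinAlgebra

variable {R : Type u} [Ring R]

theorem ModA.exists_module_finite (K : Type u) [CommRing K] [Algebra K R] [Module.Finite K R]
    (X : ModA R) : ∃ _ : Module K X.M, IsScalarTower K R X.M ∧ Module.Finite K X.M := by
  let _ : Module K X.M := Module.compHom X.M (algebraMap K R)
  have : IsScalarTower K R X.M := IsScalarTower.of_algebraMap_smul fun _ _ => rfl
  exact ⟨_, this, Module.Finite.trans R X.M⟩

theorem isFiniteLength_of_finite [IsArtinianRing R] (M : Type u) [AddCommGroup M] [Module R M]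
    [Module.Finite R M] : IsFiniteLength R M :=
  isFiniteLength_iff_isNoetherian_isArtinian.2 ⟨inferInstance, inferInstance⟩

variable (K : Type u) [CommRing K] [IsArtinianRing K] [Algebra K R] [Module.Finite K R]
include K

theorem ModA.IsIndec.exists_isLeftAlmostSplit {X : ModA R} (hX : X.IsIndec) :
    ∃ (Y : ModA R) (f : X.M →ₗ[R] Y.M), IsLeftAlmostSplit f := by
  obtain ⟨_, _, _⟩ := X.exists_module_finite K
  have := IsArtinianRing.of_finite K R
  have hfl : IsFiniteLength K X.M := isFiniteLength_of_finite X.M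
  obtain ⟨J, _, _, hJ⟩ := exists_isDualizing K
  let N : Submodule K (X.M →ₗ[R] X.M) :=
    { carrier := {g | ¬Function.Bijective g}
      add_mem' := fun hg hg' h => (hX.bijective_or_of_add h).elim hg hg'
      zero_mem' := hX.not_bijective_zero
      smul_mem' := fun k g hg h =>
        hg (hX.bijective_of_bijective_comp hX (f := g) (g := k • LinearMap.id) h).1 }
  obtain ⟨φ, hφ⟩ := hJ.exists_apply_ne_zero (x := N.mkQ LinearMap.id)
    fun h => (Submodule.Quotient.mk_eq_zero N).1 h Function.bijective_id
  have hφN : ∀ g ∈ N, φ (N.mkQ g) = 0 := fun g hg => by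
    rw [show N.mkQ g = 0 from (Submodule.Quotient.mk_eq_zero N).2 hg, map_zero]
  obtain ⟨E, _, _, _, lam, hlam⟩ := hJ.exists_factors_iff hfl hfl (φ.comp N.mkQ)
  refine ⟨⟨E, isFiniteLength_of_finite E⟩, lam, fun ⟨r, hr⟩ => ?_, fun Y h hh => ?_⟩
  · exact hφ ((hlam X.M LinearMap.id).1 ⟨r, hr⟩ LinearMap.id)
  · obtain ⟨_, _, _⟩ := Y.exists_module_finite K
    refine (hlam Y.M h).2 fun g => hφN _ fun hg => hh ?_
    obtain ⟨s, hs, -⟩ := exists_inverse_of_bijective hg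
    exact ⟨s.comp g, hs⟩

theorem exists_forall_radPow_eq (X Y : ModA R) :
    ∃ N, ∀ n ≥ N, radPow R n X Y = radPow R N X Y := by
  obtain ⟨_, _, _⟩ := X.exists_module_finite K
  obtain ⟨_, _, _⟩ := Y.exists_module_finite K
  have : IsArtinian K (X.M →ₗ[R] Y.M) :=
    isArtinian_of_injective (LinearMap.restrictScalarsₗ K R X.M Y.M K)
      (LinearMap.restrictScalars_injective K)
  let F : ℕ →o (Submodule K (X.M →ₗ[R] Y.M))ᵒᵈ :=
    { toFun := fun n => OrderDual.toDual
        { radPow R n X Y with smul_mem' := fun k _ hf => radPow_comp_left hf (k • LinearMap.id) }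
      monotone' := fun _ _ h _ hf => radPow_antitone X Y h hf }
  obtain ⟨N, hN⟩ := IsArtinian.monotone_stabilizes F
  exact ⟨N, fun n hn => AddSubgroup.ext fun f => (Submodule.ext_iff.1 (hN n hn) f).symm⟩

theorem artinLike_of_finite : ArtinLike R where
  isFiniteLength := (isArtinianRing_iff_isFiniteLength R).1 (IsArtinianRing.of_finite K R)
  exists_isLeftAlmostSplit _ hX := hX.exists_isLeftAlmostSplit K
  radPow_stabilises := exists_forall_radPow_eq K

end ArtinAlgebra

/-! ### Inflation along quotients of the ring -/

section Inflation

variable {R : Type u} [Ring R] {I : Ideal R} [I.IsTwoSided]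

namespace ModA

/-- The inflation of an `R ⧸ I`-module, that is, the same module regarded as an `R`-module. -/
abbrev inflate (N : ModA (R ⧸ I)) : ModA R :=
  letI : Module R N.M := Module.compHom N.M (Ideal.Quotient.mk I)
  let e : N.M →ₛₗ[Ideal.Quotient.mk I] N.M :=
    { toFun := id, map_add' := fun _ _ => rfl, map_smul' := fun _ _ => rfl }
  { M := N.M
    finLen := isFiniteLength_iff_isNoetherian_isArtinian.2
      ⟨(LinearMap.isNoetherian_iff_of_bijective e Function.bijective_id).2 inferInstance,
        (LinearMap.isArtinian_iff_of_bijective e Function.bijective_id).2 inferInstance⟩ }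

/-- Inflation is fully faithful. -/
def inflateHomEquiv (N N' : ModA (R ⧸ I)) :
    (N.M →ₗ[R ⧸ I] N'.M) ≃+ (N.inflate.M →ₗ[R] N'.inflate.M) where
  toFun f := { f.toAddMonoidHom with map_smul' := fun r => f.map_smul (Ideal.Quotient.mk I r) }
  invFun f :=
    { f.toAddMonoidHom with map_smul' := Ideal.Quotient.mk_surjective.forall.2 f.map_smul }
  left_inv _ := rfl
  right_inv _ := rfl
  map_add' _ _ := rfl

variable {N N' : ModA (R ⧸ I)}

theorem isIndec_inflate_iff : N.inflate.IsIndec ↔ N.IsIndec := by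
  let e := inflateHomEquiv N N
  exact and_congr Iff.rfl <| Iff.symm <| e.toEquiv.forall_congr fun f =>
    imp_congr (e.injective.eq_iff (a := f * f)).symm
      (or_congr (e.map_eq_zero_iff).symm (e.injective.eq_iff (b := 1)).symm)

theorem inflate_iso_inflate_iff : N.inflate.Iso N'.inflate ↔ N.Iso N' :=
  ⟨fun ⟨e⟩ => Iso.of_bijective (f := (inflateHomEquiv N N').symm e.toLinearMap) e.bijective,
    fun ⟨e⟩ => Iso.of_bijective (f := inflateHomEquiv N N' e.toLinearMap) e.bijective⟩

theorem nonzeroHom_inflate_iff : NonzeroHom N.inflate N'.inflate ↔ NonzeroHom N N' :=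
  and_congr isIndec_inflate_iff <| and_congr isIndec_inflate_iff
    ((inflateHomEquiv N N').toEquiv.exists_congr fun f =>
      ((inflateHomEquiv N N').map_ne_zero_iff (x := f)).symm).symm

theorem Precedes.inflate (h : N.Precedes N') : N.inflate.Precedes N'.inflate :=
  Relation.ReflTransGen.lift ModA.inflate (fun _ _ => nonzeroHom_inflate_iff.2) _ _ h

theorem exists_iso_inflate {X : ModA R} (hX : Module.IsTorsionBySet R X.M I) :
    ∃ N : ModA (R ⧸ I), X.Iso N.inflate := by
  let _ : Module (R ⧸ I) X.M := hX.module
  have hfl : IsFiniteLength (R ⧸ I) X.M := isFiniteLength_iff_isNoetherian_isArtinian.2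
    ⟨(LinearMap.isNoetherian_iff_of_bijective hX.semilinearMap Function.bijective_id).1
      inferInstance,
    (LinearMap.isArtinian_iff_of_bijective hX.semilinearMap Function.bijective_id).1
      inferInstance⟩
  exact ⟨⟨X.M, hfl⟩, ⟨{ LinearEquiv.refl R X.M with map_smul' := fun _ _ => rfl }⟩⟩

end ModA

/-- Inflation on isomorphism classes of indecomposable modules. -/
def ARVertex.inflate : ARVertex (R ⧸ I) → ARVertex R :=
  Quotient.map (fun N => ⟨N.1.inflate, ModA.isIndec_inflate_iff.2 N.2⟩)
    fun _ _ => ModA.inflate_iso_inflate_iff.2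

theorem ARVertex.inflate_injective :
    Function.Injective (ARVertex.inflate : ARVertex (R ⧸ I) → ARVertex R) := by
  rintro ⟨N⟩ ⟨N'⟩ h
  exact ARVertex.mk_eq_mk_iff.2 (ModA.inflate_iso_inflate_iff.1 (ARVertex.mk_eq_mk_iff.1 h))

theorem FiniteUpToIso.of_inflate {P : ModA R → Prop} (h : FiniteUpToIso P) :
    FiniteUpToIso fun N : ModA (R ⧸ I) => P N.inflate := by
  refine (h.preimage ARVertex.inflate_injective.injOn).subset ?_
  rintro _ ⟨N, rfl, hN⟩
  exact ⟨_, rfl, hN⟩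

theorem FiniteUpToIso.inflate {P : ModA (R ⧸ I) → Prop} (h : FiniteUpToIso P) :
    FiniteUpToIso fun X : ModA R => ∃ N : ModA (R ⧸ I), X.Iso N.inflate ∧ P N := by
  refine (h.image ARVertex.inflate).subset ?_
  rintro _ ⟨X, rfl, N, e, hN⟩
  exact ⟨_, ⟨⟨N, ModA.isIndec_inflate_iff.1 (X.2.of_iso e)⟩, rfl, hN⟩,
    ARVertex.mk_eq_mk_iff.2 e.symm⟩

theorem ModA.IsLeftFinite.of_inflate {N : ModA (R ⧸ I)} (h : N.inflate.IsLeftFinite) :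
    N.IsLeftFinite :=
  ⟨isIndec_inflate_iff.1 h.1, fun _ hY => (h.2 _ hY.inflate).of_inflate.mono
    fun _ _ => nonzeroHom_inflate_iff.2⟩

end Inflation

/-! ### Modules without nonzero maps to a given injective module -/

section RelInjective

variable {R : Type u} [Ring R]

theorem ModA.IsRelInjective.exists_extension {I A B : ModA R} (hI : I.IsRelInjective)
    {i : A.M →ₗ[R] B.M} (hi : Function.Injective i) (a : A.M →ₗ[R] I.M) :
    ∃ b : B.M →ₗ[R] I.M, b.comp i = a := by
  let C : Submodule R (I.M × B.M) := LinearMap.range (a.prod (-i))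
  let P : ModA R := ⟨(I.M × B.M) ⧸ C, isFiniteLength_iff_isNoetherian_isArtinian.2
    ⟨inferInstance, inferInstance⟩⟩
  let inl : I.M →ₗ[R] P.M := C.mkQ.comp (LinearMap.inl R I.M B.M)
  let inr : B.M →ₗ[R] P.M := C.mkQ.comp (LinearMap.inr R I.M B.M)
  have hcomm (x : A.M) : inl (a x) = inr (i x) :=
    (Submodule.Quotient.eq C).2 ⟨x, by simp⟩
  have hinl : Function.Injective inl := by
    refine (injective_iff_map_eq_zero inl).2 fun y hy => ?_
    obtain ⟨x, hx⟩ := (Submodule.Quotient.mk_eq_zero C).1 hy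
    obtain ⟨rfl, hix⟩ := Prod.ext_iff.1 hx
    have hx0 : x = 0 := hi (by simpa using hix)
    simp [hx0]
  obtain ⟨r, hr⟩ := hI P inl hinl
  refine ⟨r.comp inr, LinearMap.ext fun x => ?_⟩
  rw [LinearMap.comp_apply, LinearMap.comp_apply, ← hcomm]
  exact LinearMap.congr_fun hr (a x)

/-- The ideal of all elements annihilating every indecomposable module without nonzero maps to
`I`. -/
def ModA.noHomAnnihilator (I : ModA R) : Ideal R where
  carrier := {r | ∀ U : ModA R, U.IsIndec → ¬NonzeroHom U I → ∀ u : U.M, r • u = 0}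
  zero_mem' _ _ _ u := zero_smul R u
  add_mem' ha hb U hU hUI u := by rw [add_smul, ha U hU hUI, hb U hU hUI, add_zero]
  smul_mem' c _ hx U hU hUI u := by rw [smul_eq_mul, mul_smul, hx U hU hUI, smul_zero]

instance ModA.isTwoSided_noHomAnnihilator (I : ModA R) : I.noHomAnnihilator.IsTwoSided :=
  ⟨fun b ha U hU hUI u => by rw [mul_smul]; exact ha U hU hUI (b • u)⟩

variable {I : ModA R}

theorem ModA.mem_noHomAnnihilator {r : R} : r ∈ I.noHomAnnihilator ↔
    ∀ U : ModA R, U.IsIndec → ¬NonzeroHom U I → ∀ u : U.M, r • u = 0 := Iff.rfl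

theorem ModA.isTorsionBySet_noHomAnnihilator {U : ModA R} (hU : U.IsIndec)
    (hUI : ¬NonzeroHom U I) : Module.IsTorsionBySet R U.M I.noHomAnnihilator :=
  fun u r => r.2 U hU hUI u

/-- A map from `R` to a module of the class with minimal kernel is injective. -/
theorem exists_injective_of_jointly_faithful [IsArtinianRing R] {P : ModA R → Prop}
    (hzero : P ⟨PUnit, .of_subsingleton⟩)
    (hprod : ∀ M U : ModA R, P M → P U → P ⟨M.M × U.M,
      isFiniteLength_iff_isNoetherian_isArtinian.2 ⟨inferInstance, inferInstance⟩⟩)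
    (hfaithful : ∀ r : R, r ≠ 0 → ∃ U : ModA R, P U ∧ ∃ u : U.M, r • u ≠ 0) :
    ∃ M : ModA R, P M ∧ ∃ f : R →ₗ[R] M.M, Function.Injective f := by
  let S : Set (Submodule R R) :=
    {N | ∃ M : ModA R, P M ∧ ∃ f : R →ₗ[R] M.M, LinearMap.ker f = N}
  obtain ⟨_, ⟨M, hM, f, rfl⟩, hmin⟩ := IsArtinian.set_has_minimal S ⟨_, _, hzero, 0, rfl⟩
  refine ⟨M, hM, f, (injective_iff_map_eq_zero f).2 fun r hr => ?_⟩
  by_contra hr0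
  obtain ⟨U, hU, u, hu⟩ := hfaithful r hr0
  refine hmin _ ⟨_, hprod M U hM hU, f.prod (LinearMap.toSpanSingleton R U.M u), rfl⟩ ?_
  rw [LinearMap.ker_prod]
  exact lt_of_le_of_ne inf_le_left fun h => hu (inf_eq_left.1 h hr)

theorem ModA.IsRelInjective.noHomAnnihilator_ne_bot [ArtinLike R] (hI : I.IsIndec)
    (hinj : I.IsRelInjective) : I.noHomAnnihilator ≠ ⊥ := by
  intro hbot
  have : IsArtinianRing R := (isArtinianRing_iff_isFiniteLength R).2 ArtinLike.isFiniteLength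
  obtain ⟨M, hM, f, hf⟩ := exists_injective_of_jointly_faithful (R := R)
    (P := fun M => ∀ g : M.M →ₗ[R] I.M, g = 0)
    (fun g : PUnit.{u + 1} →ₗ[R] I.M => Subsingleton.elim g 0)
    (fun M U hM hU g => LinearMap.prod_ext (hM _) (hU _)) fun r hr => by
      have hr' : r ∉ I.noHomAnnihilator := by simpa [hbot]
      rw [mem_noHomAnnihilator] at hr'
      push Not at hr'
      obtain ⟨U, hU, hUI, u, hu⟩ := hr'
      exact ⟨U, fun g => not_not.1 fun hg => hUI ⟨hU, hI, g, hg⟩, u, hu⟩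
  obtain ⟨a, ha⟩ := exists_comp_regular_ne_zero hI.id_ne_zero
  obtain ⟨b, hb⟩ := hinj.exists_extension (A := regular R) hf a
  exact ha (by rw [← hb, hM b, LinearMap.zero_comp, LinearMap.comp_zero])

end RelInjective

section Avoiding

variable {R : Type u} [Ring R]

namespace ModA

variable {I U X Z : ModA R}

/-- `PrecedesAvoiding I X Y`: there is a path of nonzero homomorphisms from `X` to `Y` between
indecomposable modules all of which, including `X` and `Y`, have no nonzero maps to `I`. -/
def PrecedesAvoiding (I : ModA R) : ModA R → ModA R → Prop :=
  Relation.TransGen fun X Y => NonzeroHom X Y ∧ ¬NonzeroHom X I ∧ ¬NonzeroHom Y I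

theorem PrecedesAvoiding.refl (hX : X.IsIndec) (hXI : ¬NonzeroHom X I) :
    PrecedesAvoiding I X X :=
  .single ⟨⟨hX, hX, _, hX.id_ne_zero⟩, hXI, hXI⟩

theorem PrecedesAvoiding.trans_iso (h : PrecedesAvoiding I U X) (e : X.Iso Z) :
    PrecedesAvoiding I U Z := by
  obtain ⟨_, -, hX⟩ := Relation.TransGen.tail'_iff.1 h
  exact h.tail ⟨⟨hX.1.2.1, hX.1.2.1.of_iso e, _, hX.1.2.1.ne_zero_of_bijective e.some.bijective⟩,
    hX.2.2, fun hZ => hX.2.2 (e.trans_nonzeroHom hZ)⟩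

/-- `IsExit I X Z`: the module `Z` has no nonzero maps to `I` and can be the last such module on a
path to `X`. -/
def IsExit (I X Z : ModA R) : Prop :=
  Z.Precedes X ∧ ¬NonzeroHom Z I ∧ (Z.Iso X ∨ ∃ W, W.IsIndec ∧ NonzeroHom W I ∧ NonzeroHom Z W)

theorem Precedes.nonzeroHom_or_exists_isExit (hX : X.IsIndec) (h : U.Precedes X) :
    NonzeroHom U I ∨ ∃ Z, Z.IsIndec ∧ IsExit I X Z ∧ PrecedesAvoiding I U Z := by
  refine or_iff_not_imp_left.2 fun hUI => ?_
  induction h using Relation.ReflTransGen.head_induction_on with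
  | refl => exact ⟨X, hX, ⟨.refl X, hUI, .inl (.refl X)⟩, .refl hX hUI⟩
  | @head U W hUW hWX ih =>
    by_cases hWI : NonzeroHom W I
    · exact ⟨U, hUW.1, ⟨.head hUW hWX, hUI, .inr ⟨W, hUW.2.1, hWI, hUW⟩⟩, .refl hUW.1 hUI⟩
    · obtain ⟨Z, hZ, hexit, hWZ⟩ := ih hWI
      exact ⟨Z, hZ, hexit, .head ⟨hUW, hUI, hWI⟩ hWZ⟩

theorem IsLeftFinite.finiteUpToIso_isExit (hI : I.IsLeftFinite) (X : ModA R) :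
    FiniteUpToIso (IsExit I X) := by
  have hsources : FiniteUpToIso fun Z => ∃ W, W.IsIndec ∧ NonzeroHom W I ∧ NonzeroHom Z W :=
    hI.hasFinitelyManySources.bind (Q := fun W Z => NonzeroHom Z W)
      (fun W _ hW => hI.2 W (.single hW)) fun _ _ _ e h => h.trans_iso e
  exact ((FiniteUpToIso.of_iso X).or hsources).mono fun _ _ h => h.2.2

theorem PrecedesAvoiding.exists_iso_inflate {N : ModA (R ⧸ I.noHomAnnihilator)}
    (h : PrecedesAvoiding I U Z) (hZ : Z.Iso N.inflate) :
    ∃ N' : ModA (R ⧸ I.noHomAnnihilator), U.Iso N'.inflate ∧ N'.Precedes N := by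
  have step {U W : ModA R} {N : ModA (R ⧸ I.noHomAnnihilator)} (hUW : NonzeroHom U W)
      (hUI : ¬NonzeroHom U I) (hW : W.Iso N.inflate) :
      ∃ N' : ModA (R ⧸ I.noHomAnnihilator), U.Iso N'.inflate ∧ NonzeroHom N' N := by
    obtain ⟨N', hN'⟩ := ModA.exists_iso_inflate (isTorsionBySet_noHomAnnihilator hUW.1 hUI)
    exact ⟨N', hN', nonzeroHom_inflate_iff.1 (hN'.symm.trans_nonzeroHom (hUW.trans_iso hW))⟩
  induction h using Relation.TransGen.head_induction_on with
  | single h =>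
    obtain ⟨N', hN', hom⟩ := step h.1 h.2.1 hZ
    exact ⟨N', hN', .single hom⟩
  | head h _ ih =>
    obtain ⟨N', hN', hle⟩ := ih
    obtain ⟨N'', hN'', hom⟩ := step h.1 h.2.1 hN'
    exact ⟨N'', hN'', .head hom hle⟩

theorem IsLeftFinite.finiteUpToIso_precedes_of_quotient (hX : X.IsLeftFinite) (hIX : I.Precedes X)
    (hquot : ∀ N : ModA (R ⧸ I.noHomAnnihilator), N.IsLeftFinite →
      FiniteUpToIso fun U : ModA (R ⧸ I.noHomAnnihilator) => U.Precedes N) :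
    FiniteUpToIso fun U : ModA R => U.Precedes X := by
  have hI := hX.of_precedes hIX
  have havoid : ∀ Z : ModA R, Z.IsIndec → IsExit I X Z →
      FiniteUpToIso fun U : ModA R => PrecedesAvoiding I U Z := by
    rintro Z hZ ⟨hZX, hZI, -⟩
    obtain ⟨N, hN⟩ := exists_iso_inflate (isTorsionBySet_noHomAnnihilator hZ hZI)
    have hNfin : N.IsLeftFinite := .of_inflate
      ((hX.of_precedes hZX).of_precedes (.of_iso (hZ.of_iso hN) hN.symm))
    exact (hquot N hNfin).inflate.mono fun _ _ hU => hU.exists_iso_inflate hN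
  refine (hI.hasFinitelyManySources.or ((hI.finiteUpToIso_isExit X).bind havoid ?_)).mono
    fun U _ hU => hU.nonzeroHom_or_exists_isExit hX.1
  exact fun _ _ _ e h => h.trans_iso e

end ModA

end Avoiding

section Predecessors

variable (K : Type u) [CommRing K] [IsArtinianRing K]

theorem length_quotient_ideal_lt {R : Type u} [Ring R] [Algebra K R] [Module.Finite K R]
    {I : Ideal R} [I.IsTwoSided] (hI : I ≠ ⊥) : Module.length K (R ⧸ I) < Module.length K R := by
  rw [← (Submodule.Quotient.restrictScalarsEquiv K I).length_eq]
  exact Submodule.length_quotient_lt _ (by simpa)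

theorem ModA.IsLeftFinite.finiteUpToIso_precedes {R : Type u} [Ring R] [Algebra K R]
    [Module.Finite K R] {X : ModA R} (hX : X.IsLeftFinite) :
    FiniteUpToIso fun U : ModA R => U.Precedes X := by
  have : ArtinLike R := artinLike_of_finite K
  by_cases hinj : ∀ I : ModA R, I.Precedes X → ¬I.IsRelInjective
  · exact hX.finiteUpToIso_precedes_of_not_isRelInjective hinj
  push Not at hinj
  obtain ⟨I, hIX, hI⟩ := hinj
  refine hX.finiteUpToIso_precedes_of_quotient hIX fun N hN => ?_
  have := length_quotient_ideal_lt K (hI.noHomAnnihilator_ne_bot (hX.of_precedes hIX).1)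
  exact finiteUpToIso_precedes hN
termination_by Module.length K R

end Predecessors

/-! ### Finiteness of the injective modules -/

section Socle

variable {R : Type u} [Ring R] {I I' S : ModA R}

theorem ModA.isIndec_of_isSimpleModule (hS : IsSimpleModule R S.M) : S.IsIndec := by
  refine ⟨IsSimpleModule.nontrivial R S.M, fun f hf => or_iff_not_imp_left.2 fun hf0 => ?_⟩
  exact LinearMap.ext fun x => (LinearMap.bijective_of_ne_zero hf0).1 (LinearMap.congr_fun hf x)

theorem finiteUpToIso_isSimpleModule_of_isFiniteLength {M : Type u} [AddCommGroup M] [Module R M]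
    (hM : IsFiniteLength R M) :
    FiniteUpToIso fun S : ModA R => IsSimpleModule R S.M ∧ ∃ f : M →ₗ[R] S.M, f ≠ 0 := by
  induction hM with
  | of_subsingleton => exact .of_forall_not fun S _ ⟨_, f, hf⟩ => hf (Subsingleton.elim f 0)
  | @of_simple_quotient M _ _ N _ hN ih =>
    let Q : ModA R :=
      ⟨M ⧸ N, (IsFiniteLength.of_simple_quotient hN).of_surjective N.mkQ_surjective⟩
    refine (ih.or (.of_iso Q)).mono fun S _ ⟨hS, f, hf⟩ => or_iff_not_imp_left.2 fun hN0 => ?_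
    have hle : N ≤ LinearMap.ker f := fun n hn => by
      by_contra hfn
      exact hN0 ⟨hS, f.comp N.subtype, fun h0 => hfn (LinearMap.congr_fun h0 ⟨n, hn⟩)⟩
    have hne : N.liftQ f hle ≠ 0 := fun h =>
      hf (by rw [← N.liftQ_mkQ f hle, h, LinearMap.zero_comp])
    exact (ModA.Iso.of_bijective (X := Q) (LinearMap.bijective_of_ne_zero hne)).symm

theorem finiteUpToIso_isSimpleModule [ArtinLike R] :
    FiniteUpToIso fun S : ModA R => IsSimpleModule R S.M := by
  refine (finiteUpToIso_isSimpleModule_of_isFiniteLength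
    (ArtinLike.isFiniteLength (R := R))).mono fun S hS hsimple => ⟨hsimple, ?_⟩
  obtain ⟨a, ha⟩ := ModA.exists_comp_regular_ne_zero hS.id_ne_zero
  exact ⟨a, fun h => ha (by rw [h, LinearMap.comp_zero])⟩

theorem ModA.IsIndec.exists_isSimpleModule_injective (hI : I.IsIndec) :
    ∃ (S : ModA R) (s : S.M →ₗ[R] I.M), IsSimpleModule R S.M ∧ Function.Injective s := by
  have := hI.1
  obtain ⟨A, hA, -⟩ := (eq_bot_or_exists_atom_le (⊤ : Submodule R I.M)).resolve_left top_ne_bot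
  exact ⟨I.ofSubmodule A, A.subtype, isSimpleModule_iff_isAtom.2 hA, A.injective_subtype⟩

theorem ModA.IsRelInjective.iso_of_injective (hI : I.IsRelInjective) (hI' : I'.IsRelInjective)
    (hIi : I.IsIndec) (hIi' : I'.IsIndec) [Nontrivial S.M] {s : S.M →ₗ[R] I.M}
    {s' : S.M →ₗ[R] I'.M} (hs : Function.Injective s) (hs' : Function.Injective s') :
    I.Iso I' := by
  obtain ⟨f, hf⟩ := hI'.exists_extension hs s'
  obtain ⟨g, hg⟩ := hI.exists_extension hs' s
  have hfix (n : ℕ) (x : S.M) : ((g.comp f : Module.End R I.M) ^ n) (s x) = s x := by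
    have hgf : (g.comp f) (s x) = s x := by
      rw [LinearMap.comp_apply, ← LinearMap.comp_apply f, hf, ← LinearMap.comp_apply g, hg]
    rw [Module.End.coe_pow]
    exact Function.iterate_fixed hgf n
  refine .of_bijective (hIi.bijective_of_bijective_comp hIi' (f := f) (g := g) ?_).1
  refine (hIi.bijective_or_isNilpotent (g.comp f)).resolve_right fun ⟨n, hn⟩ => ?_
  obtain ⟨x, hx⟩ := exists_ne (0 : S.M)
  exact hx (hs (by rw [← hfix n x, hn, LinearMap.zero_apply, map_zero]))

theorem finiteUpToIso_isRelInjective [ArtinLike R] :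
    FiniteUpToIso (ModA.IsRelInjective (R := R)) := by
  have hsocle : FiniteUpToIso fun I : ModA R => ∃ S : ModA R, S.IsIndec ∧ IsSimpleModule R S.M ∧
      I.IsRelInjective ∧ ∃ s : S.M →ₗ[R] I.M, Function.Injective s := by
    refine finiteUpToIso_isSimpleModule.bind (fun S hS _ => ?_) ?_
    · have := hS.1
      by_cases h : ∃ I : ModA R, I.IsIndec ∧ I.IsRelInjective ∧
        ∃ s : S.M →ₗ[R] I.M, Function.Injective s
      · obtain ⟨I, hIi, hI, s, hs⟩ := h
        exact .of_forall_iso fun I' hIi' ⟨hI', s', hs'⟩ => hI'.iso_of_injective hI hIi' hIi hs' hs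
      · exact .of_forall_not fun I hIi hI => h ⟨I, hIi, hI⟩
    · rintro S S' I ⟨e⟩ ⟨hI, s, hs⟩
      exact ⟨hI, s.comp e.symm.toLinearMap, hs.comp e.symm.injective⟩
  refine hsocle.mono fun I hIi hI => ?_
  obtain ⟨S, s, hS, hs⟩ := hIi.exists_isSimpleModule_injective
  exact ⟨S, ModA.isIndec_of_isSimpleModule hS, hS, hI, s, hs⟩

end Socle

/-! ### Cycle-finite algebras -/

theorem IsCycleFinite.finiteUpToIso_of_isDirectingModule (K : Type u) [CommRing K]
    [IsArtinianRing K] {R : Type u} [Ring R] [Algebra K R] [Module.Finite K R]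
    (hcf : IsCycleFinite R) (hd : FiniteUpToIso (IsDirectingModule (R := R))) :
    FiniteUpToIso fun _ : ModA R => True := by
  have : ArtinLike R := artinLike_of_finite K
  by_contra hinf
  refine hcf.not_finiteUpToIso_isLeftFinite hinf ?_
  have hbelow : FiniteUpToIso fun X : ModA R => ∃ I : ModA R, I.IsIndec ∧
      (I.IsRelInjective ∧ I.IsLeftFinite) ∧ I.IsIndec ∧ X.Precedes I :=
    (finiteUpToIso_isRelInjective.mono fun _ _ h => h.1).bind
      (fun I _ hI => (hI.2.finiteUpToIso_precedes K).mono fun _ _ h => h.2)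
      fun _ _ _ e ⟨hI, hXI⟩ => ⟨hI.of_iso e, hXI.trans (.of_iso hI e)⟩
  refine (hd.or hbelow).mono fun X _ hXfin => or_iff_not_imp_left.2 fun hnd => ?_
  obtain ⟨I, hI, hIX, hXI⟩ := hXfin.exists_isRelInjective_of_not_isDirectingModule
    (hXfin.finiteUpToIso_precedes K) hnd
  have hIfin := hXfin.of_precedes hIX
  exact ⟨I, hIfin.1, ⟨hI, hIfin⟩, hIfin.1, hXI⟩

theorem finite_isoClasses_iff_isFiniteRepTypeAlg (K A : Type u) [CommRing K] [IsArtinianRing K]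
    [Ring A] [Algebra K A] [Module.Finite K A] (hcf : IsCycleFiniteAlg A) {P : ModA Aᵐᵒᵖ → Prop}
    (hP : ∀ X : ModA Aᵐᵒᵖ, X.IsIndec → IsDirectingModule X → P X) :
    {x : ARVertex Aᵐᵒᵖ | ∃ X : IndecModA Aᵐᵒᵖ, ARVertex.mk X = x ∧ P X.1}.Finite ↔
      IsFiniteRepTypeAlg A := by
  have : Module.Finite K Aᵐᵒᵖ := Module.Finite.equiv (MulOpposite.opLinearEquiv K)
  refine ⟨fun h => ?_, fun h => h.subset (Set.subset_univ _)⟩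
  have hdirecting : FiniteUpToIso (IsDirectingModule (R := Aᵐᵒᵖ)) := FiniteUpToIso.mono h hP
  refine (IsCycleFinite.finiteUpToIso_of_isDirectingModule K hcf hdirecting).subset fun x _ => ?_
  obtain ⟨X, rfl⟩ := Quotient.exists_rep x
  exact ⟨X, rfl, trivial⟩

theorem cycle_finite_algebra_tau_rigid_tfae_general
    (K A : Type u) [CommRing K] [IsArtinianRing K] [Ring A] [Algebra K A]
    [Module.Finite K A] (hcf : IsCycleFiniteAlg A) :
    ({x : ARVertex Aᵐᵒᵖ | ∃ X : IndecModA Aᵐᵒᵖ,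
        ARVertex.mk X = x ∧ IsTauRigid X.1}.Finite ↔ IsFiniteRepTypeAlg A) ∧
    ({x : ARVertex Aᵐᵒᵖ | ∃ X : IndecModA Aᵐᵒᵖ,
        ARVertex.mk X = x ∧ IsRigid X.1}.Finite ↔ IsFiniteRepTypeAlg A) ∧
    ({x : ARVertex Aᵐᵒᵖ | ∃ X : IndecModA Aᵐᵒᵖ,
        ARVertex.mk X = x ∧ IsDirectingModule X.1}.Finite ↔ IsFiniteRepTypeAlg A) :=
  ⟨finite_isoClasses_iff_isFiniteRepTypeAlg K A hcf fun _ hX h => h.isTauRigid hX,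
    finite_isoClasses_iff_isFiniteRepTypeAlg K A hcf fun _ hX h => h.isRigid hX,
    finite_isoClasses_iff_isFiniteRepTypeAlg K A hcf fun _ _ h => h⟩

/-- **Theorem 10.** Let `A` be a cycle-finite basic indecomposable artin algebra. Then the
following are equivalent:
(i) the number of isomorphism classes of `τ_A`-rigid modules in `ind A` is finite;
(ii) the number of isomorphism classes of rigid modules in `ind A` is finite;
(iii) the number of isomorphism classes of directing modules in `ind A` is finite;
(iv) `A` is of finite representation type. -/
theorem cycle_finite_algebra_tau_rigid_tfae
    (K A : Type u) [CommRing K] [IsArtinianRing K] [Ring A] [Algebra K A]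
    [Module.Finite K A] (hbasic : IsBasicAlgebra A) (hconn : IsConnectedAlgebra A)
    (hcf : IsCycleFiniteAlg A) :
    ({x : ARVertex Aᵐᵒᵖ | ∃ X : IndecModA Aᵐᵒᵖ,
        ARVertex.mk X = x ∧ IsTauRigid X.1}.Finite ↔ IsFiniteRepTypeAlg A) ∧
    ({x : ARVertex Aᵐᵒᵖ | ∃ X : IndecModA Aᵐᵒᵖ,
        ARVertex.mk X = x ∧ IsRigid X.1}.Finite ↔ IsFiniteRepTypeAlg A) ∧
    ({x : ARVertex Aᵐᵒᵖ | ∃ X : IndecModA Aᵐᵒᵖ,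
        ARVertex.mk X = x ∧ IsDirectingModule X.1}.Finite ↔ IsFiniteRepTypeAlg A) :=
  cycle_finite_algebra_tau_rigid_tfae_general K A hcf
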